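/- arXiv:1301.6509 — 3 statements merged into one kernel-verified Lean document; each statement's English description precedes it below -/
import Mathlib

section
/- Fix k ≥ 1. For any two RGFs τ and τ′, each of length k and each avoiding the pattern 122, one has p_n(122, τ) = p_n(122, τ′) for all n; moreover, this common value equals p_n(112, 12⋯k), where 12⋯k is the strictly increasing pattern of length k. -/
/-- A restricted growth function (canonical sequential form of a set partition):
a word over the positive integers whose first letter is 1 and where each letter
is at most one more than the maximum of the preceding letters. -/
def IsRGF (w : List ℕ) : Prop :=
  (∀ x ∈ w, 1 ≤ x) ∧
  (w ≠ [] → w.getD 0 0 = 1) ∧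
  ∀ i, i + 1 < w.length → w.getD (i + 1) 0 ≤ ((w.take (i + 1)).foldr max 0) + 1

/-- Two words of the same length are order-isomorphic: corresponding entries
compare the same way (this preserves equalities as well). -/
def WordOrdIso (s t : List ℕ) : Prop :=
  s.length = t.length ∧
  ∀ i j, i < s.length → j < s.length →
    (s.getD i 0 < s.getD j 0 ↔ t.getD i 0 < t.getD j 0)

/-- `w` contains the pattern `p`: a subsequence of `w` is order-isomorphic to `p`. -/
def PatContains (w p : List ℕ) : Prop := ∃ s : List ℕ, s.Sublist w ∧ WordOrdIso s p

/-- `w` avoids the pattern `p`. -/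
def PatAvoids (w p : List ℕ) : Prop := ¬ PatContains w p

/-- `pCount n T` = number of RGFs of length `n` avoiding every pattern in `T`. -/
noncomputable def pCount (n : ℕ) (T : Set (List ℕ)) : ℕ :=
  {w : List ℕ | IsRGF w ∧ w.length = n ∧ ∀ p ∈ T, PatAvoids w p}.ncard

/-- The strictly increasing pattern `1 2 ⋯ r`. -/
def incPat (r : ℕ) : List ℕ := (List.range r).map (· + 1)

/-- Recursive form of the restricted growth condition, `m` the maximum so far. -/
def RG : ℕ → List ℕ → Prop
  | _, [] => True
  | m, x :: w => 1 ≤ x ∧ x ≤ m + 1 ∧ RG (max m x) w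

theorem RG_iff (w : List ℕ) : ∀ m, RG m w ↔ ((∀ x ∈ w, 1 ≤ x) ∧
    ∀ i, i < w.length → w.getD i 0 ≤ max m ((w.take i).foldr max 0) + 1) := by
  induction w with
  | nil => intro m; simp [RG]
  | cons x w ih =>
    intro m
    simp only [RG, ih]
    constructor
    · rintro ⟨h1, h2, h3, h4⟩
      refine ⟨by simpa using ⟨h1, h3⟩, ?_⟩
      intro i hi
      cases i with
      | zero => simpa using h2
      | succ i =>
        have := h4 i (by simpa using hi)
        simpa [max_assoc] using this
    · rintro ⟨h1, h2⟩
      have h1' : 1 ≤ x ∧ ∀ y ∈ w, 1 ≤ y := by simpa using h1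
      refine ⟨h1'.1, by simpa using h2 0 (by simp), h1'.2, ?_⟩
      intro i hi
      have := h2 (i+1) (by simpa using hi)
      simpa [max_assoc] using this

theorem isRGF_iff (w : List ℕ) : IsRGF w ↔ RG 0 w := by
  rw [RG_iff]
  constructor
  · rintro ⟨h1, h2, h3⟩
    refine ⟨h1, ?_⟩
    intro i hi
    cases i with
    | zero =>
      rw [h2 (by rintro rfl; simp at hi)]; simp
    | succ i => simpa using h3 i hi
  · rintro ⟨h1, h2⟩
    refine ⟨h1, ?_, ?_⟩
    · intro hw
      cases w with
      | nil => simp at hw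
      | cons x w =>
        have a := h2 0 (by simp)
        have b := h1 x (by simp)
        simp at a ⊢
        omega
    · intro i hi
      simpa using h2 (i+1) hi

/-- Words in the `122`-avoiding class. -/
def gw : ℕ → List Bool → List ℕ
  | _, [] => []
  | m, true :: v => (m + 1) :: gw (m + 1) v
  | m, false :: v => 1 :: gw m v

theorem gw_decode (v : List Bool) : ∀ m, 1 ≤ m →
    (gw m v).map (fun x => decide (x ≠ 1)) = v := by
  induction v with
  | nil => intro m _; rfl
  | cons b v ih =>
    intro m hm
    cases b
    · simpa [gw] using ih m hm
    · have := ih (m+1) (by omega)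
      simp [gw] at this ⊢
      exact ⟨by omega, this⟩

theorem gw_length (v : List Bool) (m : ℕ) : (gw m v).length = v.length := by
  induction v generalizing m with
  | nil => rfl
  | cons b v ih => cases b <;> simp [gw, ih]

theorem gw_RG (v : List Bool) : ∀ m, 1 ≤ m → RG m (gw m v) := by
  induction v with
  | nil => intro m _; trivial
  | cons b v ih =>
    intro m hm
    cases b
    · simpa [gw, RG, hm] using ih m hm
    · simpa [gw, RG] using ih (m+1) (by omega)

theorem gw_mem (v : List Bool) : ∀ m, ∀ x ∈ gw m v, x = 1 ∨ m < x := by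
  induction v with
  | nil => intro m x hx; simp [gw] at hx
  | cons b v ih =>
    intro m x hx
    cases b <;> simp only [gw, List.mem_cons] at hx <;> rcases hx with rfl | hx
    · simp
    · exact ih m x hx
    · omega
    · have := ih (m+1) x hx; omega

theorem gw_pw (v : List Bool) : ∀ m, 1 ≤ m →
    (gw m v).Pairwise (fun x y => y = 1 ∨ x < y) := by
  induction v with
  | nil => intro m _; exact List.Pairwise.nil
  | cons b v ih =>
    intro m hm
    cases b <;> simp only [gw, List.pairwise_cons]
    · refine ⟨fun y hy => ?_, ih m hm⟩
      have := gw_mem v m y hy; omega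
    · refine ⟨fun y hy => ?_, ih _ (by omega)⟩
      exact gw_mem v (m+1) y hy

theorem one_gw_pw (v : List Bool) :
    (1 :: gw 1 v).Pairwise (fun x y => y = 1 ∨ x < y) := by
  rw [List.pairwise_cons]
  exact ⟨fun y hy => gw_mem v 1 y hy, gw_pw v 1 le_rfl⟩

theorem one_gw_pos (v : List Bool) : ∀ x ∈ 1 :: gw 1 v, 1 ≤ x := by
  intro x hx
  rcases List.mem_cons.1 hx with rfl | hx
  · exact le_rfl
  · have := gw_mem v 1 x hx; omega

theorem gw_of_RG (t : List ℕ) : ∀ m, 1 ≤ m → RG m t →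
    t.Pairwise (fun x y => y = 1 ∨ x ≠ y) → (∀ x ∈ t, x = 1 ∨ m < x) →
    ∃ v, t = gw m v := by
  induction t with
  | nil => intro m _ _ _ _; exact ⟨[], rfl⟩
  | cons x t ih =>
    intro m hm hR hp hb
    obtain ⟨h1, h2, h3⟩ := hR
    rw [List.pairwise_cons] at hp
    by_cases hx : x = 1
    · subst hx
      rw [max_eq_left hm] at h3
      obtain ⟨v, hv⟩ := ih m hm h3 hp.2 (fun y hy => hb y (by simp [hy]))
      exact ⟨false :: v, by simp [gw, hv]⟩
    · have hx' : x = m + 1 := by have := hb x (by simp); omega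
      subst hx'
      rw [max_eq_right (by omega)] at h3
      obtain ⟨v, hv⟩ := ih (m+1) (by omega) h3 hp.2 (fun y hy => by
        have := hb y (by simp [hy])
        have := hp.1 y hy
        omega)
      exact ⟨true :: v, by simp [gw, hv]⟩

theorem pat122 {a b c : ℕ} : WordOrdIso [a,b,c] [1,2,2] ↔ a < b ∧ b = c := by
  constructor
  · rintro ⟨_, h⟩
    have h1 := h 0 1 (by simp) (by simp)
    have h2 := h 1 2 (by simp) (by simp)
    have h3 := h 2 1 (by simp) (by simp)
    simp at h1 h2 h3
    omega
  · rintro ⟨h1, rfl⟩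
    refine ⟨rfl, ?_⟩
    intro i j hi hj
    simp at hi hj
    interval_cases i <;> interval_cases j <;> simp <;> omega

theorem pat112 {a b c : ℕ} : WordOrdIso [a,b,c] [1,1,2] ↔ a = b ∧ b < c := by
  constructor
  · rintro ⟨_, h⟩
    have h1 := h 0 1 (by simp) (by simp)
    have h2 := h 1 2 (by simp) (by simp)
    have h3 := h 1 0 (by simp) (by simp)
    simp at h1 h2 h3
    omega
  · rintro ⟨rfl, h1⟩
    refine ⟨rfl, ?_⟩
    intro i j hi hj
    simp at hi hj
    interval_cases i <;> interval_cases j <;> simp <;> omega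

theorem class122 (w : List ℕ) (hw : w ≠ []) :
    (IsRGF w ∧ PatAvoids w [1,2,2]) ↔ ∃ v, w = 1 :: gw 1 v := by
  rw [isRGF_iff]
  constructor
  · rintro ⟨hR, ha⟩
    cases w with
    | nil => simp at hw
    | cons x t =>
      obtain ⟨h1, h2, h3⟩ := hR
      obtain rfl : x = 1 := by omega
      have hpos := ((RG_iff t _).1 h3).1
      obtain ⟨v, hv⟩ := gw_of_RG t 1 le_rfl (by simpa using h3) (by
        rw [List.pairwise_iff_forall_sublist]
        intro a b hab
        by_contra hc
        push Not at hc
        apply ha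
        refine ⟨[1,a,b], hab.cons_cons 1, pat122.2 ?_⟩
        have := hpos b (hab.subset (by simp))
        omega) (fun y hy => by have := hpos y hy; omega)
      exact ⟨v, by rw [hv]⟩
  · rintro ⟨v, rfl⟩
    refine ⟨?_, ?_⟩
    · simpa [RG] using gw_RG v 1 le_rfl
    · rintro ⟨s, hs, hi⟩
      have hl := hi.1
      match s, hl with
      | [a,b,c], _ =>
        have := pat122.1 hi
        have hp := (one_gw_pw v).sublist hs
        have := one_gw_pos v a (hs.subset (by simp))
        simp at hp
        omega

theorem iso_of_decode (s t : List ℕ)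
    (hs : s.Pairwise (fun x y => y = 1 ∨ x < y)) (ht : t.Pairwise (fun x y => y = 1 ∨ x < y))
    (hs1 : ∀ x ∈ s, 1 ≤ x) (ht1 : ∀ x ∈ t, 1 ≤ x)
    (h : s.map (fun x => decide (x ≠ 1)) = t.map (fun x => decide (x ≠ 1))) :
    WordOrdIso s t := by
  have hl : s.length = t.length := by simpa using congrArg List.length h
  refine ⟨hl, ?_⟩
  have hd : ∀ i (h1 : i < s.length) (h2 : i < t.length), s[i] = 1 ↔ t[i] = 1 := by
    intro i h1 h2
    have : (s.map (fun x => decide (x ≠ 1)))[i]'(by simpa using h1)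
        = (t.map (fun x => decide (x ≠ 1)))[i]'(by simpa using h2) := by
      simp only [h]
    simpa [not_iff_not] using this
  intro i j hi hj
  have hi' := hl ▸ hi
  have hj' := hl ▸ hj
  rw [List.getD_eq_getElem _ _ hi, List.getD_eq_getElem _ _ hj,
    List.getD_eq_getElem _ _ hi', List.getD_eq_getElem _ _ hj']
  rw [List.pairwise_iff_getElem] at hs ht
  have a1 := hd i hi hi'
  have a2 := hd j hj hj'
  have b1 := hs1 _ (List.getElem_mem hi)
  have b2 := hs1 _ (List.getElem_mem hj)
  have b3 := ht1 _ (List.getElem_mem hi')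
  have b4 := ht1 _ (List.getElem_mem hj')
  rcases lt_trichotomy i j with hij | rfl | hij
  · have := hs i j hi hj hij
    have := ht i j hi' hj' hij
    omega
  · simp
  · have := hs j i hj hi hij
    have := ht j i hj' hi' hij
    omega

theorem contains_gw (u v : List Bool) :
    PatContains (1 :: gw 1 v) (1 :: gw 1 u) ↔ u.Sublist v := by
  constructor
  · rintro ⟨s, hs, hl, hi⟩
    cases s with
    | nil => simp at hl
    | cons a s =>
      have hs' : s.Sublist (gw 1 v) := by simpa using hs.tail
      have hp := (one_gw_pw v).sublist hs
      have hpos := fun x hx => one_gw_pos v x (hs.subset hx)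
      have h2 := hs'.map (fun x => decide (x ≠ 1))
      rw [gw_decode v 1 le_rfl] at h2
      convert h2
      rw [← gw_decode u 1 le_rfl]
      have hl' : s.length = (gw 1 u).length := by simpa using hl
      apply List.ext_getElem
      · simp [hl']
      · intro i h3 h4
        have h3' : i < (gw 1 u).length := by simpa using h3
        have h4' : i < s.length := by simpa using h4
        have e1 := hi 0 (i+1) (by simp) (by simpa using h4')
        simp [h3', h4'] at e1
        have q := gw_mem u 1 _ (List.getElem_mem h3')
        have q1 := hpos a (by simp)
        have q2 := (List.pairwise_cons.1 hp).1 _ (List.getElem_mem h4')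
        simp
        omega
  · intro h
    rw [← gw_decode v 1 le_rfl, List.sublist_map_iff] at h
    obtain ⟨s, hs, hu⟩ := h
    have hs1 := hs.cons_cons 1
    refine ⟨1 :: s, hs1, iso_of_decode _ _ ((one_gw_pw v).sublist hs1) (one_gw_pw u)
      (fun x hx => one_gw_pos v x (hs1.subset hx)) (one_gw_pos u) ?_⟩
    rw [List.map_cons, List.map_cons, gw_decode u 1 le_rfl, ← hu]

/-- Binary words of length `N` avoiding the subsequence `u`. -/
def BS (N : ℕ) (u : List Bool) : Set (List Bool) := {v | v.length = N ∧ ¬ u.Sublist v}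

theorem BS_finite (N : ℕ) (u : List Bool) : (BS N u).Finite :=
  (List.finite_length_eq Bool N).subset (fun _ h => h.1)

theorem BS_succ (N : ℕ) (b : Bool) (u : List Bool) :
    (BS (N+1) (b :: u)).ncard = (BS N u).ncard + (BS N (b :: u)).ncard := by
  have : BS (N+1) (b :: u) = (List.cons b) '' BS N u ∪ (List.cons (!b)) '' BS N (b :: u) := by
    ext v
    cases v with
    | nil => simp [BS]
    | cons c v =>
      cases b <;> cases c <;> simp [BS, List.sublist_cons_iff]
      all_goals
        intro _ h1 h2
        exact h1 ((List.sublist_cons_self _ _).trans h2)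
  rw [this, Set.ncard_union_eq _ ((BS_finite _ _).image _) ((BS_finite _ _).image _),
    Set.ncard_image_of_injective _ (List.cons_injective),
    Set.ncard_image_of_injective _ (List.cons_injective)]
  rw [Set.disjoint_left]
  rintro _ ⟨x, _, rfl⟩ ⟨y, _, h⟩
  cases b <;> simp at h

theorem BS_card (N : ℕ) : ∀ u u' : List Bool, u.length = u'.length →
    (BS N u).ncard = (BS N u').ncard := by
  induction N with
  | zero =>
    intro u u' h
    cases u <;> cases u' <;> simp at h
    · rfl
    · congr 1
      ext v
      simp only [BS, Set.mem_ofPred_eq, List.length_eq_zero_iff]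
      constructor <;> rintro ⟨rfl, _⟩ <;> simp
  | succ N ih =>
    intro u u' h
    cases u <;> cases u' <;> simp at h
    · rfl
    · rename_i b t b' t'
      rw [BS_succ, BS_succ, ih t t' h, ih (b :: t) (b' :: t') (by simpa using h)]

theorem count122 (N : ℕ) (u : List Bool) :
    pCount (N+1) {[1,2,2], 1 :: gw 1 u} = (BS N u).ncard := by
  unfold pCount
  have : {w : List ℕ | IsRGF w ∧ w.length = N+1 ∧
      ∀ p ∈ ({[1,2,2], 1 :: gw 1 u} : Set (List ℕ)), PatAvoids w p}
      = (fun v => 1 :: gw 1 v) '' BS N u := by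
    ext w
    simp only [Set.mem_ofPred_eq, Set.mem_insert_iff, Set.mem_singleton_iff, forall_eq_or_imp,
      forall_eq, Set.mem_image, BS]
    constructor
    · rintro ⟨h1, h2, h3, h4⟩
      obtain ⟨v, rfl⟩ := (class122 w (by rintro rfl; simp at h2)).1 ⟨h1, h3⟩
      refine ⟨v, ⟨by simpa [gw_length] using h2, fun h => h4 ((contains_gw u v).2 h)⟩, rfl⟩
    · rintro ⟨v, ⟨h1, h2⟩, rfl⟩
      obtain ⟨h3, h4⟩ := (class122 (1 :: gw 1 v) (by simp)).2 ⟨v, rfl⟩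
      exact ⟨h3, by simp [gw_length, h1], h4, fun h => h2 ((contains_gw u v).1 h)⟩
  rw [this, Set.ncard_image_of_injective]
  intro v v' h
  simp at h
  rw [← gw_decode v 1 le_rfl, h, gw_decode v' 1 le_rfl]

theorem incPat_succ (m : ℕ) : incPat (m+1) = incPat m ++ [m+1] := by
  simp [incPat, List.range_succ]

theorem mem_incPat {m x : ℕ} : x ∈ incPat m ↔ 1 ≤ x ∧ x ≤ m := by
  simp only [incPat, List.mem_map, List.mem_range]
  constructor
  · rintro ⟨a, h, rfl⟩; omega
  · rintro ⟨h1, h2⟩; exact ⟨x - 1, by omega, by omega⟩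

theorem incPat_length (m : ℕ) : (incPat m).length = m := by simp [incPat]

theorem incPat_pw (m : ℕ) : (incPat m).Pairwise (· < ·) := by
  induction m with
  | zero => simp [incPat]
  | succ m ih =>
    rw [incPat_succ, List.pairwise_append]
    refine ⟨ih, by simp, ?_⟩
    intro a ha b hb
    have := mem_incPat.1 ha
    simp at hb
    omega

theorem form112 (w : List ℕ) : ∀ m, RG m w →
    (∀ x z, [x,x,z].Sublist (incPat m ++ w) → z ≤ x) →
    ∃ M t, incPat m ++ w = incPat M ++ t ∧ t.Pairwise (· ≥ ·) ∧
      (∀ x ∈ t, 1 ≤ x ∧ x ≤ M) ∧ m ≤ M ∧ (w ≠ [] → m = 0 → 1 ≤ M) := by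
  induction w with
  | nil => intro m _ _; exact ⟨m, [], by simp⟩
  | cons x w ih =>
    intro m hR hav
    obtain ⟨h1, h2, h3⟩ := hR
    by_cases hx : x = m + 1
    · subst hx
      rw [max_eq_right (by omega)] at h3
      have e : incPat m ++ (m+1) :: w = incPat (m+1) ++ w := by simp [incPat_succ]
      rw [e] at hav ⊢
      obtain ⟨M, t, a, b, c, d, _⟩ := ih (m+1) h3 hav
      exact ⟨M, t, a, b, c, by omega, by omega⟩
    · have key : ∀ a ≤ m, 1 ≤ a → ∀ z, [a,z].Sublist (x :: w) → z ≤ a := by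
        intro a ha h1a z hz
        apply hav a z
        have : [a].Sublist (incPat m) := by
          rw [List.singleton_sublist]; exact mem_incPat.2 ⟨h1a, ha⟩
        simpa using this.append hz
      have hpos := ((RG_iff w _).1 h3).1
      have hle : ∀ y ∈ w, y ≤ x := fun y hy =>
        key x (by omega) h1 y ((List.singleton_sublist.2 hy).cons_cons x)
      have hall : ∀ y ∈ x :: w, 1 ≤ y ∧ y ≤ m := by
        intro y hy
        rcases List.mem_cons.1 hy with rfl | hy
        · omega
        · have := hle y hy; have := hpos y hy; omega
      refine ⟨m, x :: w, rfl, ?_, hall, le_rfl, by omega⟩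
      rw [List.pairwise_iff_forall_sublist]
      intro a b hab
      have := hall a (hab.subset (by simp))
      exact key a this.2 this.1 b hab

theorem RG_bdd (t : List ℕ) : ∀ M, (∀ x ∈ t, 1 ≤ x ∧ x ≤ M) → RG M t := by
  induction t with
  | nil => intro M _; trivial
  | cons x t ih =>
    intro M h
    have hx := h x (by simp)
    refine ⟨hx.1, by omega, ?_⟩
    rw [max_eq_left hx.2]
    exact ih M (fun y hy => h y (by simp [hy]))

theorem RG_inc (M : ℕ) : ∀ t, RG M t → RG 0 (incPat M ++ t) := by
  induction M with
  | zero => intro t h; simpa [incPat] using h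
  | succ M ih =>
    intro t h
    rw [incPat_succ, List.append_assoc]
    apply ih
    simpa [RG] using h

theorem av112 (M : ℕ) (t : List ℕ) (ht : t.Pairwise (· ≥ ·)) :
    PatAvoids (incPat M ++ t) [1,1,2] := by
  rintro ⟨s, hs, hi⟩
  have hl := hi.1
  match s, hl with
  | [a,b,c], _ =>
    obtain ⟨rfl, hlt⟩ := pat112.1 hi
    rw [List.sublist_append_iff] at hs
    obtain ⟨l1, l2, e, h1, h2⟩ := hs
    have p1 := (incPat_pw M).sublist h1
    have p2 := ht.sublist h2
    match l1, e with
    | [], e => simp at e; subst e; simp at p2; omega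
    | [x], e => simp at e; obtain ⟨rfl, rfl⟩ := e; simp at p2; omega
    | x :: y :: l, e => simp at e; obtain ⟨rfl, rfl, _⟩ := e; simp at p1

theorem contains_inc (M k : ℕ) (t : List ℕ) (ht : ∀ x ∈ t, 1 ≤ x ∧ x ≤ M) :
    PatContains (incPat M ++ t) (incPat k) ↔ k ≤ M := by
  constructor
  · rintro ⟨s, hs, hl, hi⟩
    have hp : s.Pairwise (· < ·) := by
      rw [List.pairwise_iff_getElem]
      intro i j h1 h2 hij
      have := hi i j h1 h2
      rw [List.getD_eq_getElem _ _ h1, List.getD_eq_getElem _ _ h2,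
        List.getD_eq_getElem _ _ (hl ▸ h1), List.getD_eq_getElem _ _ (hl ▸ h2)] at this
      exact this.2 (List.pairwise_iff_getElem.1 (incPat_pw k) i j _ _ hij)
    have hn : s.Nodup := hp.imp (fun h => ne_of_lt h)
    have hsub : s ⊆ incPat M := by
      intro x hx
      rcases List.mem_append.1 (hs.subset hx) with h | h
      · exact h
      · exact mem_incPat.2 (ht x h)
    have := (hn.subperm hsub).length_le
    rw [hl, incPat_length, incPat_length] at this
    exact this
  · intro h
    refine ⟨incPat k, ?_, rfl, fun _ _ _ _ => Iff.rfl⟩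
    refine List.Sublist.trans ?_ (List.sublist_append_left _ _)
    unfold incPat
    exact (List.range_sublist.2 h).map _

/-- Weakly decreasing tail encoded by a binary word. -/
def ew : ℕ → List Bool → List ℕ
  | _, [] => []
  | c, true :: v => ew (c - 1) v
  | c, false :: v => c :: ew c v

theorem ew_mem (v : List Bool) : ∀ c, v.count true < c → ∀ x ∈ ew c v, 1 ≤ x ∧ x ≤ c := by
  induction v with
  | nil => intro c _ x hx; simp [ew] at hx
  | cons b v ih =>
    intro c hc x hx
    cases b <;> simp [ew] at hx hc
    · rcases hx with rfl | hx
      · omega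
      · exact ih c hc x hx
    · have := ih (c-1) (by omega) x hx; omega

theorem ew_pw (v : List Bool) : ∀ c, v.count true < c → (ew c v).Pairwise (· ≥ ·) := by
  induction v with
  | nil => intro c _; exact List.Pairwise.nil
  | cons b v ih =>
    intro c hc
    cases b <;> simp at hc
    · rw [ew, List.pairwise_cons]
      exact ⟨fun y hy => (ew_mem v c hc y hy).2, ih c hc⟩
    · exact ih (c-1) (by omega)

theorem ew_length (v : List Bool) : ∀ c, (ew c v).length + v.count true = v.length := by
  induction v with
  | nil => intro c; rfl
  | cons b v ih =>
    intro c
    cases b <;> simp [ew]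
    · have := ih c; omega
    · have := ih (c-1); omega

theorem ew_inj (v : List Bool) : ∀ c v', v.count true + 1 = c → v'.count true + 1 = c →
    ew c v = ew c v' → v = v' := by
  induction v with
  | nil =>
    intro c v' h1 h2 h
    have := ew_length v' c
    rw [← h] at this
    simp [ew] at this h1
    have : v'.length = 0 := by omega
    exact (List.length_eq_zero_iff.1 this).symm
  | cons b v ih =>
    intro c v' h1 h2 h
    cases v' with
    | nil =>
      have := ew_length (b :: v) c
      rw [h] at this
      simp only [ew, List.length_nil, List.length_cons, List.count_nil] at this h2
      omega
    | cons b' v' =>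
      cases b <;> cases b' <;> simp [ew] at h h1 h2
      · rw [ih c v' h1 h2 h]
      · have := ew_mem v' (c-1) (by omega) c (by rw [← h]; simp)
        omega
      · have := ew_mem v (c-1) (by omega) c (by rw [h]; simp)
        omega
      · rw [ih (c-1) v' (by omega) (by omega) h]

theorem ew_surj (c : ℕ) : ∀ t : List ℕ, t.Pairwise (· ≥ ·) → (∀ x ∈ t, 1 ≤ x ∧ x ≤ c + 1) →
    ∃ v : List Bool, v.count true = c ∧ ew (c+1) v = t := by
  induction c with
  | zero =>
    intro t
    induction t with
    | nil => intro _ _; exact ⟨[], rfl, rfl⟩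
    | cons x t ih =>
      intro hp hb
      obtain ⟨v, h1, h2⟩ := ih (List.pairwise_cons.1 hp).2 (fun y hy => hb y (by simp [hy]))
      have := hb x (by simp)
      obtain rfl : x = 1 := by omega
      exact ⟨false :: v, by simpa using h1, by simpa [ew] using h2⟩
  | succ c ihc =>
    intro t
    induction t with
    | nil =>
      intro _ _
      obtain ⟨v, h1, h2⟩ := ihc [] List.Pairwise.nil (by simp)
      exact ⟨true :: v, by simp [h1], by simpa [ew] using h2⟩
    | cons x t ih =>
      intro hp hb
      have hx := hb x (by simp)
      by_cases hxc : x = c + 1 + 1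
      · obtain ⟨v, h1, h2⟩ := ih (List.pairwise_cons.1 hp).2 (fun y hy => hb y (by simp [hy]))
        exact ⟨false :: v, by simpa using h1, by simp [ew, h2, hxc]⟩
      · obtain ⟨v, h1, h2⟩ := ihc (x :: t) hp (by
          intro y hy
          have h3 := hb y hy
          rcases List.mem_cons.1 hy with rfl | hy
          · omega
          · have := (List.pairwise_cons.1 hp).1 y hy
            omega)
        exact ⟨true :: v, by simp [h1], by simpa [ew] using h2⟩

/-- The `112`-avoiding word encoded by a binary word. -/
def hw (v : List Bool) : List ℕ := incPat (v.count true + 1) ++ ew (v.count true + 1) v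

theorem hw_bound (v : List Bool) : ∀ x ∈ hw v, x ≤ v.count true + 1 := by
  intro x hx
  rcases List.mem_append.1 hx with h | h
  · exact (mem_incPat.1 h).2
  · exact (ew_mem v _ (by omega) x h).2

theorem hw_top (v : List Bool) : v.count true + 1 ∈ hw v :=
  List.mem_append_left _ (mem_incPat.2 ⟨by omega, le_rfl⟩)

theorem hw_inj : Function.Injective hw := by
  intro v v' h
  have a := hw_bound v' _ (h ▸ hw_top v)
  have b := hw_bound v _ (h.symm ▸ hw_top v')
  have e : v'.count true = v.count true := by omega
  unfold hw at h
  rw [e] at h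
  exact ew_inj v _ v' rfl (by omega) (List.append_cancel_left h)

theorem hw_length (v : List Bool) : (hw v).length = v.length + 1 := by
  have := ew_length v (v.count true + 1)
  simp only [hw, List.length_append, incPat_length]
  omega

theorem count112 (N k : ℕ) :
    pCount (N+1) {[1,1,2], incPat (k+1)} = (BS N (List.replicate k true)).ncard := by
  unfold pCount
  have : {w : List ℕ | IsRGF w ∧ w.length = N+1 ∧
      ∀ p ∈ ({[1,1,2], incPat (k+1)} : Set (List ℕ)), PatAvoids w p}
      = hw '' BS N (List.replicate k true) := by
    ext w
    simp only [Set.mem_ofPred_eq, Set.mem_insert_iff, Set.mem_singleton_iff, forall_eq_or_imp,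
      forall_eq, Set.mem_image, BS, List.replicate_sublist_iff]
    constructor
    · rintro ⟨h1, h2, h3, h4⟩
      rw [isRGF_iff] at h1
      obtain ⟨M, t, e, hp, hb, _, hM⟩ := form112 w 0 h1 (by
        intro x z hxz
        by_contra hc
        exact h3 ⟨[x,x,z], by simpa [incPat] using hxz, pat112.2 ⟨rfl, by omega⟩⟩)
      have hM := hM (by rintro rfl; simp at h2) rfl
      obtain ⟨c, rfl⟩ : ∃ c, M = c + 1 := ⟨M - 1, by omega⟩
      obtain ⟨v, hv1, hv2⟩ := ew_surj c t hp hb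
      have e' : w = hw v := by
        have : w = incPat (c+1) ++ t := by simpa [incPat] using e
        rw [this, hw, hv1, hv2]
      refine ⟨v, ⟨?_, ?_⟩, e'.symm⟩
      · rw [e', hw_length] at h2; omega
      · intro h
        apply h4
        rw [e', hw, contains_inc _ _ _ (ew_mem v _ (by omega))]
        omega
    · rintro ⟨v, ⟨h1, h2⟩, rfl⟩
      refine ⟨?_, by rw [hw_length, h1], av112 _ _ (ew_pw v _ (by omega)), ?_⟩
      · rw [isRGF_iff]
        exact RG_inc _ _ (RG_bdd _ _ (ew_mem v _ (by omega)))
      · intro h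
        rw [hw, contains_inc _ _ _ (ew_mem v _ (by omega))] at h
        omega
  rw [this, Set.ncard_image_of_injective _ hw_inj]

theorem pCount_zero (T : Set (List ℕ)) (hT : ∀ p ∈ T, p ≠ []) : pCount 0 T = 1 := by
  unfold pCount
  rw [Set.ncard_eq_one]
  refine ⟨[], ?_⟩
  ext w
  simp only [Set.mem_ofPred_eq, Set.mem_singleton_iff, List.length_eq_zero_iff]
  constructor
  · exact fun h => h.2.1
  · rintro rfl
    refine ⟨(isRGF_iff _).2 trivial, rfl, ?_⟩
    rintro p hp ⟨s, hs, hl, _⟩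
    apply hT p hp
    rw [List.sublist_nil.1 hs] at hl
    exact List.length_eq_zero_iff.1 hl.symm

/-- Corollary 2.15: all pairs `(122, τ)` with `τ` a 122-avoiding RGF of length `k`
are Wilf-equivalent, and equivalent to the pair `(112, 12⋯k)`. -/
theorem stmt4 (k : ℕ) (hk : 1 ≤ k) (τ τ' : List ℕ)
    (hτ : IsRGF τ) (hτ' : IsRGF τ')
    (hlen : τ.length = k) (hlen' : τ'.length = k)
    (hav : PatAvoids τ [1,2,2]) (hav' : PatAvoids τ' [1,2,2]) :
    ∀ n : ℕ, pCount n {[1,2,2], τ} = pCount n {[1,2,2], τ'} ∧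
      pCount n {[1,2,2], τ} = pCount n {[1,1,2], incPat k} := by
  have hne : τ ≠ [] := by rintro rfl; simp at hlen; omega
  have hne' : τ' ≠ [] := by rintro rfl; simp at hlen'; omega
  obtain ⟨u, rfl⟩ := (class122 τ hne).1 ⟨hτ, hav⟩
  obtain ⟨u', rfl⟩ := (class122 τ' hne').1 ⟨hτ', hav'⟩
  simp only [List.length_cons, gw_length] at hlen hlen'
  obtain ⟨k, rfl⟩ : ∃ j, k = j + 1 := ⟨k - 1, by omega⟩
  intro n
  cases n with
  | zero =>
    rw [pCount_zero, pCount_zero, pCount_zero]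
    · simp
    · intro p hp
      rcases hp with rfl | rfl
      · simp
      · rw [incPat_succ]; simp
    · intro p hp
      rcases hp with rfl | rfl <;> simp
    · intro p hp
      rcases hp with rfl | rfl <;> simp
  | succ N =>
    rw [count122, count122, count112]
    exact ⟨BS_card N _ _ (by omega), BS_card N _ _ (by simp; omega)⟩
end

section
/- Let σ and τ be (possibly empty) non-crossing RGFs, and let ρ and ρ′ be non-crossing RGFs with ρ ≃cc ρ′. Then σ[ρ][τ] ≃cc σ[ρ′][τ]. -/
/-- A word is non-crossing if it avoids the pattern 1212. -/
def NonCrossing (w : List ℕ) : Prop := PatAvoids w [1,2,1,2]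

/-- The number of distinct letters of an RGF equals its maximum letter. -/
def nLetters (w : List ℕ) : ℕ := w.foldr max 0

/-- `rgfComp a b` is the pattern `a[b]`: `a` followed by `b` shifted up by the
number of distinct letters of `a`. -/
def rgfComp (a b : List ℕ) : List ℕ := a ++ b.map (· + nLetters a)

/-- A connected RGF: nonempty and not expressible as `σ[τ]` with `σ, τ` nonempty RGFs. -/
def Connected (w : List ℕ) : Prop :=
  w ≠ [] ∧ ¬ ∃ a b : List ℕ, IsRGF a ∧ IsRGF b ∧ a ≠ [] ∧ b ≠ [] ∧ w = rgfComp a b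

/-- `w` decomposes as `σ₁[σ₂]⋯[σ_p]` with each `σ_i` a connected RGF. -/
def HasComponents (w : List ℕ) (p : ℕ) : Prop :=
  ∃ l : List (List ℕ), l.length = p ∧ (∀ c ∈ l, IsRGF c ∧ Connected c) ∧
    w = l.foldr rgfComp []

/-- Number of non-crossing RGFs of length `n` with `p` components avoiding `σ`. -/
noncomputable def ncCount (n p : ℕ) (σ : List ℕ) : ℕ :=
  {w : List ℕ | IsRGF w ∧ NonCrossing w ∧ w.length = n ∧ PatAvoids w σ ∧
    HasComponents w p}.ncard

/-- cc-equivalence of patterns. -/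
def ccEquiv (σ τ : List ℕ) : Prop := ∀ n p : ℕ, ncCount n p σ = ncCount n p τ

/-- Number of non-crossing RGFs of length `n` avoiding `σ`. -/
noncomputable def ncAvoidCount (n : ℕ) (σ : List ℕ) : ℕ :=
  {w : List ℕ | IsRGF w ∧ NonCrossing w ∧ w.length = n ∧ PatAvoids w σ}.ncard

/-- Auxiliary: builds `1[σ₁]1[σ₂]⋯1[σ_k]1` with accumulated letter shift `s`. -/
def onePatAux : ℕ → List (List ℕ) → List ℕ
  | _, [] => [1]
  | s, c :: rest => 1 :: (c.map (· + s) ++ onePatAux (s + nLetters c) rest)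

/-- The pattern `1[σ₁]1[σ₂]⋯1[σ_k]1`. -/
def onePat (l : List (List ℕ)) : List ℕ := onePatAux 1 l

/-- The pattern `1[σ]1[τ]`. -/
def pat2 (σ τ : List ℕ) : List ℕ :=
  1 :: (σ.map (· + 1) ++ 1 :: τ.map (· + (1 + nLetters σ)))


namespace NCW

/-! ### Order isomorphism and containment -/

lemma ordIso_append {s1 s2 p1 p2 : List ℕ} (h1 : WordOrdIso s1 p1) (h2 : WordOrdIso s2 p2)
    (hs : ∀ x ∈ s1, ∀ y ∈ s2, x < y) (hp : ∀ x ∈ p1, ∀ y ∈ p2, x < y) :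
    WordOrdIso (s1 ++ s2) (p1 ++ p2) := by
  obtain ⟨l1, h1⟩ := h1
  obtain ⟨l2, h2⟩ := h2
  refine ⟨by simp [l1, l2], fun i j hi hj => ?_⟩
  rw [List.length_append] at hi hj
  have key : ∀ i j, i < s1.length → s1.length ≤ j → j < s1.length + s2.length →
      (s1 ++ s2).getD i 0 < (s1 ++ s2).getD j 0 ∧ (p1 ++ p2).getD i 0 < (p1 ++ p2).getD j 0 := by
    intro i j hi hj hj2
    rw [List.getD_append _ _ _ _ hi, List.getD_append_right _ _ _ _ hj,
      List.getD_append _ _ _ _ (by omega), List.getD_append_right _ _ _ _ (by omega)]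
    rw [List.getD_eq_getElem _ _ hi, List.getD_eq_getElem _ _ (by omega),
      List.getD_eq_getElem _ _ (by omega), List.getD_eq_getElem _ _ (by omega)]
    exact ⟨hs _ (List.getElem_mem _) _ (List.getElem_mem _),
      hp _ (List.getElem_mem _) _ (List.getElem_mem _)⟩
  by_cases hi1 : i < s1.length <;> by_cases hj1 : j < s1.length
  · rw [List.getD_append _ _ _ _ hi1, List.getD_append _ _ _ _ hj1,
      List.getD_append _ _ _ _ (by omega), List.getD_append _ _ _ _ (by omega)]
    exact h1 i j hi1 hj1
  · have := key i j hi1 (by omega) hj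
    exact ⟨fun _ => this.2, fun _ => this.1⟩
  · have := key j i hj1 (by omega) hi
    exact ⟨fun h => absurd h (by omega), fun h => absurd h (by omega)⟩
  · rw [List.getD_append_right _ _ _ _ (by omega), List.getD_append_right _ _ _ _ (by omega),
      List.getD_append_right _ _ _ _ (by omega), List.getD_append_right _ _ _ _ (by omega), ← l1]
    exact h2 _ _ (by omega) (by omega)

lemma ordIso_split {s p1 p2 : List ℕ} (h : WordOrdIso s (p1 ++ p2))
    (hp : ∀ x ∈ p1, ∀ y ∈ p2, x < y) :
    ∃ s1 s2, s = s1 ++ s2 ∧ WordOrdIso s1 p1 ∧ WordOrdIso s2 p2 ∧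
      ∀ x ∈ s1, ∀ y ∈ s2, x < y := by
  obtain ⟨l, h⟩ := h
  rw [List.length_append] at l
  obtain ⟨s1, s2, rfl, l1⟩ : ∃ s1 s2, s = s1 ++ s2 ∧ s1.length = p1.length :=
    ⟨s.take p1.length, s.drop p1.length, by simp, by simp; omega⟩
  rw [List.length_append] at l h
  have l2 : s2.length = p2.length := by omega
  refine ⟨s1, s2, rfl, ⟨l1, ?_⟩, ⟨l2, ?_⟩, ?_⟩
  · intro i j hi hj
    have := h i j (by omega) (by omega)
    rwa [List.getD_append _ _ _ _ hi, List.getD_append _ _ _ _ hj,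
      List.getD_append _ _ _ _ (by omega), List.getD_append _ _ _ _ (by omega)] at this
  · intro i j hi hj
    have := h (s1.length + i) (s1.length + j) (by omega) (by omega)
    rw [List.getD_append_right _ _ _ _ (by omega), List.getD_append_right _ _ _ _ (by omega),
      List.getD_append_right _ _ _ _ (by omega), List.getD_append_right _ _ _ _ (by omega),
      ← l1] at this
    simpa using this
  · intro x hx y hy
    obtain ⟨i, hi, rfl⟩ := List.getElem_of_mem hx
    obtain ⟨j, hj, rfl⟩ := List.getElem_of_mem hy
    have := h i (s1.length + j) (by omega) (by omega)
    rw [List.getD_append _ _ _ _ hi, List.getD_append_right _ _ _ _ (by omega),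
      List.getD_append _ _ _ _ (by omega), List.getD_append_right _ _ _ _ (by omega),
      List.getD_eq_getElem _ _ hi, List.getD_eq_getElem _ _ (by omega),
      List.getD_eq_getElem _ _ (by omega), List.getD_eq_getElem _ _ (by omega)] at this
    simp only [Nat.add_sub_cancel_left] at this
    exact this.2 (hp _ (List.getElem_mem _) _ (List.getElem_mem _))

lemma ordIso_map_left {f : ℕ → ℕ} (hf : StrictMono f) (s p : List ℕ) :
    WordOrdIso (s.map f) p ↔ WordOrdIso s p := by
  unfold WordOrdIso
  rw [List.length_map]
  refine and_congr_right fun l => forall_congr' fun i => forall_congr' fun j =>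
    forall_congr' fun hi => forall_congr' fun hj => ?_
  rw [List.getD_eq_getElem _ _ (by simpa using hi), List.getD_eq_getElem _ _ (by simpa using hj),
    List.getD_eq_getElem _ _ hi, List.getD_eq_getElem _ _ hj]
  simp [hf.lt_iff_lt]

lemma ordIso_symm {s p : List ℕ} (h : WordOrdIso s p) : WordOrdIso p s :=
  ⟨h.1.symm, fun i j hi hj => (h.2 i j (h.1 ▸ hi) (h.1 ▸ hj)).symm⟩

lemma ordIso_comm {s p : List ℕ} : WordOrdIso s p ↔ WordOrdIso p s :=
  ⟨ordIso_symm, ordIso_symm⟩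

lemma ordIso_map_right {f : ℕ → ℕ} (hf : StrictMono f) (s p : List ℕ) :
    WordOrdIso s (p.map f) ↔ WordOrdIso s p := by
  rw [ordIso_comm, ordIso_map_left hf, ordIso_comm]

lemma strictMono_add (k : ℕ) : StrictMono (· + k) := fun a b h => by simpa using h

lemma contains_map {f : ℕ → ℕ} (hf : StrictMono f) (w p : List ℕ) :
    PatContains (w.map f) p ↔ PatContains w p := by
  constructor
  · rintro ⟨s, hs, h⟩
    obtain ⟨s', hs', rfl⟩ := List.sublist_map_iff.1 hs
    exact ⟨s', hs', (ordIso_map_left hf _ _).1 h⟩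
  · rintro ⟨s, hs, h⟩
    exact ⟨s.map f, hs.map f, (ordIso_map_left hf _ _).2 h⟩

lemma contains_mono {w w' p : List ℕ} (h : w.Sublist w') (hw : PatContains w p) :
    PatContains w' p := by
  obtain ⟨s, hs, h2⟩ := hw
  exact ⟨s, hs.trans h, h2⟩

/-! ### maximum -/

lemma le_nLetters {w : List ℕ} {x : ℕ} (h : x ∈ w) : x ≤ nLetters w := by
  induction w with
  | nil => simp at h
  | cons a w ih =>
    simp only [nLetters, List.foldr_cons] at *
    rcases List.mem_cons.1 h with rfl | h
    · exact le_max_left _ _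
    · exact (ih h).trans (le_max_right _ _)

lemma nLetters_le {w : List ℕ} {k : ℕ} : nLetters w ≤ k ↔ ∀ x ∈ w, x ≤ k := by
  induction w with
  | nil => simp [nLetters]
  | cons a w ih =>
    simp only [nLetters, List.foldr_cons] at *
    simp [ih]

@[simp] lemma nLetters_nil : nLetters [] = 0 := rfl

@[simp] lemma nLetters_cons (a : ℕ) (w : List ℕ) : nLetters (a :: w) = max a (nLetters w) := rfl

@[simp] lemma nLetters_append (a b : List ℕ) :
    nLetters (a ++ b) = max (nLetters a) (nLetters b) := by
  induction a with
  | nil => simp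
  | cons x a ih => simp [ih, max_assoc]

lemma nLetters_map_add {w : List ℕ} (hw : w ≠ []) (k : ℕ) :
    nLetters (w.map (· + k)) = nLetters w + k := by
  induction w with
  | nil => simp at hw
  | cons x a ih =>
    by_cases h : a = []
    · simp [h]
    · simp [ih h, max_add_add_right]

lemma nLetters_comp (a b : List ℕ) : nLetters (rgfComp a b) = nLetters a + nLetters b := by
  by_cases h : b = []
  · simp [h, rgfComp]
  · rw [rgfComp, nLetters_append, nLetters_map_add h]; omega

lemma comp_assoc (a b c : List ℕ) : rgfComp (rgfComp a b) c = rgfComp a (rgfComp b c) := by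
  conv_lhs => rw [rgfComp, nLetters_comp]
  simp only [rgfComp, List.map_append, List.map_map, List.append_assoc]
  congr 2
  apply List.map_congr_left
  intro x _
  simp; omega

@[simp] lemma comp_nil (a : List ℕ) : rgfComp a [] = a := by simp [rgfComp]
@[simp] lemma nil_comp (a : List ℕ) : rgfComp [] a = a := by simp [rgfComp]

lemma contains_comp {w ρ τ : List ℕ} (hτ : ∀ x ∈ τ, 1 ≤ x) :
    PatContains w (rgfComp ρ τ) ↔ ∃ s1 s2, (s1 ++ s2).Sublist w ∧ WordOrdIso s1 ρ ∧
      WordOrdIso s2 τ ∧ ∀ x ∈ s1, ∀ y ∈ s2, x < y := by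
  have hp : ∀ x ∈ ρ, ∀ y ∈ τ.map (· + nLetters ρ), x < y := by
    intro x hx y hy
    obtain ⟨z, hz, rfl⟩ := List.mem_map.1 hy
    have := le_nLetters hx
    have := hτ z hz
    omega
  constructor
  · rintro ⟨s, hs, h⟩
    obtain ⟨s1, s2, rfl, h1, h2, h3⟩ := ordIso_split h hp
    exact ⟨s1, s2, hs, h1, (ordIso_map_right (strictMono_add _) _ _).1 h2, h3⟩
  · rintro ⟨s1, s2, hs, h1, h2, h3⟩
    exact ⟨_, hs, ordIso_append h1 ((ordIso_map_right (strictMono_add _) _ _).2 h2) h3 hp⟩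

/-! ### Stack machine -/

/-- Stack of open letters after reading `w` starting with stack `s`. -/
def stk (s w : List ℕ) : List ℕ := w.foldl (fun s x => x :: s.filter (· < x)) s

/-- `w` is a valid continuation from stack `s` and current maximum `M`. -/
def Valid : List ℕ → ℕ → List ℕ → Prop
  | _, _, [] => True
  | s, M, x :: w => (x = M + 1 ∨ x ∈ s) ∧ Valid (x :: s.filter (· < x)) (max M x) w

@[simp] lemma stk_nil (s : List ℕ) : stk s [] = s := rfl
@[simp] lemma stk_cons (s : List ℕ) (x w) : stk s (x :: w) = stk (x :: s.filter (· < x)) w := rfl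
lemma stk_append (s a b : List ℕ) : stk s (a ++ b) = stk (stk s a) b := by simp [stk]
lemma stk_concat (s a : List ℕ) (x : ℕ) :
    stk s (a ++ [x]) = x :: (stk s a).filter (· < x) := by simp [stk]

@[simp] lemma valid_nil (s M) : Valid s M [] := trivial
lemma valid_cons (s M x w) : Valid s M (x :: w) ↔
  (x = M + 1 ∨ x ∈ s) ∧ Valid (x :: s.filter (· < x)) (max M x) w := Iff.rfl

lemma valid_append (s M a b) :
    Valid s M (a ++ b) ↔ Valid s M a ∧ Valid (stk s a) (max M (nLetters a)) b := by
  induction a generalizing s M with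
  | nil => simp
  | cons x a ih => simp [valid_cons, ih, and_assoc, max_assoc]

/-- A letter that is not on the stack and not new cannot occur. -/
lemma valid_mem {s M w} (h : Valid s M w) {y : ℕ} (hy : y ∈ w) : y ∈ s ∨ M < y := by
  induction w generalizing s M with
  | nil => simp at hy
  | cons x w ih =>
    obtain ⟨h1, h2⟩ := (valid_cons ..).1 h
    rcases List.mem_cons.1 hy with rfl | hy
    · rcases h1 with h1 | h1
      · right; omega
      · exact Or.inl h1
    · rcases ih h2 hy with h3 | h3
      · rcases List.mem_cons.1 h3 with rfl | h3
        · rcases h1 with h1 | h1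
          · right; omega
          · exact Or.inl h1
        · exact Or.inl (List.mem_filter.1 h3).1
      · right; omega

lemma stk_sorted (s w : List ℕ) (hs : s.Pairwise (· > ·)) : (stk s w).Pairwise (· > ·) := by
  induction w generalizing s with
  | nil => exact hs
  | cons x w ih =>
    apply ih
    rw [List.pairwise_cons]
    exact ⟨fun y hy => by simpa using (List.mem_filter.1 hy).2, hs.filter _⟩

lemma stk_subset (s w : List ℕ) {y} (h : y ∈ stk s w) : y ∈ s ∨ y ∈ w := by
  induction w generalizing s with
  | nil => exact Or.inl h
  | cons x w ih =>
    rcases ih _ h with h | h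
    · rcases List.mem_cons.1 h with rfl | h
      · simp
      · exact Or.inl (List.mem_filter.1 h).1
    · simp [h]

lemma valid_pos {s M w} (h : Valid s M w) (hs : ∀ x ∈ s, 1 ≤ x) : ∀ x ∈ w, 1 ≤ x := by
  intro x hx
  rcases valid_mem h hx with h | h
  · exact hs x h
  · omega

/-- Splitting at an open letter. -/
lemma open_split {w : List ℕ} (h : Valid [] 0 w) {y : ℕ} (hy : y ∈ stk [] w) :
    ∃ a b, w = a ++ y :: b ∧ (∀ x ∈ a, x < y) ∧ ∀ x ∈ b, y ≤ x := by
  induction w using List.reverseRecOn with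
  | nil => simp at hy
  | append_singleton w x ih =>
    obtain ⟨h1, h2⟩ := (valid_append ..).1 h
    have h2 := ((valid_cons ..).1 h2).1
    rw [stk_concat] at hy
    have ext : y ≤ x → y ∈ stk [] w →
        ∃ a b, w ++ [x] = a ++ y :: b ∧ (∀ x ∈ a, x < y) ∧ ∀ x ∈ b, y ≤ x := by
      intro hyx hy
      obtain ⟨a, b, rfl, ha, hb⟩ := ih h1 hy
      refine ⟨a, b ++ [x], by simp, ha, fun z hz => ?_⟩
      rcases List.mem_append.1 hz with hz | hz
      · exact hb z hz
      · simp at hz; omega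
    rcases List.mem_cons.1 hy with rfl | hy
    · rcases h2 with h2 | h2
      · refine ⟨w, [], rfl, fun z hz => ?_, by simp⟩
        have := le_nLetters hz
        omega
      · exact ext le_rfl h2
    · have := List.mem_filter.1 hy
      simp at this
      exact ext this.2.le this.1

lemma rgf_concat (w : List ℕ) (x : ℕ) :
    IsRGF (w ++ [x]) ↔ IsRGF w ∧ 1 ≤ x ∧ x ≤ nLetters w + 1 := by
  unfold IsRGF
  by_cases hw : w = []
  · subst hw
    simp
    omega
  have hl : 0 < w.length := List.length_pos_iff.2 hw
  constructor
  · rintro ⟨h1, h2, h3⟩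
    refine ⟨⟨fun y hy => h1 y (by simp [hy]), fun _ => ?_, fun i hi => ?_⟩, h1 x (by simp), ?_⟩
    · have := h2 (by simp)
      rwa [List.getD_append _ _ _ _ hl] at this
    · have := h3 i (by simp; omega)
      rwa [List.getD_append _ _ _ _ hi, List.take_append_of_le_length (by omega)] at this
    · have := h3 (w.length - 1) (by simp; omega)
      rw [Nat.sub_add_cancel hl, List.getD_append_right _ _ _ _ le_rfl] at this
      simpa [nLetters] using this
  · rintro ⟨⟨h1, h2, h3⟩, h4, h5⟩
    refine ⟨fun y hy => ?_, fun _ => ?_, fun i hi => ?_⟩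
    · rcases List.mem_append.1 hy with hy | hy
      · exact h1 y hy
      · simp at hy; omega
    · rw [List.getD_append _ _ _ _ hl]; exact h2 hw
    · simp at hi
      by_cases hi' : i + 1 < w.length
      · rw [List.getD_append _ _ _ _ hi', List.take_append_of_le_length (by omega)]
        exact h3 i hi'
      · have : i + 1 = w.length := by omega
        rw [this, List.getD_append_right _ _ _ _ le_rfl]
        simpa [nLetters] using h5

/-- All smaller letters of an RGF precede any given letter. -/
lemma rgf_mem_before {w : List ℕ} (h : IsRGF w) : ∀ {l r : List ℕ} {x : ℕ}, w = l ++ x :: r →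
    ∀ a, 1 ≤ a → a < x → a ∈ l := by
  have mem_of_le : ∀ w : List ℕ, IsRGF w → ∀ a, 1 ≤ a → a ≤ nLetters w → a ∈ w := by
    intro w
    induction w using List.reverseRecOn with
    | nil => simp; intros; omega
    | append_singleton w x ih =>
      intro h a ha1 ha2
      rw [rgf_concat] at h
      simp at ha2
      by_cases hax : a = x
      · simp [hax]
      · have := ih h.1 a ha1 (by omega)
        simp [this]
  have pre : ∀ (l r : List ℕ), IsRGF (l ++ r) → IsRGF l := by
    intro l r
    induction r using List.reverseRecOn with
    | nil => simp
    | append_singleton r x ih =>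
      intro h
      rw [← List.append_assoc, rgf_concat] at h
      exact ih h.1
  rintro l r x rfl a ha1 ha2
  have h2 : IsRGF (l ++ [x]) := pre (l ++ [x]) r (by simpa using h)
  rw [rgf_concat] at h2
  exact mem_of_le l h2.1 a ha1 (by omega)

lemma contains1212 (w : List ℕ) :
    PatContains w [1,2,1,2] ↔ ∃ a b, a < b ∧ [a, b, a, b].Sublist w := by
  constructor
  · rintro ⟨s, hs, hl, h⟩
    match s, hl with
    | [a, b, c, d], _ =>
      have h01 := h 0 1 (by simp) (by simp)
      have h02 := h 0 2 (by simp) (by simp)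
      have h20 := h 2 0 (by simp) (by simp)
      have h13 := h 1 3 (by simp) (by simp)
      have h31 := h 3 1 (by simp) (by simp)
      simp at h01 h02 h20 h13 h31
      obtain rfl : a = c := by omega
      obtain rfl : b = d := by omega
      exact ⟨a, b, h01, hs⟩
  · rintro ⟨a, b, hab, hs⟩
    refine ⟨_, hs, rfl, fun i j hi hj => ?_⟩
    simp at hi hj
    interval_cases i <;> interval_cases j <;> simp <;> omega

lemma sublist_concat_iff {s w : List ℕ} {x : ℕ} : s.Sublist (w ++ [x]) ↔
    s.Sublist w ∨ ∃ s', s = s' ++ [x] ∧ s'.Sublist w := by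
  rw [← List.reverse_sublist, List.reverse_append, List.reverse_singleton, List.singleton_append,
    List.sublist_cons_iff, List.reverse_sublist]
  refine or_congr Iff.rfl ⟨?_, ?_⟩
  · rintro ⟨r, hr, h⟩
    refine ⟨r.reverse, by rw [← List.reverse_reverse s, hr]; simp, ?_⟩
    rw [← List.reverse_sublist]; simpa using h
  · rintro ⟨s', rfl, h⟩
    exact ⟨s'.reverse, by simp, List.reverse_sublist.2 h⟩

lemma sublist_split {s1 s2 w : List ℕ} {v : ℕ} (h : (s1 ++ v :: s2).Sublist w) :
    ∃ w1 w2, w = w1 ++ v :: w2 ∧ s1.Sublist w1 ∧ s2.Sublist w2 := by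
  obtain ⟨r1, r2, rfl, h1, h2⟩ := List.append_sublist_iff.1 h
  obtain ⟨r3, r4, rfl, h3, h4⟩ := List.cons_sublist_iff.1 h2
  obtain ⟨a, b, rfl⟩ := List.append_of_mem h3
  exact ⟨r1 ++ a, b ++ r4, by simp, h1.trans (List.sublist_append_left _ _),
    h4.trans (List.sublist_append_right _ _)⟩

lemma nc_concat (w : List ℕ) (x : ℕ) :
    NonCrossing (w ++ [x]) ↔ NonCrossing w ∧ ∀ a < x, ¬ [a, x, a].Sublist w := by
  unfold NonCrossing PatAvoids
  rw [contains1212, contains1212]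
  constructor
  · intro h
    refine ⟨fun ⟨a, b, hab, hs⟩ => h ⟨a, b, hab, hs.trans (List.sublist_append_left _ _)⟩,
      fun a ha hs => h ⟨a, x, ha, ?_⟩⟩
    exact sublist_concat_iff.2 (Or.inr ⟨[a, x, a], rfl, hs⟩)
  · rintro ⟨h1, h2⟩ ⟨a, b, hab, hs⟩
    rcases sublist_concat_iff.1 hs with hs | ⟨s', he, hs3⟩
    · exact h1 ⟨a, b, hab, hs⟩
    · have : [a, b, a] ++ [b] = s' ++ [x] := he
      obtain ⟨rfl, hh⟩ := List.append_inj' this rfl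
      simp at hh
      subst hh
      exact h2 a hab hs3

lemma valid_iff (w : List ℕ) : Valid [] 0 w ↔ IsRGF w ∧ NonCrossing w := by
  induction w using List.reverseRecOn with
  | nil =>
    simp only [valid_nil, true_iff]
    refine ⟨by simp [IsRGF], ?_⟩
    unfold NonCrossing PatAvoids
    rw [contains1212]
    simp
  | append_singleton w x ih =>
    rw [valid_append, rgf_concat, nc_concat, valid_cons]
    simp only [valid_nil, and_true, zero_le, max_eq_right]
    constructor
    · rintro ⟨hv, h2⟩
      obtain ⟨hr, hn⟩ := ih.1 hv
      have hpos := valid_pos hv (by simp)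
      rcases h2 with h2 | h2
      · refine ⟨⟨hr, by omega, by omega⟩, hn, fun a ha hs => ?_⟩
        have : x ∈ w := hs.subset (by simp)
        have := le_nLetters this
        omega
      · have hxw : x ∈ w := by simpa using stk_subset _ _ h2
        refine ⟨⟨hr, hpos x hxw, by have := le_nLetters hxw; omega⟩, hn, fun a ha hs => ?_⟩
        obtain ⟨l, r, rfl, hl, hrr⟩ := open_split hv h2
        have hs2 := (hs.filter (fun z => decide (z < x)))
        have e1 : (l ++ x :: r).filter (fun z => decide (z < x)) = l := by
          rw [List.filter_append, List.filter_eq_self.2 (by simpa using hl),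
            List.filter_eq_nil_iff.2]
          · simp
          · simpa using hrr
        obtain ⟨s1, s2, h12, hs1, hs2⟩ := List.sublist_append_iff.1 hs
        match s1, h12 with
        | [], h12 =>
          subst h12
          rcases List.sublist_cons_iff.1 hs2 with h | ⟨r', h, h'⟩
          · have := hrr a (h.subset (by simp)); omega
          · simp at h; omega
        | [z], h12 =>
          simp at h12
          obtain ⟨rfl, rfl⟩ := h12
          have : [a].Sublist r := by
            rcases List.sublist_cons_iff.1 hs2 with h | ⟨r', h, h'⟩
            · exact (List.sublist_cons_self _ _).trans h
            · simp at h; subst h; exact h'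
          have := hrr a (this.subset (by simp)); omega
        | z :: z' :: s1, h12 =>
          simp at h12
          obtain ⟨rfl, rfl, _⟩ := h12
          have := hl x (hs1.subset (by simp)); omega
    · rintro ⟨⟨hr, h1, h2⟩, hn, h3⟩
      have hv := ih.2 ⟨hr, hn⟩
      refine ⟨hv, ?_⟩
      by_cases hx : x = nLetters w + 1
      · exact Or.inl hx
      right
      have hxs : ∀ v : List ℕ, x ∈ v → (∀ a < x, a ∈ v → ¬ [x, a].Sublist v) → x ∈ stk [] v := by
        intro v
        induction v using List.reverseRecOn with
        | nil => simp
        | append_singleton v y ihv =>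
          intro hxv hv
          rw [stk_concat]
          by_cases hxy : x = y
          · simp [hxy]
          have hxv' : x ∈ v := by simpa [hxy] using hxv
          by_cases hlt : x < y
          · simp only [List.mem_cons, List.mem_filter]
            right
            refine ⟨ihv hxv' fun a ha hav hs => ?_, by simpa using hlt⟩
            exact hv a ha (by simp [hav]) (hs.trans (List.sublist_append_left _ _))
          · exfalso
            refine hv y (by omega) (by simp) ?_
            exact sublist_concat_iff.2 (Or.inr ⟨[x], rfl, by simpa using hxv'⟩)
      have hxw : x ∈ w := by
        have hr1 : IsRGF (w ++ [nLetters w + 1]) := (rgf_concat _ _).2 ⟨hr, by omega, le_rfl⟩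
        exact rgf_mem_before hr1 rfl x h1 (by omega)
      refine hxs w hxw fun a ha haw hs => ?_
      obtain ⟨l, r, rfl, -, har⟩ := sublist_split (s1 := []) hs
      have hal := rgf_mem_before hr rfl a (hr.1 a haw) ha
      refine h3 a ha ?_
      exact List.Sublist.append (l₁ := [a]) (by simpa using hal) (har.cons_cons _)


lemma filter_map_lt {f : ℕ → ℕ} (hf : StrictMono f) (t : List ℕ) (x : ℕ) :
    (t.map f).filter (· < f x) = (t.filter (· < x)).map f := by
  rw [List.filter_map]
  congr 1
  apply List.filter_congr
  intro y _
  simp [hf.lt_iff_lt]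

lemma stk_map {f : ℕ → ℕ} (hf : StrictMono f) (t w : List ℕ) :
    stk (t.map f) (w.map f) = (stk t w).map f := by
  induction w generalizing t with
  | nil => rfl
  | cons x w ih =>
    rw [List.map_cons, stk_cons, stk_cons, filter_map_lt hf, ← List.map_cons, ih]

lemma valid_map {f : ℕ → ℕ} (hf : StrictMono f) {p M : ℕ} (hM : ∀ y, p < y → f y = y - p + M)
    (t w : List ℕ) (N : ℕ) (hN : p ≤ N) :
    Valid (t.map f) (N - p + M) (w.map f) ↔ Valid t N w := by
  induction w generalizing t N with
  | nil => simp
  | cons x w ih =>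
    rw [List.map_cons, valid_cons, valid_cons, filter_map_lt hf, ← List.map_cons]
    have h1 : f (N + 1) = N - p + M + 1 := by rw [hM _ (by omega)]; omega
    have h2 : max (N - p + M) (f x) = max N x - p + M := by
      by_cases hx : x ≤ N
      · have := hf (show x < N + 1 by omega)
        rw [max_eq_left (by omega), max_eq_left hx]
      · rw [hM x (by omega), max_eq_right (by omega), max_eq_right (by omega)]
    rw [h2, ih _ _ (by omega), ← h1, hf.injective.eq_iff]
    refine and_congr (or_congr Iff.rfl ?_) Iff.rfl
    simp [hf.injective.eq_iff]

lemma stk_bot {k : ℕ} (s s0 w : List ℕ) (h0 : ∀ y ∈ s0, y ≤ k) (hw : ∀ x ∈ w, k < x) :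
    stk (s ++ s0) w = stk s w ++ s0 := by
  induction w generalizing s with
  | nil => rfl
  | cons x w ih =>
    have hx := hw x (by simp)
    rw [stk_cons, stk_cons, List.filter_append,
      (List.filter_eq_self (l := s0)).2 (fun y hy => by have := h0 y hy; simp; omega),
      ← List.cons_append, ih _ (fun y hy => hw y (by simp [hy]))]

lemma valid_bot {k : ℕ} (s s0 w : List ℕ) (M : ℕ) (h0 : ∀ y ∈ s0, y ≤ k) (hw : ∀ x ∈ w, k < x) :
    Valid (s ++ s0) M w ↔ Valid s M w := by
  induction w generalizing s M with
  | nil => simp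
  | cons x w ih =>
    have hx := hw x (by simp)
    have hx0 : x ∉ s0 := fun h => by have := h0 x h; omega
    rw [valid_cons, valid_cons, List.filter_append,
      (List.filter_eq_self (l := s0)).2 (fun y hy => by have := h0 y hy; simp; omega),
      ← List.cons_append, ih _ _ (fun y hy => hw y (by simp [hy]))]
    simp [hx0]

lemma valid_shift {s c : List ℕ} {M : ℕ} (hs : ∀ y ∈ s, y ≤ M) (hc : ∀ x ∈ c, 1 ≤ x) :
    Valid s M (c.map (· + M)) ↔ Valid [] 0 c := by
  have := valid_bot (k := M) [] s (c.map (· + M)) M hs (by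
    intro x hx
    obtain ⟨y, hy, rfl⟩ := List.mem_map.1 hx
    have := hc y hy
    omega)
  rw [List.nil_append] at this
  rw [this]
  have h2 := valid_map (strictMono_add M) (p := 0) (M := M) (by simp) [] c 0 le_rfl
  simpa using h2

lemma stk_shift {s c : List ℕ} {M : ℕ} (hs : ∀ y ∈ s, y ≤ M) (hc : ∀ x ∈ c, 1 ≤ x) :
    stk s (c.map (· + M)) = (stk [] c).map (· + M) ++ s := by
  have := stk_bot (k := M) [] s (c.map (· + M)) hs (by
    intro x hx
    obtain ⟨y, hy, rfl⟩ := List.mem_map.1 hx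
    have := hc y hy
    omega)
  rw [List.nil_append] at this
  rw [this, ← stk_map (strictMono_add M)]
  simp

lemma stk_le {w : List ℕ} {y : ℕ} (h : y ∈ stk [] w) : y ≤ nLetters w :=
  le_nLetters (by simpa using stk_subset _ _ h)

lemma valid_comp {a b : List ℕ} (hb : ∀ x ∈ b, 1 ≤ x) :
    Valid [] 0 (rgfComp a b) ↔ Valid [] 0 a ∧ Valid [] 0 b := by
  rw [rgfComp, valid_append]
  simp only [zero_le, max_eq_right]
  rw [valid_shift (fun y hy => stk_le hy) hb]

lemma stk_comp {a b : List ℕ} (hb : ∀ x ∈ b, 1 ≤ x) :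
    stk [] (rgfComp a b) = (stk [] b).map (· + nLetters a) ++ stk [] a := by
  rw [rgfComp, stk_append, stk_shift (fun y hy => stk_le hy) hb]

lemma stk_ne_nil {s w : List ℕ} (h : w ≠ []) : stk s w ≠ [] := by
  rcases List.eq_nil_or_concat w with rfl | ⟨w, x, rfl⟩
  · exact absurd rfl h
  · simp [stk_concat]

lemma connected_iff {w : List ℕ} (h : Valid [] 0 w) :
    Connected w ↔ (stk [] w).length = 1 := by
  constructor
  · rintro ⟨h1, h2⟩
    have h3 := stk_ne_nil (s := []) h1
    have hsort := stk_sorted [] w List.Pairwise.nil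
    match hst : stk [] w with
    | [] => exact absurd hst h3
    | [x] => rfl
    | y :: z :: r =>
      exfalso
      rw [hst] at hsort
      have hyz : z < y := (List.pairwise_cons.1 hsort).1 z (by simp)
      obtain ⟨a, b, rfl, ha, hb⟩ := open_split h (y := y) (by simp [hst])
      have hz : z ∈ a ++ y :: b := by
        have : z ∈ stk [] (a ++ y :: b) := by simp [hst]
        simpa using stk_subset _ _ this
      have hza : z ∈ a := by
        simp only [List.mem_append, List.mem_cons] at hz
        rcases hz with hz | hz | hz
        · exact hz
        · omega
        · have := hb z hz; omega
      have hv := (valid_append ..).1 h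
      have hya : y = nLetters a + 1 := by
        rcases ((valid_cons ..).1 hv.2).1 with h | h
        · simpa using h
        · have := ha y (by simpa using stk_subset _ _ h)
          omega
      have hw : a ++ y :: b = rgfComp a ((y :: b).map (· - nLetters a)) := by
        rw [rgfComp, List.map_map]
        congr 1
        conv_lhs => rw [← List.map_id (y :: b)]
        apply List.map_congr_left
        intro x hx
        have : y ≤ x := by
          rcases List.mem_cons.1 hx with rfl | hx
          · exact le_rfl
          · exact hb x hx
        simp; omega
      have hpos : ∀ x ∈ (y :: b).map (· - nLetters a), 1 ≤ x := by
        intro x hx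
        obtain ⟨x', hx', rfl⟩ := List.mem_map.1 hx
        have : y ≤ x' := by
          rcases List.mem_cons.1 hx' with rfl | hx'
          · exact le_rfl
          · exact hb x' hx'
        omega
      rw [hw, valid_comp hpos] at h
      refine h2 ⟨a, _, ((valid_iff _).1 h.1).1, ((valid_iff _).1 h.2).1, ?_, by simp, hw⟩
      exact List.ne_nil_of_mem hza
  · intro h1
    refine ⟨?_, ?_⟩
    · rintro rfl; simp at h1
    · rintro ⟨a, b, ha, hb, ha0, hb0, rfl⟩
      rw [stk_comp hb.1] at h1
      have e1 := List.length_pos_iff.2 (stk_ne_nil (s := []) ha0)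
      have e2 := List.length_pos_iff.2 (stk_ne_nil (s := []) hb0)
      simp at h1
      omega

lemma foldr_pos {l : List (List ℕ)} (hl : ∀ c ∈ l, ∀ x ∈ c, 1 ≤ x) :
    ∀ x ∈ l.foldr rgfComp [], 1 ≤ x := by
  induction l with
  | nil => simp
  | cons c l ih =>
    intro x hx
    simp only [List.foldr_cons, rgfComp, List.mem_append, List.mem_map] at hx
    rcases hx with hx | ⟨y, hy, rfl⟩
    · exact hl c (by simp) x hx
    · have := ih (fun c hc => hl c (by simp [hc])) y hy
      omega

lemma foldr_comp_append (l l' : List (List ℕ)) :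
    (l ++ l').foldr rgfComp [] = rgfComp (l.foldr rgfComp []) (l'.foldr rgfComp []) := by
  induction l with
  | nil => simp
  | cons c l ih => simp only [List.cons_append, List.foldr_cons, ih, comp_assoc]

/-- valid and connected -/
def Atom (c : List ℕ) : Prop := Valid [] 0 c ∧ (stk [] c).length = 1

lemma Atom.pos {c : List ℕ} (h : Atom c) : ∀ x ∈ c, 1 ≤ x := valid_pos h.1 (by simp)

lemma valid_foldr {l : List (List ℕ)} (hl : ∀ c ∈ l, Atom c) :
    Valid [] 0 (l.foldr rgfComp []) ∧ (stk [] (l.foldr rgfComp [])).length = l.length := by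
  induction l with
  | nil => simp
  | cons c l ih =>
    obtain ⟨h1, h2⟩ := ih (fun c hc => hl c (by simp [hc]))
    have hp := valid_pos h1 (by simp)
    have hc := hl c (by simp)
    rw [List.foldr_cons, valid_comp hp, stk_comp hp]
    refine ⟨⟨hc.1, h1⟩, ?_⟩
    simp [h2, hc.2]

lemma exists_comps (n : ℕ) : ∀ w : List ℕ, w.length ≤ n → Valid [] 0 w →
    ∃ l : List (List ℕ), (∀ c ∈ l, Atom c) ∧ w = l.foldr rgfComp [] := by
  induction n with
  | zero =>
    intro w hw _
    exact ⟨[], by simp, by simpa using hw⟩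
  | succ n ih =>
    intro w hw hv
    by_cases h0 : w = []
    · exact ⟨[], by simp, by simp [h0]⟩
    by_cases hc : Connected w
    · exact ⟨[w], by simpa using ⟨hv, (connected_iff hv).1 hc⟩, by simp⟩
    · unfold Connected at hc
      push Not at hc
      obtain ⟨a, b, ha, hb, ha0, hb0, rfl⟩ := hc h0
      rw [valid_comp hb.1] at hv
      have e1 := List.length_pos_iff.2 ha0
      have e2 := List.length_pos_iff.2 hb0
      simp [rgfComp] at hw
      obtain ⟨l1, h1, e1⟩ := ih a (by omega) hv.1
      obtain ⟨l2, h2, e2⟩ := ih b (by omega) hv.2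
      refine ⟨l1 ++ l2, ?_, ?_⟩
      · intro c hc
        rcases List.mem_append.1 hc with hc | hc
        · exact h1 c hc
        · exact h2 c hc
      · rw [foldr_comp_append, ← e1, ← e2]

lemma atoms_of_valid {l : List (List ℕ)} (hl : ∀ c ∈ l, IsRGF c ∧ Connected c)
    (hv : Valid [] 0 (l.foldr rgfComp [])) : ∀ c ∈ l, Atom c := by
  induction l with
  | nil => simp
  | cons c l ih =>
    rw [List.foldr_cons, valid_comp (foldr_pos fun c hc => (hl c (by simp [hc])).1.1)] at hv
    intro d hd
    rcases List.mem_cons.1 hd with rfl | hd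
    · exact ⟨hv.1, (connected_iff hv.1).1 (hl d (by simp)).2⟩
    · exact ih (fun c hc => hl c (by simp [hc])) hv.2 d hd

lemma hasComponents_iff {w : List ℕ} (hv : Valid [] 0 w) (p : ℕ) :
    HasComponents w p ↔ (stk [] w).length = p := by
  constructor
  · rintro ⟨l, rfl, hl, rfl⟩
    exact (valid_foldr (atoms_of_valid hl hv)).2
  · rintro rfl
    obtain ⟨l, hl, rfl⟩ := exists_comps _ w le_rfl hv
    exact ⟨l, (valid_foldr hl).2.symm,
      fun c hc => ⟨((valid_iff c).1 (hl c hc).1).1, (connected_iff (hl c hc).1).2 (hl c hc).2⟩, rfl⟩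

/-- valid words -/
abbrev X := {w : List ℕ // Valid [] 0 w}

/-- length and number of components -/
def cc (x : X) : ℕ × ℕ := (x.1.length, (stk [] x.1).length)

lemma ncCount_eq (n p : ℕ) (σ : List ℕ) :
    ncCount n p σ = Nat.card {x : X // cc x = (n, p) ∧ ¬ PatContains x.1 σ} := by
  unfold ncCount
  rw [← Nat.card_coe_set_eq]
  refine Nat.card_congr ⟨fun x => ⟨⟨x.1, (valid_iff _).2 ⟨x.2.1, x.2.2.1⟩⟩, ?_, x.2.2.2.2.1⟩,
    fun x => ⟨x.1.1, ?_⟩, fun _ => rfl, fun _ => rfl⟩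
  · obtain ⟨x, h1, h2, h3, h4, h5⟩ := x
    have hv := (valid_iff x).2 ⟨h1, h2⟩
    rw [hasComponents_iff hv] at h5
    simp only [cc, h3, h5]
  · obtain ⟨⟨x, hv⟩, h1, h2⟩ := x
    simp only [cc, Prod.mk.injEq] at h1
    exact ⟨((valid_iff x).1 hv).1, ((valid_iff x).1 hv).2, h1.1, h2, (hasComponents_iff hv p).2 h1.2⟩

lemma valid_max {s w : List ℕ} {M : ℕ} (h : Valid s M w) (hs : ∀ x ∈ s, x ≤ M) :
    ∀ x ∈ w, x ≤ M + w.length := by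
  induction w generalizing s M with
  | nil => simp
  | cons x w ih =>
    rw [valid_cons] at h
    have hx : x ≤ M + 1 := by
      rcases h.1 with h | h
      · omega
      · have := hs x h; omega
    intro y hy
    rcases List.mem_cons.1 hy with rfl | hy
    · simp; omega
    · have := ih h.2 (by
        intro z hz
        rcases List.mem_cons.1 hz with rfl | hz
        · omega
        · have := hs z (List.mem_filter.1 hz).1; omega) y hy
      simp; omega

instance fin_fiber (c : ℕ × ℕ) : Finite {x : X // cc x = c} := by
  obtain ⟨n, p⟩ := c
  have hf : (Set.range fun g : Fin n → Fin (n + 1) => List.ofFn (fun i => (g i : ℕ))).Finite :=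
    Set.finite_range _
  have : Finite (Set.range fun g : Fin n → Fin (n + 1) => List.ofFn (fun i => (g i : ℕ))) := hf
  refine Finite.of_injective (β := (Set.range fun g : Fin n → Fin (n + 1) =>
    List.ofFn (fun i => (g i : ℕ)))) (fun x => ⟨x.1.1, ?_⟩) ?_
  · obtain ⟨⟨x, hv⟩, h⟩ := x
    simp only [cc, Prod.mk.injEq] at h
    obtain ⟨rfl, -⟩ := h
    refine ⟨fun i => ⟨x[i], ?_⟩, ?_⟩
    · have := valid_max hv (by simp) x[i] (List.getElem_mem _)
      simp only [Fin.getElem_fin] at *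
      omega
    · simp
  · intro x y h
    simp at h
    exact Subtype.ext (Subtype.ext h)

lemma cc_iff (ρ ρ' : List ℕ) : ccEquiv ρ ρ' ↔ ∃ e : X ≃ X, (∀ x, cc (e x) = cc x) ∧
    ∀ x, PatContains (e x).1 ρ' ↔ PatContains x.1 ρ := by
  constructor
  · intro h
    have fe : ∀ c : (ℕ × ℕ) × Prop, Nonempty
        ({x : X // (cc x, PatContains x.1 ρ) = c} ≃ {x : X // (cc x, PatContains x.1 ρ') = c}) := by
      rintro ⟨⟨n, p⟩, P⟩
      have h1 := h n p
      rw [ncCount_eq, ncCount_eq] at h1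
      have fin : ∀ Q : X → Prop, Finite {x : X // cc x = (n, p) ∧ Q x} := fun Q =>
        Finite.of_injective (β := {x : X // cc x = (n, p)}) (fun x => ⟨x.1, x.2.1⟩)
          (fun x y h => Subtype.ext (by simpa using h))
      have := fin
      have tot : ∀ Q : X → Prop, Nat.card {x : X // cc x = (n, p) ∧ Q x} +
          Nat.card {x : X // cc x = (n, p) ∧ ¬ Q x} = Nat.card {x : X // cc x = (n, p)} := by
        intro Q
        classical
        rw [← Nat.card_sum]
        refine Nat.card_congr ((Equiv.sumCongr
          (Equiv.subtypeSubtypeEquivSubtypeInter _ _).symm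
          (Equiv.subtypeSubtypeEquivSubtypeInter _ _).symm).trans
          (Equiv.sumCompl (fun x : {x : X // cc x = (n, p)} => Q x.1)))
      by_cases hP : P
      · have t1 := tot (fun x => PatContains x.1 ρ)
        have t2 := tot (fun x => PatContains x.1 ρ')
        have e : Nat.card {x : X // cc x = (n, p) ∧ PatContains x.1 ρ} =
          Nat.card {x : X // cc x = (n, p) ∧ PatContains x.1 ρ'} := by omega
        have e2 := Finite.card_eq.1 e
        simpa [hP] using e2
      · have e2 := Finite.card_eq.1 h1
        simpa [hP] using e2
    refine ⟨Equiv.ofFiberEquiv (f := fun x : X => (cc x, PatContains x.1 ρ))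
      (g := fun x : X => (cc x, PatContains x.1 ρ')) fun c => (fe c).some, ?_, ?_⟩
    · intro x
      exact congrArg Prod.fst (Equiv.ofFiberEquiv_map (f := fun x : X => (cc x, PatContains x.1 ρ))
        (g := fun x : X => (cc x, PatContains x.1 ρ')) (fun c => (fe c).some) x)
    · intro x
      exact (congrArg Prod.snd (Equiv.ofFiberEquiv_map (f := fun x : X => (cc x, PatContains x.1 ρ))
        (g := fun x : X => (cc x, PatContains x.1 ρ')) (fun c => (fe c).some) x)).to_iff
  · rintro ⟨e, h1, h2⟩ n p
    rw [ncCount_eq, ncCount_eq]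
    refine Nat.card_congr (e.subtypeEquiv fun x => ?_)
    rw [h1, h2]

lemma transfer {K : Type} (R : X → K → X → Prop) (e : X ≃ X) (he : ∀ x, cc (e x) = cc x)
    (tot : ∀ y, ∃ k x, R y k x)
    (uniq : ∀ y k x k2 x2, R y k x → R y k2 x2 → k = k2 ∧ x = x2)
    (inj : ∀ y y2 k x, R y k x → R y2 k x → y = y2)
    (clos : ∀ y k x x', R y k x → cc x' = cc x → ∃ y', R y' k x' ∧ cc y' = cc y) :
    ∃ E : X ≃ X, (∀ y, cc (E y) = cc y) ∧ ∀ y, ∃ k x, R y k x ∧ R (E y) k (e x) := by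
  have half : ∀ e : X ≃ X, (∀ x, cc (e x) = cc x) → ∃ F : X → X, (∀ y, cc (F y) = cc y) ∧
      ∀ y k x, R y k x → R (F y) k (e x) := by
    intro e he
    choose k x hk using tot
    choose F hF using fun y => clos y (k y) (x y) (e (x y)) (hk y) (he _)
    refine ⟨F, fun y => (hF y).2, fun y k' x' h => ?_⟩
    obtain ⟨rfl, rfl⟩ := uniq _ _ _ _ _ h (hk y)
    exact (hF y).1
  obtain ⟨F, hF1, hF2⟩ := half e he
  obtain ⟨G, hG1, hG2⟩ := half e.symm (fun x => by rw [← he, e.apply_symm_apply])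
  refine ⟨⟨F, G, fun y => ?_, fun y => ?_⟩, hF1, fun y => by
    obtain ⟨k, x, h⟩ := tot y
    exact ⟨k, x, h, hF2 _ _ _ h⟩⟩
  · obtain ⟨k, x, h⟩ := tot y
    have := hG2 _ _ _ (hF2 _ _ _ h)
    rw [e.symm_apply_apply] at this
    exact inj _ _ _ _ this h
  · obtain ⟨k, x, h⟩ := tot y
    have := hF2 _ _ _ (hG2 _ _ _ h)
    rw [e.apply_symm_apply] at this
    exact inj _ _ _ _ this h

/-! ### Atoms and assembling -/

lemma one_mem_stk {s w : List ℕ} (hs : 1 ∈ s) (hw : ∀ x ∈ w, 1 ≤ x) : 1 ∈ stk s w := by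
  induction w generalizing s with
  | nil => exact hs
  | cons x w ih =>
    refine ih ?_ (fun y hy => hw y (by simp [hy]))
    have := hw x (by simp)
    by_cases h : x = 1
    · simp [h]
    · simp [hs]; omega

lemma Atom.stk_eq {c : List ℕ} (h : Atom c) : stk [] c = [1] := by
  have hp := h.pos
  obtain ⟨h1, h2⟩ := h
  cases c with
  | nil => simp at h2
  | cons x c =>
    have hx : x = 1 := by simpa using ((valid_cons ..).1 h1).1
    have : 1 ∈ stk [] (x :: c) := by
      rw [stk_cons]
      exact one_mem_stk (by simp [hx]) (fun y hy => hp y (by simp [hy]))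
    obtain ⟨y, hy⟩ := List.length_eq_one_iff.1 h2
    rw [hy] at this ⊢
    simp at this
    simp [this]

lemma Atom.head {c : List ℕ} (h : Atom c) : ∃ r, c = 1 :: r := by
  obtain ⟨h1, h2⟩ := h
  cases c with
  | nil => simp at h2
  | cons x c =>
    have hx : x = 1 := by simpa using ((valid_cons ..).1 h1).1
    exact ⟨c, by rw [hx]⟩

lemma Atom.last {c : List ℕ} (h : Atom c) : ∃ r, c = r ++ [1] := by
  have h1 := h.stk_eq
  rcases List.eq_nil_or_concat c with rfl | ⟨r, x, rfl⟩
  · simp at h1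
  · rw [List.concat_eq_append, stk_concat] at h1
    simp at h1
    exact ⟨r, by rw [h1.1]; simp⟩

/-- Assemble a suffix from a skeleton `t` (old letters and marks) and a list of atoms. -/
def asm : ℕ → List (Option ℕ) → List (List ℕ) → List ℕ
  | _, [], _ => []
  | M, some d :: t, l => d :: asm M t l
  | _, none :: _, [] => []
  | M, none :: t, c :: l => c.map (· + M) ++ asm (M + nLetters c) t l

lemma asm_mem {M0 M : ℕ} {t : List (Option ℕ)} {l : List (List ℕ)} (hM : M0 ≤ M)
    (ht : ∀ d, some d ∈ t → d ≤ M0) (hl : ∀ c ∈ l, Atom c) :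
    ∀ y ∈ asm M t l, y ≤ M0 ∨ M < y := by
  induction t generalizing M l with
  | nil => simp [asm]
  | cons o t ih =>
    have ht' : ∀ d, some d ∈ t → d ≤ M0 := fun d hd => ht d (by simp [hd])
    cases o with
    | some d =>
      intro y hy
      simp only [asm, List.mem_cons] at hy
      rcases hy with rfl | hy
      · exact Or.inl (ht y (by simp))
      · exact ih hM ht' hl y hy
    | none =>
      cases l with
      | nil => simp [asm]
      | cons c l =>
        intro y hy
        simp only [asm, List.mem_append, List.mem_map] at hy
        rcases hy with ⟨z, hz, rfl⟩ | hy
        · have := (hl c (by simp)).pos z hz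
          omega
        · have := ih (M := M + nLetters c) (by omega) ht' (fun c hc => hl c (by simp [hc])) y hy
          omega

lemma asm_uniq {M0 M : ℕ} {t t' : List (Option ℕ)} {l l' : List (List ℕ)} (hM : M0 ≤ M)
    (ht : ∀ d, some d ∈ t → d ≤ M0) (ht' : ∀ d, some d ∈ t' → d ≤ M0)
    (hl : ∀ c ∈ l, Atom c) (hl' : ∀ c ∈ l', Atom c)
    (hc : t.count none = l.length) (hc' : t'.count none = l'.length)
    (h : asm M t l = asm M t' l') : t = t' ∧ l = l' := by
  induction t generalizing M l t' l' with
  | nil =>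
    simp at hc
    have hl0 : l = [] := by simpa using hc.symm
    subst hl0
    match t', l' with
    | [], l' =>
      simp at hc'
      exact ⟨rfl, by simpa using hc'.symm⟩
    | some d :: t', l' => simp [asm] at h
    | none :: t', [] => simp at hc'
    | none :: t', c :: l' =>
      obtain ⟨r, rfl⟩ := (hl' c (by simp)).head
      simp [asm] at h
  | cons o t ih =>
    cases o with
    | some d =>
      have hd := ht d (by simp)
      match t', l' with
      | [], l' => simp [asm] at h
      | some d' :: t', l' =>
        simp [asm] at h
        have := ih hM (fun d hd => ht d (by simp [hd])) (fun d hd => ht' d (by simp [hd])) hl hl'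
          (by simpa using hc) (by simpa using hc') h.2
        simp [h.1, this.1, this.2]
      | none :: t', [] => simp at hc'
      | none :: t', c :: l' =>
        obtain ⟨r, rfl⟩ := (hl' c (by simp)).head
        simp [asm] at h
        omega
    | none =>
      cases l with
      | nil => simp at hc
      | cons c l =>
        have hcA := hl c (by simp)
        match t', l' with
        | [], l' =>
          obtain ⟨r, rfl⟩ := hcA.head
          simp [asm] at h
        | some d' :: t', l' =>
          obtain ⟨r, rfl⟩ := hcA.head
          have hd := ht' d' (by simp)
          simp [asm] at h
          omega
        | none :: t', [] => simp at hc'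
        | none :: t', c' :: l' =>
          have hcA' := hl' c' (by simp)
          have hinj : Function.Injective (fun x : List ℕ => x.map (· + M)) :=
            List.map_injective_iff.2 (fun a b h => by simpa using h)
          -- general non-overlap
          have aux : ∀ (c c' : List ℕ) (A : List ℕ) (A' : List ℕ), Atom c → Atom c' →
              (M + 1 ∉ A) → ∀ a, c'.map (· + M) = c.map (· + M) ++ a → A = a ++ A' → a = [] := by
            intro c c' A A' hcA hcA' hA a h1 h2
            rcases List.eq_nil_or_concat a with h0 | ⟨r, x, rfl⟩
            · exact h0
            · exfalso
              rw [List.concat_eq_append] at h1 h2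
              obtain ⟨q, rfl⟩ := hcA'.last
              rw [List.map_append, ← List.append_assoc] at h1
              have := (List.append_inj' h1 rfl).2
              simp at this
              apply hA
              rw [h2]
              simp; omega
          have hno : ∀ (c : List ℕ) (t : List (Option ℕ)) (l : List (List ℕ)), Atom c →
              (∀ d, some d ∈ t → d ≤ M0) → (∀ c ∈ l, Atom c) →
              M + 1 ∉ asm (M + nLetters c) t l := by
            intro c t l hc ht hl hm
            have h1 := asm_mem (show M0 ≤ M + nLetters c by omega) ht hl _ hm
            obtain ⟨r, rfl⟩ := hc.head
            simp at h1
            omega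
          have htt : ∀ d, some d ∈ t → d ≤ M0 := fun d hd => ht d (by simp [hd])
          have htt' : ∀ d, some d ∈ t' → d ≤ M0 := fun d hd => ht' d (by simp [hd])
          have hll : ∀ c ∈ l, Atom c := fun d hd => hl d (by simp [hd])
          have hll' : ∀ c ∈ l', Atom c := fun d hd => hl' d (by simp [hd])
          simp only [asm] at h
          have hcc : c = c' := by
            rcases List.append_eq_append_iff.1 h with ⟨a, h1, h2⟩ | ⟨a, h1, h2⟩
            · have := aux c c' _ _ hcA hcA' (hno c t l hcA htt hll) a h1 h2
              subst this
              rw [List.append_nil] at h1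
              exact (hinj h1).symm
            · have := aux c' c _ _ hcA' hcA (hno c' t' l' hcA' htt' hll') a h1 h2
              subst this
              rw [List.append_nil] at h1
              exact hinj h1
          subst hcc
          have h2 := List.append_cancel_left h
          have := ih (M := M + nLetters c) (by omega) htt htt' hll hll' (by simpa using hc)
            (by simpa using hc') h2
          simp [this.1, this.2]

lemma asm_filter {M0 M : ℕ} {t : List (Option ℕ)} {l : List (List ℕ)} (hM : M0 ≤ M)
    (ht : ∀ d, some d ∈ t → d ≤ M0) (hl : ∀ c ∈ l, Atom c) (hc : t.count none = l.length) :
    (asm M t l).filter (M0 < ·) = (l.foldr rgfComp []).map (· + M) := by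
  induction t generalizing M l with
  | nil =>
    simp at hc
    have hl0 : l = [] := by simpa using hc.symm
    simp [hl0, asm]
  | cons o t ih =>
    have ht' : ∀ d, some d ∈ t → d ≤ M0 := fun d hd => ht d (by simp [hd])
    cases o with
    | some d =>
      have hd := ht d (by simp)
      rw [asm, List.filter_cons_of_neg (by simpa using hd), ih hM ht' hl (by simpa using hc)]
    | none =>
      cases l with
      | nil => simp at hc
      | cons c l =>
        rw [asm, List.filter_append, ih (M := M + nLetters c) (by omega) ht'
          (fun c hc => hl c (by simp [hc])) (by simpa using hc), List.filter_eq_self.2]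
        · simp only [List.foldr_cons, rgfComp, List.map_append, List.map_map]
          congr 1
          apply List.map_congr_left
          intro x _
          simp; omega
        · intro y hy
          obtain ⟨z, hz, rfl⟩ := List.mem_map.1 hy
          have := (hl c (by simp)).pos z hz
          simp; omega

lemma asm_length {M : ℕ} {t : List (Option ℕ)} {l : List (List ℕ)}
    (hc : t.count none = l.length) :
    (asm M t l).length + t.count none = t.length + (l.foldr rgfComp []).length := by
  induction t generalizing M l with
  | nil =>
    simp at hc
    have hl0 : l = [] := by simpa using hc.symm
    simp [hl0, asm]
  | cons o t ih =>
    cases o with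
    | some d =>
      have := ih (M := M) (l := l) (by simpa using hc)
      simp [asm]; omega
    | none =>
      cases l with
      | nil => simp at hc
      | cons c l =>
        have := ih (M := M + nLetters c) (l := l) (by simpa using hc)
        simp [asm, rgfComp]; omega

lemma asm_valid {M0 M M' : ℕ} {t : List (Option ℕ)} {l l' : List (List ℕ)}
    {s0 T T' : List ℕ} (hM : M0 ≤ M) (hM' : M0 ≤ M')
    (ht : ∀ d, some d ∈ t → d ≤ M0) (hl : ∀ c ∈ l, Atom c) (hl' : ∀ c ∈ l', Atom c)
    (hc : t.count none = l.length) (hc' : t.count none = l'.length)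
    (hs : ∀ y ∈ s0, y ≤ M0) (hT : ∀ y ∈ T, M0 < y ∧ y ≤ M) (hT' : ∀ y ∈ T', M0 < y ∧ y ≤ M')
    (hTT : T.length = T'.length) (h : Valid (T ++ s0) M (asm M t l)) :
    Valid (T' ++ s0) M' (asm M' t l') ∧
      (stk (T ++ s0) (asm M t l)).length = (stk (T' ++ s0) (asm M' t l')).length := by
  induction t generalizing M M' l l' s0 T T' with
  | nil => simp [asm, hTT]
  | cons o t ih =>
    have htt : ∀ d, some d ∈ t → d ≤ M0 := fun d hd => ht d (by simp [hd])
    cases o with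
    | some d =>
      have hd := ht d (by simp)
      have fil : ∀ T : List ℕ, (∀ y ∈ T, M0 < y) →
          (T ++ s0).filter (· < d) = s0.filter (· < d) := by
        intro T hT
        rw [List.filter_append, List.filter_eq_nil_iff.2, List.nil_append]
        intro y hy
        have := hT y hy
        simp; omega
      rw [asm, valid_cons, fil T fun y hy => (hT y hy).1] at h
      rw [asm, asm, valid_cons, stk_cons, stk_cons, fil T fun y hy => (hT y hy).1,
        fil T' fun y hy => (hT' y hy).1]
      rw [max_eq_left (by omega)] at h ⊢
      have hds : d ∈ s0 := by
        rcases h.1 with h | h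
        · omega
        · rcases List.mem_append.1 h with h | h
          · have := hT d h; omega
          · exact h
      have := ih (T := []) (T' := []) (s0 := d :: s0.filter (· < d)) hM hM' htt hl hl'
        (by simpa using hc) (by simpa using hc') (by
          intro y hy
          rcases List.mem_cons.1 hy with rfl | hy
          · exact hd
          · exact hs y (List.mem_filter.1 hy).1) (by simp) (by simp) rfl h.2
      exact ⟨⟨Or.inr (by simp [hds]), this.1⟩, this.2⟩
    | none =>
      match l, l' with
      | [], _ => simp at hc
      | _, [] => simp at hc'
      | c :: l, c' :: l' =>
        have step : ∀ (M : ℕ) (T : List ℕ) (c A : List ℕ), M0 ≤ M → (∀ y ∈ T, M0 < y ∧ y ≤ M) →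
            Atom c → (Valid (T ++ s0) M (c.map (· + M) ++ A) ↔
              Valid (((M + 1) :: T) ++ s0) (M + nLetters c) A) ∧
              stk (T ++ s0) (c.map (· + M) ++ A) = stk (((M + 1) :: T) ++ s0) A := by
          intro M T c A hM hT hc
          have hb : ∀ y ∈ T ++ s0, y ≤ M := by
            intro y hy
            rcases List.mem_append.1 hy with h | h
            · exact (hT y h).2
            · exact (hs y h).trans hM
          have hne : c ≠ [] := by
            obtain ⟨r, rfl⟩ := hc.head; simp
          rw [valid_append, stk_append, stk_shift hb hc.pos, hc.stk_eq, valid_shift hb hc.pos,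
            nLetters_map_add hne]
          have e1 : max M (nLetters c + M) = M + nLetters c := by omega
          rw [e1]
          have e2 : [1].map (· + M) ++ (T ++ s0) = ((M + 1) :: T) ++ s0 := by
            simp [add_comm]
          rw [e2]
          exact ⟨⟨fun h => h.2, fun h => ⟨hc.1, h⟩⟩, rfl⟩
        have hA := hl c (by simp)
        have hA' := hl' c' (by simp)
        have n1 : 1 ≤ nLetters c := by obtain ⟨r, rfl⟩ := hA.head; simp
        have n1' : 1 ≤ nLetters c' := by obtain ⟨r, rfl⟩ := hA'.head; simp
        rw [asm, (step M T c _ hM hT hA).1] at h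
        rw [asm, asm, (step M T c _ hM hT hA).2, (step M' T' c' _ hM' hT' hA').2,
          (step M' T' c' _ hM' hT' hA').1]
        refine ih (by omega) (by omega) htt (fun c hc => hl c (by simp [hc]))
          (fun c hc => hl' c (by simp [hc])) (by simpa using hc) (by simpa using hc') hs
          ?_ ?_ (by simp [hTT]) h
        · intro y hy
          rcases List.mem_cons.1 hy with rfl | hy
          · omega
          · have := hT y hy; omega
        · intro y hy
          rcases List.mem_cons.1 hy with rfl | hy
          · omega
          · have := hT' y hy; omega

lemma exists_last_split {y : ℕ} {S : List ℕ} (h : y ∈ S) : ∃ a b, S = a ++ y :: b ∧ y ∉ b := by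
  induction S with
  | nil => simp at h
  | cons x S ih =>
    by_cases hS : y ∈ S
    · obtain ⟨a, b, rfl, hb⟩ := ih hS
      exact ⟨x :: a, b, rfl, hb⟩
    · have : y = x := by simpa [hS] using h
      exact ⟨[], S, by rw [this]; rfl, hS⟩

lemma exists_first_split {y : ℕ} {S : List ℕ} (h : y ∈ S) : ∃ a b, S = a ++ y :: b ∧ y ∉ a := by
  obtain ⟨a, b, h1, h2⟩ := exists_last_split (y := y) (S := S.reverse) (by simpa using h)
  refine ⟨b.reverse, a.reverse, ?_, by simpa using h2⟩
  rw [← List.reverse_reverse S, h1]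
  simp

lemma asm_exists (n : ℕ) {M0 : ℕ} : ∀ (S : List ℕ) (M : ℕ) (s0 T : List ℕ), S.length ≤ n →
    M0 ≤ M → (∀ y ∈ s0, y ≤ M0) → (∀ y ∈ T, M0 < y ∧ y ≤ M) →
    (∀ x ∈ S, x ≤ M0 ∨ M < x) → Valid (T ++ s0) M S →
    ∃ t l, (∀ d, some d ∈ t → d ≤ M0) ∧ (∀ c ∈ l, Atom c) ∧ t.count none = l.length ∧
      S = asm M t l := by
  induction n with
  | zero =>
    intro S M s0 T hS _ _ _ _ _
    exact ⟨[], [], by simp, by simp, by simp, by simpa [asm] using hS⟩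
  | succ n ih =>
    intro S M s0 T hS hM hs hT hx hv
    cases S with
    | nil => exact ⟨[], [], by simp, by simp, by simp, by simp [asm]⟩
    | cons x S =>
      simp at hS
      by_cases hxM : x ≤ M0
      · rw [valid_cons, List.filter_append, (List.filter_eq_nil_iff (l := T)).2 (by
          intro y hy
          have := hT y hy
          simp; omega), max_eq_left (by omega)] at hv
        obtain ⟨t, l, h1, h2, h3, h4⟩ := ih S M (x :: s0.filter (· < x)) [] hS hM (by
          intro y hy
          rcases List.mem_cons.1 hy with rfl | hy
          · exact hxM
          · exact hs y (List.mem_filter.1 hy).1) (by simp) (fun y hy => hx y (by simp [hy])) hv.2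
        refine ⟨some x :: t, l, ?_, h2, by simpa using h3, by simp [asm, h4]⟩
        intro d hd
        rcases List.mem_cons.1 hd with hd | hd
        · simp at hd; omega
        · exact h1 d hd
      · have hb : ∀ y ∈ T ++ s0, y ≤ M := by
          intro y hy
          rcases List.mem_append.1 hy with h | h
          · exact (hT y h).2
          · exact (hs y h).trans hM
        have hxM1 : x = M + 1 := by
          rcases ((valid_cons ..).1 hv).1 with h | h
          · exact h
          · have := hb x h
            have := hx x (by simp)
            omega
        subst hxM1
        obtain ⟨a, b, hab, hbn⟩ := exists_last_split (y := M + 1) (S := (M + 1) :: S) (by simp)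
        -- letters of `a` are > M
        have ha : ∀ z ∈ a, M < z := by
          intro z hz
          by_contra hzM
          push Not at hzM
          obtain ⟨α, β, rfl⟩ := List.append_of_mem hz
          have hα : M + 1 ∈ α := by
            cases α with
            | nil => simp at hab; omega
            | cons q α => simp at hab; simp [hab.1]
          rw [hab] at hv
          have e : α ++ z :: β ++ (M + 1) :: b = (α ++ [z]) ++ (β ++ (M + 1) :: b) := by simp
          rw [e, valid_append] at hv
          rcases valid_mem hv.2 (y := M + 1) (by simp) with h | h
          · rw [stk_concat] at h
            simp at h; omega
          · have := le_nLetters hα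
            simp at h; omega
        have hCpos : ∀ z ∈ a ++ [M + 1], M < z := by
          intro z hz
          rcases List.mem_append.1 hz with h | h
          · exact ha z h
          · simp at h; omega
        obtain ⟨c, hc⟩ : ∃ c : List ℕ, a ++ [M + 1] = c.map (· + M) := by
          refine ⟨(a ++ [M + 1]).map (· - M), ?_⟩
          rw [List.map_map]
          conv_lhs => rw [← List.map_id (a ++ [M + 1])]
          apply List.map_congr_left
          intro z hz
          have := hCpos z hz
          simp; omega
        have hcpos : ∀ z ∈ c, 1 ≤ z := by
          intro z hz
          have := hCpos (z + M) (by rw [hc]; exact List.mem_map_of_mem hz)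
          omega
        have hS2 : (M + 1) :: S = c.map (· + M) ++ b := by
          rw [hab, ← hc]; simp
        have hclast : ∃ r, c = r ++ [1] := by
          rcases List.eq_nil_or_concat c with rfl | ⟨r, q, rfl⟩
          · simp at hc
          · rw [List.concat_eq_append, List.map_append] at hc
            have := (List.append_inj' hc rfl).2
            simp at this
            exact ⟨r, by simp; omega⟩
        have hcne : c ≠ [] := by obtain ⟨r, rfl⟩ := hclast; simp
        rw [hS2, valid_append, valid_shift hb hcpos, stk_shift hb hcpos, nLetters_map_add hcne] at hv
        have hst : stk [] c = [1] := by
          obtain ⟨r, rfl⟩ := hclast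
          rw [stk_concat]
          simp
          intro y hy
          exact Nat.pos_iff_ne_zero.1 (hcpos y (by simp [show y ∈ r by simpa using stk_subset _ _ hy]))
        have hA : Atom c := ⟨hv.1, by simp [hst]⟩
        have hv2 := hv.2
        rw [hst] at hv2
        have n1 : 1 ≤ nLetters c := by obtain ⟨r, rfl⟩ := hA.head; simp
        have e2 : [1].map (· + M) ++ (T ++ s0) = ((M + 1) :: T) ++ s0 := by
          simp [add_comm]
        rw [e2, show max M (nLetters c + M) = M + nLetters c by omega] at hv2
        have hlen : b.length ≤ n := by
          have := congrArg List.length hS2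
          have := List.length_pos_iff.2 hcne
          simp at *; omega
        obtain ⟨t, l, h1, h2, h3, h4⟩ := ih b (M + nLetters c) s0 ((M + 1) :: T) hlen (by omega) hs
          (by
            intro y hy
            rcases List.mem_cons.1 hy with rfl | hy
            · omega
            · have := hT y hy; omega)
          (by
            intro z hz
            rcases valid_mem hv2 hz with h | h
            · have hz1 := hx z (by rw [hS2]; simp [hz])
              rcases List.mem_append.1 h with h | h
              · rcases List.mem_cons.1 h with rfl | h
                · exact absurd hz hbn
                · have := hT z h; omega
              · exact Or.inl (hs z h)
            · exact Or.inr h) hv2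
        refine ⟨none :: t, c :: l, ?_, ?_, by simpa using h3, by rw [hS2, asm, h4]⟩
        · intro d hd
          simp at hd
          exact h1 d hd
        · intro d hd
          rcases List.mem_cons.1 hd with rfl | hd
          · exact hA
          · exact h2 d hd

/-! ### Prepending a pattern -/

lemma contains_prepend {Q S σ ρ : List ℕ} (hv : Valid [] 0 (Q ++ S))
    (hmin : ∀ k < Q.length, ¬ PatContains (Q.take k) σ) (hQ : PatContains Q σ ∨ S = [])
    (hρ : ∀ x ∈ ρ, 1 ≤ x) :
    PatContains (Q ++ S) (rgfComp σ ρ) ↔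
      PatContains Q σ ∧ PatContains (S.filter (nLetters Q < ·)) ρ := by
  rw [contains_comp hρ]
  constructor
  · rintro ⟨s1, s2, hs, h1, h2, h3⟩
    have hc : PatContains Q σ := by
      rcases hQ with hQ | rfl
      · exact hQ
      · rw [List.append_nil] at hs
        exact ⟨s1, (List.sublist_append_left _ _).trans hs, h1⟩
    refine ⟨hc, s2, ?_, h2⟩
    suffices h : s2.Sublist S ∧ ∀ y ∈ s2, nLetters Q < y by
      rw [← (List.filter_eq_self (l := s2) (p := fun y => decide (nLetters Q < y))).2
        (by simpa using h.2)]
      exact h.1.filter _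
    rcases List.eq_nil_or_concat s1 with rfl | ⟨s1, v, rfl⟩
    · have : Q = [] := by
        by_contra hne
        have := List.length_pos_iff.2 hne
        exact hmin 0 this ⟨[], by simp, h1⟩
      subst this
      refine ⟨by simpa using hs, fun y hy => ?_⟩
      have := valid_pos hv (by simp) y (hs.subset (by simp [hy]))
      simp; omega
    · rw [List.concat_eq_append] at *
      have hs' : (s1 ++ v :: s2).Sublist (Q ++ S) := by simpa using hs
      obtain ⟨w1, w2, hw, hs1, hs2⟩ := sublist_split hs'
      have hw' : Q ++ S = (w1 ++ [v]) ++ w2 := by simp [hw]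
      have hcon : PatContains (w1 ++ [v]) σ := ⟨_, hs1.append (List.Sublist.refl [v]), h1⟩
      obtain ⟨r, hr1, hr2⟩ : ∃ r, w1 ++ [v] = Q ++ r ∧ S = r ++ w2 := by
        rcases List.append_eq_append_iff.1 hw' with ⟨a, h1, h2⟩ | ⟨a, h1, h2⟩
        · exact ⟨a, h1, h2⟩
        · by_cases ha : a = []
          · subst ha
            exact ⟨[], by simpa using h1.symm, by simpa using h2.symm⟩
          · exfalso
            have := List.length_pos_iff.2 ha
            refine hmin (w1 ++ [v]).length (by rw [h1]; simp; omega) ?_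
            rw [h1, List.take_left]
            exact hcon
      refine ⟨hs2.trans (by rw [hr2]; exact List.sublist_append_right _ _), fun y hy => ?_⟩
      rw [hw', valid_append] at hv
      have hvy : v < y := h3 v (by simp) y hy
      rcases valid_mem hv.2 (hs2.subset hy) with h | h
      · rw [stk_concat] at h
        simp at h; omega
      · rw [hr1] at h
        simp at h; omega
  · rintro ⟨⟨s1, hs1, h1⟩, s2, hs2, h2⟩
    refine ⟨s1, s2, hs1.append (hs2.trans List.filter_sublist), h1, h2, fun x hx y hy => ?_⟩
    have := le_nLetters (hs1.subset hx)
    have := (List.mem_filter.1 (hs2.subset hy)).2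
    simp at this
    omega

/-- Decomposition for prepending. -/
def RA (σ : List ℕ) (y : X) (k : List ℕ × List (Option ℕ)) (x : X) : Prop :=
  ∃ l : List (List ℕ), (∀ c ∈ l, Atom c) ∧ (∀ d, some d ∈ k.2 → d ≤ nLetters k.1) ∧
    k.2.count none = l.length ∧ x.1 = l.foldr rgfComp [] ∧
    y.1 = k.1 ++ asm (nLetters k.1) k.2 l ∧
    (∀ j < k.1.length, ¬ PatContains (k.1.take j) σ) ∧ (PatContains k.1 σ ∨ k.2 = [])

lemma foldr_inj {l l' : List (List ℕ)} (hl : ∀ c ∈ l, Atom c) (hl' : ∀ c ∈ l', Atom c)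
    (h : l.foldr rgfComp [] = l'.foldr rgfComp []) : l = l' := by
  have key : ∀ l : List (List ℕ), (∀ c ∈ l, Atom c) →
      asm 0 (List.replicate l.length none) l = l.foldr rgfComp [] := by
    intro l hl
    have h1 := asm_filter (M0 := 0) (M := 0) (t := List.replicate l.length none) (l := l) le_rfl
      (by intro d hd; have := List.eq_of_mem_replicate hd; simp at this) hl (by simp)
    rw [List.filter_eq_self.2] at h1
    · simpa using h1
    · intro y hy
      have := asm_mem (M0 := 0) (M := 0) le_rfl
        (by intro d hd; have := List.eq_of_mem_replicate hd; simp at this) hl y hy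
      have hlen : ∀ (n M : ℕ) (l : List (List ℕ)), (∀ c ∈ l, Atom c) →
          ∀ y ∈ asm M (List.replicate n none) l, 1 ≤ y := by
        intro n
        induction n with
        | zero => simp [asm]
        | succ n ih =>
          intro M l hl y hy
          rw [List.replicate_succ] at hy
          cases l with
          | nil => simp [asm] at hy
          | cons c l =>
            simp only [asm, List.mem_append, List.mem_map] at hy
            rcases hy with ⟨z, hz, rfl⟩ | hy
            · have := (hl c (by simp)).pos z hz
              omega
            · exact ih _ _ (fun c hc => hl c (by simp [hc])) y hy
      have := hlen _ _ _ hl y hy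
      simp; omega
  rw [← key l hl, ← key l' hl'] at h
  exact (asm_uniq (M0 := 0) le_rfl
    (by intro d hd; have := List.eq_of_mem_replicate hd; simp at this)
    (by intro d hd; have := List.eq_of_mem_replicate hd; simp at this) hl hl' (by simp) (by simp)
    h).2

lemma RA_contains {σ ρ : List ℕ} (hρ : ∀ x ∈ ρ, 1 ≤ x) {y x : X} {k} (h : RA σ y k x) :
    PatContains y.1 (rgfComp σ ρ) ↔ PatContains k.1 σ ∧ PatContains x.1 ρ := by
  obtain ⟨l, h1, h2, h3, h4, h5, h6, h7⟩ := h
  have hv := y.2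
  rw [h5] at hv ⊢
  rw [contains_prepend hv h6 ?_ hρ, asm_filter le_rfl h2 h1 h3, contains_map (strictMono_add _), h4]
  rcases h7 with h7 | h7
  · exact Or.inl h7
  · right; rw [h7]; simp [asm]

lemma ccEquiv_prepend {σ ρ ρ' : List ℕ} (hρ : ∀ x ∈ ρ, 1 ≤ x) (hρ' : ∀ x ∈ ρ', 1 ≤ x)
    (h : ccEquiv ρ ρ') : ccEquiv (rgfComp σ ρ) (rgfComp σ ρ') := by
  rw [cc_iff] at h ⊢
  obtain ⟨e, he1, he2⟩ := h
  suffices hsuff : ∃ E : X ≃ X, (∀ y, cc (E y) = cc y) ∧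
      ∀ y, ∃ k x, RA σ y k x ∧ RA σ (E y) k (e x) by
    obtain ⟨E, hE1, hE2⟩ := hsuff
    refine ⟨E, hE1, fun y => ?_⟩
    obtain ⟨k, x, hR, hR'⟩ := hE2 y
    rw [RA_contains hρ hR, RA_contains hρ' hR', he2]
  refine transfer (RA σ) e he1 ?tot ?uniq ?inj ?clos
  case tot =>
    intro y
    -- the cut
    classical
    have hex : ∃ k, y.1.length ≤ k ∨ PatContains (y.1.take k) σ := ⟨_, Or.inl le_rfl⟩
    obtain ⟨Q, S, hQS, hmin, hQ⟩ : ∃ Q S, y.1 = Q ++ S ∧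
        (∀ j < Q.length, ¬ PatContains (Q.take j) σ) ∧ (PatContains Q σ ∨ S = []) := by
      refine ⟨y.1.take (Nat.find hex), y.1.drop (Nat.find hex), by simp, ?_, ?_⟩
      · intro j hj
        rw [List.length_take, lt_min_iff] at hj
        rw [List.take_take, min_eq_left (by omega)]
        have := Nat.find_min hex hj.1
        push Not at this
        exact this.2
      · rcases Nat.find_spec hex with h | h
        · right; exact List.drop_eq_nil_of_le h
        · exact Or.inl h
    have hv := y.2
    rw [hQS, valid_append] at hv
    simp only [zero_le, max_eq_right] at hv
    obtain ⟨t, l, h1, h2, h3, h4⟩ := asm_exists (M0 := nLetters Q) S.length S (nLetters Q) (stk [] Q)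
      [] le_rfl le_rfl (fun y hy => stk_le hy) (by simp) (fun x _ => le_or_gt x (nLetters Q)) hv.2
    refine ⟨(Q, t), ⟨l.foldr rgfComp [], (valid_foldr h2).1⟩, l, h2, h1, h3, rfl, ?_, hmin, ?_⟩
    · rw [hQS, ← h4]
    · rcases hQ with hQ | hQ
      · exact Or.inl hQ
      · right
        rw [hQ] at h4
        match t, l with
        | [], _ => rfl
        | some d :: t, _ => simp [asm] at h4
        | none :: t, [] => simp at h3
        | none :: t, c :: l =>
          obtain ⟨r, rfl⟩ := (h2 c (by simp)).head
          simp [asm] at h4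
  case uniq =>
    rintro y ⟨Q, t⟩ x ⟨Q', t'⟩ x' ⟨l, h1, h2, h3, h4, h5, h6, h7⟩ ⟨l', h1', h2', h3', h4', h5', h6', h7'⟩
    simp only at *
    have aux : ∀ (Q Q' S S' : List ℕ), Q ++ S = Q' ++ S' → (PatContains Q σ ∨ S = []) →
        (∀ j < Q'.length, ¬ PatContains (Q'.take j) σ) → Q'.length ≤ Q.length := by
      intro Q Q' S S' h hQ hm
      by_contra hlt
      push Not at hlt
      rcases hQ with hQ | rfl
      · apply hm _ hlt
        have := congrArg (List.take Q.length) h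
        rw [List.take_left, List.take_append_of_le_length hlt.le] at this
        rwa [← this]
      · have := congrArg List.length h
        simp at this; omega
    have hh := h5.symm.trans h5'
    have hS : PatContains Q σ ∨ asm (nLetters Q) t l = [] := by
      rcases h7 with h | h
      · exact Or.inl h
      · right; simp [h, asm]
    have hS' : PatContains Q' σ ∨ asm (nLetters Q') t' l' = [] := by
      rcases h7' with h | h
      · exact Or.inl h
      · right; simp [h, asm]
    have l1 := aux _ _ _ _ hh hS h6'
    have l2 := aux _ _ _ _ hh.symm hS' h6
    obtain ⟨rfl, hh2⟩ := List.append_inj hh (by omega)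
    obtain ⟨rfl, rfl⟩ := asm_uniq le_rfl h2 h2' h1 h1' h3 h3' hh2
    exact ⟨rfl, Subtype.ext (h4.trans h4'.symm)⟩
  case inj =>
    rintro y y' ⟨Q, t⟩ x ⟨l, h1, h2, h3, h4, h5, h6, h7⟩ ⟨l', h1', h2', h3', h4', h5', h6', h7'⟩
    obtain rfl := foldr_inj h1 h1' (h4.symm.trans h4')
    exact Subtype.ext (h5.trans h5'.symm)
  case clos =>
    rintro y ⟨Q, t⟩ x x' ⟨l, h1, h2, h3, h4, h5, h6, h7⟩ hcc
    obtain ⟨l', h1', h4'⟩ := exists_comps _ x'.1 le_rfl x'.2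
    simp only at *
    simp only [cc, Prod.mk.injEq] at hcc
    have e1 := (valid_foldr h1).2
    have e2 := (valid_foldr h1').2
    rw [← h4] at e1
    rw [← h4'] at e2
    have hll : l'.length = l.length := by omega
    have hv := y.2
    rw [h5, valid_append] at hv
    simp only [zero_le, max_eq_right] at hv
    have hval := asm_valid (M0 := nLetters Q) (M' := nLetters Q) (T := []) (T' := []) (l' := l')
      (s0 := stk [] Q) le_rfl le_rfl h2 h1 h1' h3
      (by omega) (fun y hy => stk_le hy) (by simp) (by simp) rfl hv.2
    simp only [List.nil_append] at hval
    refine ⟨⟨Q ++ asm (nLetters Q) t l', ?_⟩, ⟨l', h1', h2, by simp only; omega, h4', rfl, h6, h7⟩, ?_⟩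
    · rw [valid_append]
      simp only [zero_le, max_eq_right]
      exact ⟨hv.1, hval.1⟩
    · simp only [cc, Prod.mk.injEq, h5, stk_append]
      refine ⟨?_, hval.2.symm⟩
      have a1 := asm_length (M := nLetters Q) h3
      have a2 := asm_length (M := nLetters Q) (t := t) (l := l') (by omega)
      rw [← h4] at a1
      rw [← h4'] at a2
      simp; omega

/-! ### Appending a pattern -/

/-- Canonical stack with `p` elements. -/
def tp : ℕ → List ℕ
  | 0 => []
  | p + 1 => (p + 1) :: tp p

/-- Strictly monotone map sending the canonical stack to `s` and shifting the new letters. -/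
def den : List ℕ → ℕ → ℕ → ℕ
  | [], M, y => if y = 0 then 0 else y + M
  | x :: s, M, y =>
    if s.length + 1 < y then y - (s.length + 1) + M else if y = s.length + 1 then x else den s M y

lemma tp_le {p : ℕ} : ∀ y ∈ tp p, y ≤ p := by
  induction p with
  | zero => simp [tp]
  | succ p ih =>
    intro y hy
    rcases List.mem_cons.1 hy with rfl | hy
    · exact le_rfl
    · have := ih y hy; omega

lemma den_big (s : List ℕ) (M y : ℕ) (h : s.length < y) : den s M y = y - s.length + M := by
  cases s with
  | nil => simp at h; simp [den]; omega
  | cons x s => simp at h; simp [den, h]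

lemma den_le (s : List ℕ) (M y : ℕ) (hs : ∀ x ∈ s, x ≤ M) (h : y ≤ s.length) : den s M y ≤ M := by
  induction s with
  | nil => simp at h; simp [den, h]
  | cons x s ih =>
    simp at h
    rw [den, if_neg (by omega)]
    split_ifs with h1
    · exact hs x (by simp)
    · exact ih (fun z hz => hs z (by simp [hz])) (by omega)

lemma den_top (s : List ℕ) (M : ℕ) : den s M s.length = s.headD 0 := by
  cases s with
  | nil => simp [den]
  | cons x s => simp [den]

lemma den_strictMono (s : List ℕ) (M : ℕ) (hs : s.Pairwise (· > ·)) (h1 : ∀ x ∈ s, 1 ≤ x)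
    (h2 : ∀ x ∈ s, x ≤ M) : StrictMono (den s M) := by
  induction s with
  | nil =>
    apply strictMono_nat_of_lt_succ
    intro n
    simp [den]
    split_ifs <;> omega
  | cons x s ih =>
    rw [List.pairwise_cons] at hs
    have ih := ih hs.2 (fun z hz => h1 z (by simp [hz])) (fun z hz => h2 z (by simp [hz]))
    apply strictMono_nat_of_lt_succ
    intro n
    have hxM := h2 x (by simp)
    rcases lt_trichotomy n s.length with h | h | h
    · rw [den, if_neg (by omega), if_neg (by omega), den, if_neg (by omega), if_neg (by omega)]
      exact ih (by omega)
    · rw [den, if_neg (by omega), if_neg (by omega), h, den, if_neg (by omega), if_pos rfl, den_top]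
      cases s with
      | nil => exact h1 x (by simp)
      | cons z s => exact hs.1 z (by simp)
    · rw [den_big _ _ (n + 1) (by simp; omega)]
      by_cases hn : n = s.length + 1
      · rw [den, if_neg (by omega), if_pos hn]
        simp; omega
      · rw [den_big _ _ n (by simp; omega)]
        simp; omega

lemma tp_map_den (s : List ℕ) (M : ℕ) : (tp s.length).map (den s M) = s := by
  induction s with
  | nil => simp [tp]
  | cons x s ih =>
    rw [List.length_cons, tp, List.map_cons]
    congr 1
    · simp [den]
    · conv_rhs => rw [← ih]
      apply List.map_congr_left
      intro y hy
      have := tp_le y hy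
      rw [den, if_neg (by omega), if_neg (by omega)]

/-- The letter translation associated with an initial segment. -/
def D (P : List ℕ) : ℕ → ℕ := den (stk [] P) (nLetters P)

lemma D_strictMono {P : List ℕ} (hP : Valid [] 0 P) : StrictMono (D P) :=
  den_strictMono _ _ (stk_sorted _ _ List.Pairwise.nil)
    (fun x hx => valid_pos hP (by simp) x (by simpa using stk_subset _ _ hx)) (fun _ hx => stk_le hx)

lemma D_valid {P k : List ℕ} (hP : Valid [] 0 P) :
    Valid [] 0 (P ++ k.map (D P)) ↔ Valid (tp (stk [] P).length) (stk [] P).length k := by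
  rw [valid_append]
  simp only [zero_le, max_eq_right]
  have := valid_map (D_strictMono hP) (p := (stk [] P).length) (M := nLetters P)
    (fun y hy => den_big _ _ _ hy) (tp (stk [] P).length) k _ le_rfl
  rw [D, tp_map_den, Nat.sub_self, Nat.zero_add] at this
  rw [D, this]
  exact ⟨fun h => h.2, fun h => ⟨hP, h⟩⟩

lemma D_stk {P k : List ℕ} (hP : Valid [] 0 P) :
    (stk [] (P ++ k.map (D P))).length = (stk (tp (stk [] P).length) k).length := by
  rw [stk_append]
  have := stk_map (D_strictMono hP) (tp (stk [] P).length) k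
  conv at this => lhs; arg 1; rw [D, tp_map_den]
  rw [this, List.length_map]

lemma D_exists {P S : List ℕ} (h : Valid [] 0 (P ++ S)) : ∃ k : List ℕ, S = k.map (D P) := by
  rw [valid_append] at h
  simp only [zero_le, max_eq_right] at h
  have hr : ∀ x ∈ S, ∃ y, D P y = x := by
    intro x hx
    rcases valid_mem h.2 hx with h | h
    · rw [← tp_map_den (stk [] P) (nLetters P)] at h
      obtain ⟨y, _, hy⟩ := List.mem_map.1 h
      exact ⟨y, hy⟩
    · refine ⟨x - nLetters P + (stk [] P).length, ?_⟩
      rw [D, den_big _ _ _ (by omega)]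
      omega
  clear h
  induction S with
  | nil => exact ⟨[], rfl⟩
  | cons x S ih =>
    obtain ⟨k, rfl⟩ := ih (fun x hx => hr x (by simp [hx]))
    obtain ⟨y, rfl⟩ := hr x (by simp)
    exact ⟨y :: k, rfl⟩

/-- Position `j` of `w` is followed by a copy of `τ` in new letters. -/
def Good (τ w : List ℕ) (j : ℕ) : Prop :=
  PatContains ((w.drop j).filter (nLetters (w.take j) < ·)) τ

/-- Same as `Good`, for normalized suffixes. -/
def G (τ : List ℕ) (p : ℕ) (k : List ℕ) (i : ℕ) : Prop :=
  PatContains ((k.drop i).filter (max p (nLetters (k.take i)) < ·)) τ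

lemma nLetters_lt {w : List ℕ} {k : ℕ} : nLetters w < k ↔ 0 < k ∧ ∀ x ∈ w, x < k := by
  cases k with
  | zero => simp
  | succ k => simp [Nat.lt_succ_iff, nLetters_le]

lemma good_iff {τ P k : List ℕ} (hP : Valid [] 0 P) (i : ℕ) :
    Good τ (P ++ k.map (D P)) (P.length + i) ↔ G τ (stk [] P).length k i := by
  unfold Good G
  have hD := D_strictMono hP
  rw [List.drop_length_add_append, List.take_length_add_append, ← List.map_drop, ← List.map_take,
    List.filter_map, contains_map hD]
  have : ∀ y, nLetters (P ++ (k.take i).map (D P)) < D P y ↔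
      max (stk [] P).length (nLetters (k.take i)) < y := by
    intro y
    have h1 : nLetters P < D P y ↔ (stk [] P).length < y := by
      constructor
      · intro h
        by_contra hc
        push Not at hc
        have := den_le (stk [] P) (nLetters P) y (fun _ hx => stk_le hx) hc
        rw [D] at h
        omega
      · intro h
        rw [D, den_big _ _ _ h]; omega
    rw [nLetters_append, max_lt_iff, max_lt_iff, h1]
    refine and_congr_right fun h => ?_
    have h2 := h1.2 h
    rw [nLetters_lt, nLetters_lt]
    refine and_congr ⟨fun _ => by omega, fun _ => by omega⟩ ?_
    constructor
    · intro h x hx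
      exact hD.lt_iff_lt.1 (h _ (List.mem_map_of_mem hx))
    · intro h x hx
      obtain ⟨z, hz, rfl⟩ := List.mem_map.1 hx
      exact hD.lt_iff_lt.2 (h z hz)
  have e : ((fun x => decide (nLetters (P ++ (k.take i).map (D P)) < x)) ∘ D P) =
      fun y => decide (max (stk [] P).length (nLetters (k.take i)) < y) := by
    funext y
    simp only [Function.comp, decide_eq_decide]
    exact this y
  rw [e]

lemma contains_of_good {P S ρ τ : List ℕ} (hτ : ∀ x ∈ τ, 1 ≤ x) (h1 : PatContains P ρ)
    (h2 : PatContains (S.filter (nLetters P < ·)) τ) : PatContains (P ++ S) (rgfComp ρ τ) := by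
  obtain ⟨s1, hs1, h1⟩ := h1
  obtain ⟨s2, hs2, h2⟩ := h2
  refine (contains_comp hτ).2
    ⟨s1, s2, hs1.append (hs2.trans List.filter_sublist), h1, h2, fun x hx y hy => ?_⟩
  have := le_nLetters (hs1.subset hx)
  have := (List.mem_filter.1 (hs2.subset hy)).2
  simp at this
  omega

lemma good_of_contains {w ρ τ : List ℕ} (hv : Valid [] 0 w) (hτ : ∀ x ∈ 1 :: τ, 1 ≤ x)
    (h : PatContains w (rgfComp ρ (1 :: τ))) :
    ∃ α β, w = α ++ β ∧ PatContains α ρ ∧ PatContains (β.filter (nLetters α < ·)) (1 :: τ) := by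
  obtain ⟨s1, s2, hs, h1, h2, h3⟩ := (contains_comp hτ).1 h
  cases s2 with
  | nil => have := h2.1; simp at this
  | cons b s2 =>
    have hb : ∀ y ∈ s2, b ≤ y := by
      intro y hy
      obtain ⟨j, hj, rfl⟩ := List.getElem_of_mem hy
      have hl := h2.1
      simp at hl
      have := h2.2 (j + 1) 0 (by simp; omega) (by simp)
      simp only [List.getD_cons_succ, List.getD_cons_zero] at this
      rw [List.getD_eq_getElem _ _ hj, List.getD_eq_getElem _ _ (by omega)] at this
      have h4 := hτ (τ[j]'(by omega)) (by simp)
      omega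
    obtain ⟨w1, w2, rfl, hs1, hs2⟩ := sublist_split hs
    have hs1b : ∀ x ∈ s1, x < b := fun x hx => h3 x hx b (by simp)
    -- it suffices to find the split before the first `b`
    obtain ⟨α, β, hαβ, hbα⟩ := exists_first_split (y := b) (S := w1 ++ b :: w2) (by simp)
    have hmx : nLetters α + 1 = b := by
      have hv' := hv
      rw [hαβ, valid_append] at hv'
      rcases ((valid_cons ..).1 hv'.2).1 with h | h
      · simpa using h.symm
      · exact absurd (by simpa using stk_subset _ _ h) hbα
    have hsub : s1.Sublist α ∧ w2.Sublist β := by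
      rcases List.append_eq_append_iff.1 hαβ with ⟨a, ha1, ha2⟩ | ⟨a, ha1, ha2⟩
      · cases a with
        | nil =>
          simp at ha1 ha2
          rw [ha1, ha2]
          exact ⟨hs1, List.Sublist.refl _⟩
        | cons q a =>
          simp at ha2
          exact absurd (by rw [ha1]; simp [ha2.1]) hbα
      · cases a with
        | nil =>
          simp at ha1 ha2
          rw [← ha1, ha2]
          exact ⟨hs1, List.Sublist.refl _⟩
        | cons q γ =>
          simp at ha2
          obtain ⟨rfl, rfl⟩ := ha2
          refine ⟨?_, (List.sublist_cons_self _ _).trans (List.sublist_append_right _ _)⟩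
          have hγ : ∀ x ∈ γ, b ≤ x := by
            intro x hx
            by_contra hlt
            push Not at hlt
            obtain ⟨u, v, rfl⟩ := List.append_of_mem hx
            rw [ha1] at hv
            have e : α ++ b :: (u ++ x :: v) ++ b :: w2 =
              (α ++ b :: u ++ [x]) ++ (v ++ b :: w2) := by simp
            rw [e, valid_append] at hv
            rcases valid_mem hv.2 (y := b) (by simp) with h | h
            · rw [stk_concat] at h
              simp at h; omega
            · simp at h
          have hf := hs1.filter (fun x => decide (x < b))
          rw [List.filter_eq_self.2 (by simpa using hs1b), ha1, List.filter_append,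
            (List.filter_eq_nil_iff (l := b :: γ)).2 (by simpa using hγ), List.append_nil] at hf
          exact hf.trans List.filter_sublist
    refine ⟨α, b :: β, hαβ, ⟨s1, hsub.1, h1⟩, b :: s2, ?_, h2⟩
    have hf := ((hs2.trans hsub.2).cons_cons b).filter (fun x => decide (nLetters α < x))
    rwa [List.filter_eq_self.2] at hf
    intro y hy
    rcases List.mem_cons.1 hy with rfl | hy
    · simp; omega
    · have := hb y hy
      simp; omega

lemma contains_append {P S ρ τ : List ℕ} (hv : Valid [] 0 (P ++ S)) (hτ : ∀ x ∈ 1 :: τ, 1 ≤ x)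
    (h1 : Good (1 :: τ) (P ++ S) P.length ∨ P = [])
    (h2 : ∀ j, P.length < j → j ≤ (P ++ S).length → ¬ Good (1 :: τ) (P ++ S) j) :
    PatContains (P ++ S) (rgfComp ρ (1 :: τ)) ↔
      PatContains P ρ ∧ Good (1 :: τ) (P ++ S) P.length := by
  constructor
  · intro h
    obtain ⟨α, β, he, hα, hβ⟩ := good_of_contains hv hτ h
    have hg : Good (1 :: τ) (P ++ S) α.length := by
      rw [he]; unfold Good; simpa using hβ
    have hle : α.length ≤ P.length := by
      by_contra hlt
      push Not at hlt
      exact h2 _ hlt (by rw [he]; simp) hg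
    refine ⟨?_, ?_⟩
    · have : α = P.take α.length := by
        have := congrArg (List.take α.length) he
        rwa [List.take_left, List.take_append_of_le_length hle, eq_comm] at this
      rw [this] at hα
      exact contains_mono (List.take_sublist _ _) hα
    · rcases h1 with h1 | rfl
      · exact h1
      · simp at hle
        simpa [hle] using hg
  · rintro ⟨h3, h4⟩
    refine contains_of_good hτ h3 ?_
    unfold Good at h4
    simpa using h4

/-- Decomposition for appending. -/
def RB (τ : List ℕ) (y : X) (k : List ℕ) (x : X) : Prop :=
  y.1 = x.1 ++ k.map (D x.1) ∧ (G τ (stk [] x.1).length k 0 ∨ x.1 = []) ∧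
    ∀ i, 0 < i → i ≤ k.length → ¬ G τ (stk [] x.1).length k i

lemma RB_good {τ : List ℕ} {y x : X} {k} (h : RB τ y k x) :
    (Good τ y.1 x.1.length ∨ x.1 = []) ∧
      ∀ j, x.1.length < j → j ≤ y.1.length → ¬ Good τ y.1 j := by
  obtain ⟨h1, h2, h3⟩ := h
  rw [h1]
  refine ⟨?_, ?_⟩
  · rw [← good_iff x.2] at h2
    simpa using h2
  · intro j hj hj2
    have := h3 (j - x.1.length) (by omega) (by simp at hj2; omega)
    rwa [← good_iff x.2, Nat.add_sub_cancel' hj.le] at this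

lemma RB_contains {τ ρ : List ℕ} (hτ : ∀ x ∈ 1 :: τ, 1 ≤ x) {y x : X} {k} (h : RB (1 :: τ) y k x) :
    PatContains y.1 (rgfComp ρ (1 :: τ)) ↔
      PatContains x.1 ρ ∧ G (1 :: τ) (stk [] x.1).length k 0 := by
  obtain ⟨g1, g2⟩ := RB_good h
  obtain ⟨h1, h2, h3⟩ := h
  have hv := y.2
  rw [h1] at g1 g2 hv ⊢
  rw [contains_append hv hτ g1 g2, ← good_iff x.2, Nat.add_zero]

lemma ccEquiv_append {τ ρ ρ' : List ℕ} (hτ : ∀ x ∈ 1 :: τ, 1 ≤ x)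
    (h : ccEquiv ρ ρ') : ccEquiv (rgfComp ρ (1 :: τ)) (rgfComp ρ' (1 :: τ)) := by
  rw [cc_iff] at h ⊢
  obtain ⟨e, he1, he2⟩ := h
  suffices hsuff : ∃ E : X ≃ X, (∀ y, cc (E y) = cc y) ∧
      ∀ y, ∃ k x, RB (1 :: τ) y k x ∧ RB (1 :: τ) (E y) k (e x) by
    obtain ⟨E, hE1, hE2⟩ := hsuff
    refine ⟨E, hE1, fun y => ?_⟩
    obtain ⟨k, x, hR, hR'⟩ := hE2 y
    have := he1 x
    simp only [cc, Prod.mk.injEq] at this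
    rw [RB_contains hτ hR, RB_contains hτ hR', he2, this.2]
  refine transfer (RB (1 :: τ)) e he1 ?tot ?uniq ?inj ?clos
  case tot =>
    intro y
    classical
    obtain ⟨P, S, hPS, hg1, hg2⟩ : ∃ P S, y.1 = P ++ S ∧ (Good (1 :: τ) y.1 P.length ∨ P = []) ∧
        ∀ j, P.length < j → j ≤ y.1.length → ¬ Good (1 :: τ) y.1 j := by
      set m := Nat.findGreatest (Good (1 :: τ) y.1) y.1.length with hm
      obtain ⟨a1, a2, a3⟩ := Nat.findGreatest_eq_iff.1 hm.symm
      have hlen : (y.1.take m).length = m := by simp; omega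
      refine ⟨y.1.take m, y.1.drop m, by simp, ?_, ?_⟩
      · rw [hlen]
        by_cases h0 : m = 0
        · right; simp [h0]
        · exact Or.inl (a2 h0)
      · rw [hlen]
        exact fun j h1 h2 => a3 h1 h2
    have hv := y.2
    rw [hPS] at hv hg1 hg2
    obtain ⟨k, rfl⟩ := D_exists hv
    have hP := ((valid_append ..).1 hv).1
    refine ⟨k, ⟨P, hP⟩, hPS, ?_, ?_⟩
    · rw [← good_iff hP]; simpa using hg1
    · intro i hi hi2
      rw [← good_iff hP]
      exact hg2 _ (by omega) (by simp; omega)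
  case uniq =>
    intro y k x k' x' hR hR'
    have aux : ∀ k x k' x', RB (1 :: τ) y k x → RB (1 :: τ) y k' x' →
        x'.1.length ≤ x.1.length := by
      intro k x k' x' h h'
      obtain ⟨_, g2⟩ := RB_good h
      obtain ⟨g1, _⟩ := RB_good h'
      by_contra hlt
      push Not at hlt
      rcases g1 with g1 | g1
      · exact g2 _ hlt (by rw [h'.1]; simp) g1
      · rw [g1] at hlt; simp at hlt
    have l1 := aux _ _ _ _ hR hR'
    have l2 := aux _ _ _ _ hR' hR
    have hh := hR.1.symm.trans hR'.1
    obtain ⟨h1, h2⟩ := List.append_inj hh (by omega)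
    obtain rfl : x = x' := Subtype.ext h1
    exact ⟨List.map_injective_iff.2 (D_strictMono x.2).injective h2, rfl⟩
  case inj =>
    intro y y' k x h h'
    exact Subtype.ext (h.1.trans h'.1.symm)
  case clos =>
    rintro y k x x' ⟨h1, h2, h3⟩ hcc
    simp only [cc, Prod.mk.injEq] at hcc
    have hv := y.2
    rw [h1, D_valid x.2, ← hcc.2] at hv
    refine ⟨⟨x'.1 ++ k.map (D x'.1), (D_valid x'.2).2 hv⟩, ⟨rfl, ?_, ?_⟩, ?_⟩
    · rw [hcc.2]
      refine h2.imp id fun h => ?_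
      have := hcc.1
      rw [h] at this
      simpa using this
    · rw [hcc.2]; exact h3
    · simp only [cc, Prod.mk.injEq, h1, D_stk x.2, D_stk x'.2, hcc.2, and_true]
      simp [hcc.1]

end NCW

/-- Theorem 3.2: substituting a cc-equivalent pattern preserves cc-equivalence:
`σ[ρ][τ] ≃cc σ[ρ′][τ]`. -/
theorem stmt6 (σ τ ρ ρ' : List ℕ)
    (hσ : IsRGF σ) (hσnc : NonCrossing σ) (hτ : IsRGF τ) (hτnc : NonCrossing τ)
    (hρ : IsRGF ρ) (hρnc : NonCrossing ρ) (hρ' : IsRGF ρ') (hρ'nc : NonCrossing ρ')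
    (h : ccEquiv ρ ρ') :
    ccEquiv (rgfComp (rgfComp σ ρ) τ) (rgfComp (rgfComp σ ρ') τ) := by
  have h1 := NCW.ccEquiv_prepend (σ := σ) hρ.1 hρ'.1 h
  cases τ with
  | nil => simpa using h1
  | cons a τ =>
    have ha : a = 1 := by simpa using hτ.2.1 (by simp)
    subst ha
    exact NCW.ccEquiv_append hτ.1 h1
end

section
/- Let σ be a connected non-crossing RGF and let ρ be any non-crossing RGF. Then σ[ρ] ≃cc ρ[σ]. -/
namespace NCProof

/-- maximum letter -/
def mx (L : List ℕ) : ℕ := L.foldr max 0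

/-- the stack of visible letters of a reversed word -/
def stk : List ℕ → List ℕ
  | [] => []
  | a :: L => a :: (stk L).filter (fun x => x < a)

/-- reversed non-crossing restricted growth functions -/
def NCR : List ℕ → Prop
  | [] => True
  | a :: L => NCR L ∧ (a = mx L + 1 ∨ a ∈ stk L)

/-- longest part (in the reversed word) with letters at most `k` -/
def pre (k : ℕ) : List ℕ → List ℕ
  | [] => []
  | a :: L => if mx (a :: L) ≤ k then a :: L else pre k L

/-- letters above `k`, normalised -/
def fil (k : ℕ) (L : List ℕ) : List ℕ := (L.filter (fun x => k < x)).map (fun x => x - k)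

@[simp] theorem mx_nil : mx [] = 0 := rfl
@[simp] theorem mx_cons (a : ℕ) (L : List ℕ) : mx (a :: L) = max a (mx L) := rfl

theorem le_mx {L : List ℕ} {x : ℕ} (h : x ∈ L) : x ≤ mx L := by
  induction L with
  | nil => simp at h
  | cons a L ih =>
    rcases List.mem_cons.1 h with h | h
    · simp [h]
    · simp [ih h]

theorem mx_le {L : List ℕ} {k : ℕ} : mx L ≤ k ↔ ∀ x ∈ L, x ≤ k := by
  induction L with
  | nil => simp
  | cons a L ih => simp [ih]

theorem stk_subset {L : List ℕ} {x : ℕ} (h : x ∈ stk L) : x ∈ L := by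
  induction L with
  | nil => simp [stk] at h
  | cons a L ih =>
    simp only [stk, List.mem_cons, List.mem_filter] at h
    rcases h with h | h
    · simp [h]
    · simp [ih h.1]

theorem stk_le_head {a : ℕ} {L : List ℕ} {x : ℕ} (h : x ∈ stk (a :: L)) : x ≤ a := by
  simp only [stk, List.mem_cons, List.mem_filter, decide_eq_true_eq] at h
  omega

theorem stk_sorted (L : List ℕ) : (stk L).Pairwise (· > ·) := by
  induction L with
  | nil => simp [stk]
  | cons a L ih =>
    simp only [stk, List.pairwise_cons, List.mem_filter, decide_eq_true_eq]
    exact ⟨fun x hx => hx.2, ih.filter _⟩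

theorem NCR.pos {L : List ℕ} (h : NCR L) {x : ℕ} (hx : x ∈ L) : 1 ≤ x := by
  induction L with
  | nil => simp at hx
  | cons a L ih =>
    rcases List.mem_cons.1 hx with hx | hx
    · rcases h.2 with h2 | h2
      · omega
      · subst hx; exact ih h.1 (stk_subset h2)
    · exact ih h.1 hx

theorem NCR.le_succ {a : ℕ} {L : List ℕ} (h : NCR (a :: L)) : a ≤ mx L + 1 := by
  rcases h.2 with h2 | h2
  · omega
  · have := le_mx (stk_subset h2); omega

theorem NCR.mem_of_le {L : List ℕ} (h : NCR L) {x : ℕ} (h1 : 1 ≤ x) (hx : x ≤ mx L) : x ∈ L := by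
  induction L with
  | nil => simp at hx; omega
  | cons a L ih =>
    have := h.le_succ
    simp only [mx_cons] at hx
    by_cases hxL : x ≤ mx L
    · exact List.mem_cons_of_mem _ (ih h.1 hxL)
    · have : x = a := by omega
      simp [this]

theorem pre_of_le {k : ℕ} {L : List ℕ} (h : mx L ≤ k) : pre k L = L := by
  cases L with
  | nil => rfl
  | cons a L => simp only [pre]; rw [if_pos h]

theorem pre_of_lt {k a : ℕ} {L : List ℕ} (h : k < mx (a :: L)) : pre k (a :: L) = pre k L := by
  simp only [pre]; rw [if_neg (by omega)]

theorem pre_suffix (k : ℕ) (L : List ℕ) : pre k L <:+ L := by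
  induction L with
  | nil => simp [pre]
  | cons a L ih =>
    simp only [pre]
    split_ifs
    · exact List.suffix_rfl
    · exact ih.trans (List.suffix_cons a L)

theorem NCR.suffix {L M : List ℕ} (h : NCR L) (hM : M <:+ L) : NCR M := by
  induction L with
  | nil => simp at hM; subst hM; trivial
  | cons a L ih =>
    rcases List.suffix_cons_iff.1 hM with rfl | hM
    · exact h
    · exact ih h.1 hM

theorem NCR.pre {L : List ℕ} (h : NCR L) (k : ℕ) : NCR (pre k L) := h.suffix (pre_suffix k L)

theorem NCR.mx_pre {L : List ℕ} (h : NCR L) {k : ℕ} (hk : k ≤ mx L) : mx (NCProof.pre k L) = k := by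
  induction L with
  | nil => simp at hk; simp [NCProof.pre, hk]
  | cons a L ih =>
    by_cases h1 : mx (a :: L) ≤ k
    · rw [pre_of_le h1]; omega
    · rw [pre_of_lt (by omega)]
      apply ih h.1
      have := h.le_succ
      simp at h1
      omega

theorem mx_pre_le (k : ℕ) (L : List ℕ) : mx (NCProof.pre k L) ≤ k := by
  induction L with
  | nil => simp [NCProof.pre]
  | cons a L ih =>
    by_cases h1 : mx (a :: L) ≤ k
    · rw [pre_of_le h1]; omega
    · rw [pre_of_lt (by omega)]; exact ih

theorem pre_pre {j k : ℕ} (hjk : j ≤ k) (L : List ℕ) : pre j (pre k L) = pre j L := by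
  induction L with
  | nil => simp [pre]
  | cons a L ih =>
    by_cases h1 : mx (a :: L) ≤ k
    · rw [pre_of_le h1]
    · rw [pre_of_lt (k := k) (by omega), pre_of_lt (k := j) (by omega), ih]

theorem fil_cons (k a : ℕ) (L : List ℕ) :
    fil k (a :: L) = if k < a then (a - k) :: fil k L else fil k L := by
  simp only [fil, List.filter_cons]
  by_cases h : k < a <;> simp [h]

theorem fil_eq_nil {k : ℕ} {L : List ℕ} : fil k L = [] ↔ mx L ≤ k := by
  simp [fil, mx_le]

theorem fil_zero (L : List ℕ) (h : NCR L) : fil 0 L = L := by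
  induction L with
  | nil => rfl
  | cons a L ih =>
    have : 0 < a := h.pos (x := a) (by simp)
    rw [fil_cons, if_pos this, ih h.1]; rfl

theorem fil_fil (j k : ℕ) (L : List ℕ) : fil j (fil k L) = fil (k + j) L := by
  induction L with
  | nil => rfl
  | cons a L ih =>
    rw [fil_cons, fil_cons]
    split_ifs with h1 h2 h2
    · rw [fil_cons, if_pos (by omega), ih]; congr 1; omega
    · rw [fil_cons, if_neg (by omega), ih]
    · omega
    · exact ih

theorem mx_fil (k : ℕ) (L : List ℕ) : mx (fil k L) = mx L - k := by
  induction L with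
  | nil => simp [fil]
  | cons a L ih =>
    rw [fil_cons]
    split_ifs with h1
    · simp [ih]; omega
    · simp [ih]; omega

theorem stk_fil (k : ℕ) (L : List ℕ) {x : ℕ} (hx : x ∈ stk L) (hk : k < x) : x - k ∈ stk (fil k L) := by
  induction L with
  | nil => simp [stk] at hx
  | cons a L ih =>
    rw [fil_cons]
    simp only [stk, List.mem_cons, List.mem_filter, decide_eq_true_eq] at hx
    split_ifs with h1
    · simp only [stk, List.mem_cons, List.mem_filter, decide_eq_true_eq]
      rcases hx with hx | hx
      · left; omega
      · right; exact ⟨ih hx.1, by omega⟩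
    · rcases hx with hx | hx
      · omega
      · exact ih hx.1

theorem NCR.fil {L : List ℕ} (h : NCR L) (k : ℕ) : NCR (NCProof.fil k L) := by
  induction L with
  | nil => trivial
  | cons a L ih =>
    rw [fil_cons]
    split_ifs with h1
    · refine ⟨ih h.1, ?_⟩
      rcases h.2 with h2 | h2
      · left; rw [mx_fil]; omega
      · right; exact stk_fil k L h2 h1
    · exact ih h.1

/-- glueing along a chain -/
def glue (X : List ℕ) : List ℕ → List (ℕ × ℕ) → List ℕ
  | [], _ => X
  | y :: Y, [] => (y + mx X) :: glue X Y []
  | y :: Y, c :: ch =>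
    if y ≤ c.2 then c.1 :: glue X (y :: Y) ch else (y + mx X) :: glue X Y (c :: ch)
termination_by Y ch => Y.length + ch.length

/-- valid chains -/
def VC (X Y : List ℕ) (ch : List (ℕ × ℕ)) : Prop :=
  (∀ c ∈ ch, c.1 ∈ stk X ∧ c.2 ∈ stk Y) ∧ ch.Pairwise (fun c d => c.1 ≤ d.1 ∧ d.2 ≤ c.2)

theorem VC.nil_right {X : List ℕ} {ch : List (ℕ × ℕ)} (h : VC X [] ch) : ch = [] := by
  cases ch with
  | nil => rfl
  | cons c ch => simpa [stk] using (h.1 c (by simp)).2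

theorem VC.tail {X Y : List ℕ} {c : ℕ × ℕ} {ch : List (ℕ × ℕ)} (h : VC X Y (c :: ch)) : VC X Y ch :=
  ⟨fun d hd => h.1 d (by simp [hd]), (List.pairwise_cons.1 h.2).2⟩

theorem VC.down {X Y : List ℕ} {y : ℕ} {c : ℕ × ℕ} {ch : List (ℕ × ℕ)} (h : VC X (y :: Y) (c :: ch))
    (hy : c.2 < y) : VC X Y (c :: ch) := by
  refine ⟨fun d hd => ⟨(h.1 d hd).1, ?_⟩, h.2⟩
  have h1 := (h.1 d hd).2
  have h2 : d.2 ≤ c.2 := by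
    rcases List.mem_cons.1 hd with rfl | hd
    · omega
    · exact ((List.pairwise_cons.1 h.2).1 d hd).2
  simp only [stk, List.mem_cons, List.mem_filter, decide_eq_true_eq] at h1
  rcases h1 with h1 | h1
  · omega
  · exact h1.1

theorem VC.nil (X Y : List ℕ) : VC X Y [] := ⟨by simp, by simp⟩

theorem VC.eq_head {X Y : List ℕ} {y : ℕ} {c : ℕ × ℕ} {ch : List (ℕ × ℕ)} (h : VC X (y :: Y) (c :: ch))
    (hy : y ≤ c.2) : c.2 = y := by
  have := stk_le_head (h.1 c (by simp)).2
  omega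

theorem VC.up {X Y : List ℕ} {y : ℕ} {ch : List (ℕ × ℕ)} (h : VC X Y ch)
    (hy : ∀ c ∈ ch, c.2 < y) : VC X (y :: Y) ch := by
  refine ⟨fun d hd => ⟨(h.1 d hd).1, ?_⟩, h.2⟩
  simp only [stk, List.mem_cons, List.mem_filter, decide_eq_true_eq]
  exact Or.inr ⟨(h.1 d hd).2, hy d hd⟩

/-- induction principle along the definition of `glue` for valid chains -/
theorem glue_induct {X : List ℕ} (P : List ℕ → List (ℕ × ℕ) → Prop)
    (h0 : P [] [])
    (h1 : ∀ y Y, P Y [] → P (y :: Y) [])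
    (h2 : ∀ y Y b ch, VC X (y :: Y) ((b, y) :: ch) → P (y :: Y) ch → P (y :: Y) ((b, y) :: ch))
    (h3 : ∀ y Y b s ch, VC X (y :: Y) ((b, s) :: ch) → s < y → P Y ((b, s) :: ch) →
      P (y :: Y) ((b, s) :: ch)) :
    ∀ Y ch, VC X Y ch → P Y ch := by
  intro Y ch hv
  induction hn : Y.length + ch.length using Nat.strong_induction_on generalizing Y ch with
  | _ n ih =>
  subst hn
  cases Y with
  | nil => rw [hv.nil_right]; exact h0
  | cons y Y =>
    cases ch with
    | nil => exact h1 y Y (ih _ (by simp) Y [] (VC.nil X Y) rfl)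
    | cons c ch =>
      obtain ⟨b, s⟩ := c
      by_cases hs : y ≤ s
      · obtain rfl : s = y := hv.eq_head hs
        exact h2 _ _ _ _ hv (ih _ (by simp) _ _ hv.tail rfl)
      · exact h3 _ _ _ _ _ hv (by omega) (ih _ (by simp) _ _ (hv.down (by simp; omega)) rfl)

theorem glue_nil (X : List ℕ) (ch) : glue X [] ch = X := by simp [glue]
theorem glue_cons_nil (X Y : List ℕ) (y : ℕ) : glue X (y :: Y) [] = (y + mx X) :: glue X Y [] := by
  simp [glue]
theorem glue_eq (X Y : List ℕ) (y b : ℕ) (ch) :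
    glue X (y :: Y) ((b, y) :: ch) = b :: glue X (y :: Y) ch := by
  rw [glue]; simp
theorem glue_lt (X Y : List ℕ) (y b s : ℕ) (ch) (h : s < y) :
    glue X (y :: Y) ((b, s) :: ch) = (y + mx X) :: glue X Y ((b, s) :: ch) := by
  rw [glue]; simp [h]

theorem glue_length {X Y : List ℕ} {ch} (h : VC X Y ch) :
    (glue X Y ch).length = X.length + Y.length + ch.length := by
  refine glue_induct (X := X) (fun Y ch => (glue X Y ch).length = X.length + Y.length + ch.length)
    ?_ ?_ ?_ ?_ Y ch h
  · simp [glue_nil]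
  · intro y Y h; simp [glue_cons_nil, h]; omega
  · intro y Y b ch _ h; simp [glue_eq, h]; omega
  · intro y Y b s ch _ hs h; simp [glue_lt _ _ _ _ _ _ hs, h]; omega

/-- stack of the glued word -/
def gst (X Y : List ℕ) : List (ℕ × ℕ) → List ℕ
  | [] => (stk Y).map (· + mx X) ++ stk X
  | c :: _ => ((stk Y).filter (fun x => c.2 < x)).map (· + mx X) ++ (stk X).filter (fun x => x ≤ c.1)

theorem glue_stk {X Y : List ℕ} (hX : NCR X) {ch} (h : VC X Y ch) (hY : ∀ y ∈ Y, 1 ≤ y) :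
    stk (glue X Y ch) = gst X Y ch := by
  revert hY
  have hxm : ∀ x ∈ stk X, x ≤ mx X := fun x hx => le_mx (stk_subset hx)
  refine glue_induct (X := X) (fun Y ch => (∀ y ∈ Y, 1 ≤ y) → stk (glue X Y ch) = gst X Y ch)
    ?_ ?_ ?_ ?_ Y ch h
  · simp [glue_nil, gst, stk]
  · intro y Y ih hY
    rw [glue_cons_nil]
    simp only [stk, gst, ih (fun z hz => hY z (by simp [hz]))]
    simp only [List.filter_append, List.filter_map, List.map_cons, List.cons_append]
    congr 2
    · congr 1; apply List.filter_congr; intro x _; simp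
    · apply List.filter_eq_self.2; intro x hx
      have := hxm x hx; have := hY y (by simp); simp; omega
  · intro y Y b ch hv ih hY
    rw [glue_eq]
    have hb := (hv.1 (b, y) (by simp)).1
    have e1 : (stk (y :: Y)).filter (fun x => y < x) = [] := by
      apply List.filter_eq_nil_iff.2; intro x hx; have := stk_le_head hx; simp; omega
    have e2 : (stk X).filter (fun x => x ≤ b) = b :: (stk X).filter (fun x => x < b) := by
      have hs := stk_sorted X
      revert hb hs
      generalize stk X = S
      intro hb hs
      induction S with
      | nil => simp at hb
      | cons a S ihS =>
        rw [List.pairwise_cons] at hs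
        rcases List.mem_cons.1 hb with rfl | hb
        · simp only [List.filter_cons]
          simp
          apply List.filter_congr; intro x hx; have := hs.1 x hx; simp; omega
        · have := hs.1 b hb
          simp only [List.filter_cons]
          rw [if_neg (by simp; omega), if_neg (by simp; omega)]
          exact ihS hb hs.2
    have hbm := hxm b hb
    have e3 : (stk X).filter (fun x => x < b) = (stk (glue X (y :: Y) ch)).filter (fun x => x < b) := by
      rw [ih hY]
      cases ch with
      | nil =>
        simp only [gst, List.filter_append]
        rw [(List.filter_eq_nil_iff (l := List.map _ _)).2]
        · rfl
        · intro x hx; simp at hx; simp; omega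
      | cons c ch =>
        simp only [gst, List.filter_append]
        rw [(List.filter_eq_nil_iff (l := List.map _ _)).2]
        · have := ((List.pairwise_cons.1 hv.2).1 c (by simp)).1
          simp only [List.nil_append, List.filter_filter]
          apply List.filter_congr; intro x hx; simp at *; omega
        intro x hx; simp at hx; simp; omega
    simp only [stk, gst]
    rw [← e3]
    have : (stk (y :: Y)) = y :: (stk Y).filter (fun x => x < y) := rfl
    rw [this] at e1
    rw [e1, e2]; rfl
  · intro y Y b s ch hv hs ih hY
    have hb := (hv.1 (b, s) (by simp)).1
    rw [glue_lt _ _ _ _ _ _ hs]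
    simp only [stk, gst] at *
    rw [ih (fun z hz => hY z (by simp [hz]))]
    simp only [List.filter_append, List.filter_map, List.filter_cons, hs, decide_true, if_true, List.map_cons, List.cons_append, List.filter_filter]
    congr 2
    · congr 1; apply List.filter_congr; intro x _; simp [Bool.and_comm]
    · apply List.filter_congr; intro x hx
      have := hxm x hx; have := hY y (by simp); simp; omega

theorem glue_fil {X Y : List ℕ} {ch} (h : VC X Y ch) (hY : ∀ y ∈ Y, 1 ≤ y) :
    fil (mx X) (glue X Y ch) = Y := by
  revert hY
  have hxm : ∀ x ∈ stk X, x ≤ mx X := fun x hx => le_mx (stk_subset hx)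
  refine glue_induct (X := X) (fun Y ch => (∀ y ∈ Y, 1 ≤ y) → fil (mx X) (glue X Y ch) = Y)
    ?_ ?_ ?_ ?_ Y ch h
  · intro _; rw [glue_nil, fil_eq_nil]
  · intro y Y ih hY
    have := hY y (by simp)
    rw [glue_cons_nil, fil_cons, if_pos (by omega), ih (fun z hz => hY z (by simp [hz]))]; simp
  · intro y Y b ch hv ih hY
    have := hxm b (hv.1 (b, y) (by simp)).1
    rw [glue_eq, fil_cons, if_neg (by omega), ih hY]
  · intro y Y b s ch hv hs ih hY
    have := hY y (by simp)
    rw [glue_lt _ _ _ _ _ _ hs, fil_cons, if_pos (by omega), ih (fun z hz => hY z (by simp [hz]))]; simp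

theorem glue_mx {X Y : List ℕ} {ch} (h : VC X Y ch) :
    mx (glue X Y ch) = mx X + mx Y := by
  have hxm : ∀ x ∈ stk X, x ≤ mx X := fun x hx => le_mx (stk_subset hx)
  refine glue_induct (X := X) (fun Y ch => mx (glue X Y ch) = mx X + mx Y)
    ?_ ?_ ?_ ?_ Y ch h
  · simp [glue_nil]
  · intro y Y ih; simp [glue_cons_nil, ih]; omega
  · intro y Y b ch hv ih
    have := hxm b (hv.1 (b, y) (by simp)).1
    rw [glue_eq, mx_cons, ih]; simp; omega
  · intro y Y b s ch hv hs ih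
    rw [glue_lt _ _ _ _ _ _ hs, mx_cons, ih]; simp; omega

theorem glue_pre {X Y : List ℕ} {ch} (h : VC X Y ch) (hY : ∀ y ∈ Y, 1 ≤ y) :
    pre (mx X) (glue X Y ch) = X := by
  revert hY
  refine glue_induct (X := X) (fun Y ch => (∀ y ∈ Y, 1 ≤ y) → pre (mx X) (glue X Y ch) = X)
    ?_ ?_ ?_ ?_ Y ch h
  · intro _; rw [glue_nil, pre_of_le le_rfl]
  · intro y Y ih hY
    have := hY y (by simp)
    rw [glue_cons_nil, pre_of_lt (by simp; omega), ih (fun z hz => hY z (by simp [hz]))]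
  · intro y Y b ch hv ih hY
    have := hY y (by simp)
    have h2 := glue_mx hv.tail
    rw [glue_eq, pre_of_lt, ih hY]
    rw [mx_cons, h2]; simp; omega
  · intro y Y b s ch hv hs ih hY
    have := hY y (by simp)
    rw [glue_lt _ _ _ _ _ _ hs, pre_of_lt (by simp; omega), ih (fun z hz => hY z (by simp [hz]))]

theorem glue_NCR {X Y : List ℕ} (hX : NCR X) (hY : NCR Y) {ch} (h : VC X Y ch) :
    NCR (glue X Y ch) := by
  revert hY
  refine glue_induct (X := X) (fun Y ch => NCR Y → NCR (glue X Y ch))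
    ?_ ?_ ?_ ?_ Y ch h
  · intro _; rwa [glue_nil]
  · intro y Y ih hY
    rw [glue_cons_nil]
    refine ⟨ih hY.1, ?_⟩
    rw [glue_mx (VC.nil X Y), glue_stk hX (VC.nil X Y) (fun z hz => hY.1.pos hz)]
    rcases hY.2 with h2 | h2
    · left; omega
    · right; simp [gst, h2]
  · intro y Y b ch hv ih hY
    rw [glue_eq]
    refine ⟨ih hY, Or.inr ?_⟩
    have hb := (hv.1 (b, y) (by simp)).1
    rw [glue_stk hX hv.tail (fun z hz => hY.pos hz)]
    cases ch with
    | nil => simp [gst, hb]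
    | cons c ch =>
      have := ((List.pairwise_cons.1 hv.2).1 c (by simp)).1
      simp only [gst, List.mem_append, List.mem_filter, decide_eq_true_eq]
      exact Or.inr ⟨hb, this⟩
  · intro y Y b s ch hv hs ih hY
    rw [glue_lt _ _ _ _ _ _ hs]
    refine ⟨ih hY.1, ?_⟩
    have hd := hv.down hs
    rw [glue_mx hd, glue_stk hX hd (fun z hz => hY.1.pos hz)]
    rcases hY.2 with h2 | h2
    · left; omega
    · right; simp [gst, h2, hs]

theorem glue_inj {X Y : List ℕ} {ch ch'} (h : VC X Y ch) (h' : VC X Y ch')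
    (hY : ∀ y ∈ Y, 1 ≤ y) (he : glue X Y ch = glue X Y ch') : ch = ch' := by
  have hxm : ∀ x ∈ stk X, x ≤ mx X := fun x hx => le_mx (stk_subset hx)
  refine glue_induct (X := X) (fun Y ch => ∀ ch', VC X Y ch' → (∀ y ∈ Y, 1 ≤ y) →
    glue X Y ch = glue X Y ch' → ch = ch') ?_ ?_ ?_ ?_ Y ch h ch' h' hY he
  · intro ch' h' _ _; exact h'.nil_right.symm
  · intro y Y ih ch' h' hY he
    have := hY y (by simp)
    cases ch' with
    | nil => rfl
    | cons c ch' =>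
      obtain ⟨b, s⟩ := c
      have hb := hxm b (h'.1 (b, s) (by simp)).1
      by_cases hs : s < y
      · rw [glue_cons_nil, glue_lt _ _ _ _ _ _ hs] at he
        exact ih _ (h'.down hs) (fun z hz => hY z (by simp [hz])) (List.cons.inj he).2
      · obtain rfl : s = y := h'.eq_head (by simp; omega)
        rw [glue_cons_nil, glue_eq] at he
        have := (List.cons.inj he).1; omega
  · intro y Y b ch hv ih ch' h' hY he
    have := hY y (by simp)
    have hb := hxm b (hv.1 (b, y) (by simp)).1
    cases ch' with
    | nil =>
      rw [glue_cons_nil, glue_eq] at he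
      have := (List.cons.inj he).1; omega
    | cons c ch' =>
      obtain ⟨b', s⟩ := c
      by_cases hs : s < y
      · rw [glue_eq, glue_lt _ _ _ _ _ _ hs] at he
        have := (List.cons.inj he).1; omega
      · obtain rfl : s = y := h'.eq_head (by simp; omega)
        rw [glue_eq, glue_eq] at he
        obtain ⟨h1, h2⟩ := List.cons.inj he
        rw [h1, ih _ h'.tail hY h2]
  · intro y Y b s ch hv hs ih ch' h' hY he
    have := hY y (by simp)
    cases ch' with
    | nil =>
      rw [glue_cons_nil, glue_lt _ _ _ _ _ _ hs] at he
      exact ih _ (VC.nil X Y) (fun z hz => hY z (by simp [hz])) (List.cons.inj he).2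
    | cons c ch' =>
      obtain ⟨b', s'⟩ := c
      have hb := hxm b' (h'.1 (b', s') (by simp)).1
      by_cases hs' : s' < y
      · rw [glue_lt _ _ _ _ _ _ hs', glue_lt _ _ _ _ _ _ hs] at he
        exact ih _ (h'.down hs') (fun z hz => hY z (by simp [hz])) (List.cons.inj he).2
      · obtain rfl : s' = y := h'.eq_head (by simp; omega)
        rw [glue_lt _ _ _ _ _ _ hs, glue_eq] at he
        have := (List.cons.inj he).1; omega

theorem exists_glue {L : List ℕ} (h : NCR L) {k : ℕ} (hk : k ≤ mx L) :
    ∃ ch, VC (pre k L) (fil k L) ch ∧ glue (pre k L) (fil k L) ch = L := by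
  induction L with
  | nil => exact ⟨[], VC.nil _ _, by simp [pre, fil, glue]⟩
  | cons a L ih =>
    by_cases h1 : mx (a :: L) ≤ k
    · refine ⟨[], VC.nil _ _, ?_⟩
      rw [fil_eq_nil.2 h1, pre_of_le h1, glue_nil]
    have hle := h.le_succ
    have hkL : k ≤ mx L := by simp at h1; omega
    obtain ⟨ch, hv, hg⟩ := ih h.1 hkL
    have hmp := h.1.mx_pre hkL
    have hX := h.1.pre k
    have hY := h.1.fil k
    have hstk := glue_stk hX hv (fun z hz => hY.pos hz)
    rw [hg] at hstk
    rw [pre_of_lt (by omega), fil_cons]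
    split_ifs with h2
    · have hlt : ∀ c ∈ ch, c.2 < a - k := by
        intro c hc
        rcases h.2 with h3 | h3
        · have := le_mx (stk_subset (hv.1 c hc).2)
          rw [mx_fil] at this; omega
        · rw [hstk] at h3
          cases ch with
          | nil => simp at hc
          | cons d ch =>
            have hcd : c.2 ≤ d.2 := by
              rcases List.mem_cons.1 hc with rfl | hc
              · omega
              · exact ((List.pairwise_cons.1 hv.2).1 c hc).2
            simp only [gst, List.mem_append, List.mem_map, List.mem_filter, decide_eq_true_eq] at h3
            rcases h3 with ⟨x, hx, rfl⟩ | h3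
            · omega
            · have := le_mx (stk_subset h3.1); omega
      refine ⟨ch, hv.up hlt, ?_⟩
      cases ch with
      | nil => rw [glue_cons_nil, hg, hmp]; congr 1; omega
      | cons c ch =>
        obtain ⟨b, s⟩ := c
        rw [glue_lt _ _ _ _ _ _ (hlt (b, s) (by simp)), hg, hmp]; congr 1; omega
    · have hmL : k < mx L := by simp at h1; omega
      have h3 : a ∈ stk L := by
        rcases h.2 with h3 | h3
        · omega
        · exact h3
      have hYne : fil k L ≠ [] := by rw [Ne, fil_eq_nil]; omega
      rw [hstk] at h3
      revert hv hg hstk h3 hY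
      generalize fil k L = Y at *
      intro hv hg hY hstk h3
      cases Y with
      | nil => simp at hYne
      | cons y Y =>
        refine ⟨(a, y) :: ch, ⟨?_, ?_⟩, ?_⟩
        · intro c hc
          rcases List.mem_cons.1 hc with rfl | hc
          · refine ⟨?_, by simp [stk]⟩
            cases ch with
            | nil =>
              simp only [gst, List.mem_append, List.mem_map] at h3
              rcases h3 with ⟨x, hx, rfl⟩ | h3
              · have := hY.pos (stk_subset hx); omega
              · exact h3
            | cons d ch =>
              simp only [gst, List.mem_append, List.mem_map, List.mem_filter] at h3
              rcases h3 with ⟨x, hx, rfl⟩ | h3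
              · have := hY.pos (stk_subset hx.1); omega
              · exact h3.1
          · exact hv.1 c hc
        · refine List.pairwise_cons.2 ⟨?_, hv.2⟩
          intro c hc
          refine ⟨?_, stk_le_head (hv.1 c hc).2⟩
          cases ch with
          | nil => simp at hc
          | cons d ch =>
            simp only [gst, List.mem_append, List.mem_map, List.mem_filter, decide_eq_true_eq] at h3
            have had : a ≤ d.1 := by
              rcases h3 with ⟨x, hx, rfl⟩ | h3
              · have := hY.pos (stk_subset hx.1); omega
              · exact h3.2
            rcases List.mem_cons.1 hc with rfl | hc
            · exact had
            · exact had.trans ((List.pairwise_cons.1 hv.2).1 c hc).1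
        · rw [glue_eq, hg]

end NCProof
namespace NCProof

theorem woi_iff {s t : List ℕ} : WordOrdIso s t ↔ ∃ h : s.length = t.length,
    ∀ i j (hi : i < s.length) (hj : j < s.length),
      (s[i] < s[j] ↔ t[i]'(h ▸ hi) < t[j]'(h ▸ hj)) := by
  constructor
  · rintro ⟨h, H⟩
    refine ⟨h, fun i j hi hj => ?_⟩
    have := H i j hi hj
    rwa [List.getD_eq_getElem _ _ hi, List.getD_eq_getElem _ _ hj,
      List.getD_eq_getElem _ _ (h ▸ hi), List.getD_eq_getElem _ _ (h ▸ hj)] at this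
  · rintro ⟨h, H⟩
    refine ⟨h, fun i j hi hj => ?_⟩
    have := H i j hi hj
    rwa [List.getD_eq_getElem _ _ hi, List.getD_eq_getElem _ _ hj,
      List.getD_eq_getElem _ _ (h ▸ hi), List.getD_eq_getElem _ _ (h ▸ hj)]

theorem woi_nil : WordOrdIso [] [] := ⟨rfl, by simp⟩

theorem woi_map_left {s t : List ℕ} (f : ℕ → ℕ) (hf : ∀ x ∈ s, ∀ y ∈ s, (f x < f y ↔ x < y)) :
    WordOrdIso (s.map f) t ↔ WordOrdIso s t := by
  simp only [woi_iff, List.length_map, List.getElem_map]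
  constructor
  · rintro ⟨h, H⟩
    exact ⟨h, fun i j hi hj => by
      rw [← H i j hi hj, hf _ (List.getElem_mem hi) _ (List.getElem_mem hj)]⟩
  · rintro ⟨h, H⟩
    exact ⟨h, fun i j hi hj => by
      rw [← H i j hi hj, hf _ (List.getElem_mem hi) _ (List.getElem_mem hj)]⟩

theorem woi_symm {s t : List ℕ} (h : WordOrdIso s t) : WordOrdIso t s :=
  ⟨h.1.symm, fun i j hi hj => (h.2 i j (h.1 ▸ hi) (h.1 ▸ hj)).symm⟩

theorem woi_map_right {s t : List ℕ} (f : ℕ → ℕ) (hf : ∀ x ∈ t, ∀ y ∈ t, (f x < f y ↔ x < y)) :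
    WordOrdIso s (t.map f) ↔ WordOrdIso s t :=
  ⟨fun h => woi_symm ((woi_map_left f hf).1 (woi_symm h)),
    fun h => woi_symm ((woi_map_left f hf).2 (woi_symm h))⟩

theorem woi_append {s₁ s₂ α β : List ℕ} (h1 : WordOrdIso s₁ α) (h2 : WordOrdIso s₂ β)
    (hs : ∀ x ∈ s₁, ∀ y ∈ s₂, x < y) (ht : ∀ x ∈ α, ∀ y ∈ β, x < y) :
    WordOrdIso (s₁ ++ s₂) (α ++ β) := by
  obtain ⟨l1, h1⟩ := woi_iff.1 h1
  obtain ⟨l2, h2⟩ := woi_iff.1 h2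
  refine woi_iff.2 ⟨by simp [l1, l2], fun i j hi hj => ?_⟩
  simp only [List.length_append] at hi hj
  by_cases ci : i < s₁.length <;> by_cases cj : j < s₁.length
  · rw [List.getElem_append_left ci, List.getElem_append_left cj,
      List.getElem_append_left (l1 ▸ ci), List.getElem_append_left (l1 ▸ cj)]
    exact h1 i j ci cj
  · rw [List.getElem_append_left ci, List.getElem_append_right (by omega),
      List.getElem_append_left (l1 ▸ ci), List.getElem_append_right (by omega)]
    exact iff_of_true (hs _ (List.getElem_mem _) _ (List.getElem_mem _))
      (ht _ (List.getElem_mem _) _ (List.getElem_mem _))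
  · rw [List.getElem_append_right (by omega), List.getElem_append_left cj,
      List.getElem_append_right (by omega), List.getElem_append_left (l1 ▸ cj)]
    exact iff_of_false (hs _ (List.getElem_mem _) _ (List.getElem_mem _)).not_gt
      (ht _ (List.getElem_mem _) _ (List.getElem_mem _)).not_gt
  · rw [List.getElem_append_right (by omega), List.getElem_append_right (by omega),
      List.getElem_append_right (by omega), List.getElem_append_right (by omega)]
    have := h2 (i - s₁.length) (j - s₁.length) (by omega) (by omega)
    simpa [l1] using this

theorem woi_split {s α β : List ℕ} (h : WordOrdIso s (α ++ β)) (ht : ∀ x ∈ α, ∀ y ∈ β, x < y) :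
    ∃ s₁ s₂, s = s₁ ++ s₂ ∧ WordOrdIso s₁ α ∧ WordOrdIso s₂ β ∧ ∀ x ∈ s₁, ∀ y ∈ s₂, x < y := by
  have hl := h.1
  rw [List.length_append] at hl
  obtain ⟨s₁, s₂, rfl, hs₁⟩ : ∃ s₁ s₂, s = s₁ ++ s₂ ∧ s₁.length = α.length :=
    ⟨s.take α.length, s.drop α.length, (List.take_append_drop _ _).symm, by simp; omega⟩
  have hs₂ : s₂.length = β.length := by simp at hl; omega
  obtain ⟨l, h⟩ := woi_iff.1 h
  refine ⟨s₁, s₂, rfl, woi_iff.2 ⟨hs₁, fun i j hi hj => ?_⟩, woi_iff.2 ⟨hs₂, fun i j hi hj => ?_⟩, ?_⟩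
  · have := h i j (by simp; omega) (by simp; omega)
    rwa [List.getElem_append_left hi, List.getElem_append_left hj,
      List.getElem_append_left (hs₁ ▸ hi), List.getElem_append_left (hs₁ ▸ hj)] at this
  · have := h (s₁.length + i) (s₁.length + j) (by simp; omega) (by simp; omega)
    rw [List.getElem_append_right (by omega), List.getElem_append_right (by omega),
      List.getElem_append_right (by omega), List.getElem_append_right (by omega)] at this
    simpa [hs₁] using this
  · intro x hx y hy
    obtain ⟨i, hi, rfl⟩ := List.getElem_of_mem hx
    obtain ⟨j, hj, rfl⟩ := List.getElem_of_mem hy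
    have := h i (s₁.length + j) (by simp; omega) (by simp; omega)
    rw [List.getElem_append_left hi, List.getElem_append_right (by omega),
      List.getElem_append_left (hs₁ ▸ hi), List.getElem_append_right (by omega)] at this
    have := this.2 (ht _ (List.getElem_mem _) _ (List.getElem_mem _))
    simpa using this

theorem pc_mono {w w' p : List ℕ} (h : w.Sublist w') (hc : PatContains w p) : PatContains w' p := by
  obtain ⟨s, hs, h2⟩ := hc
  exact ⟨s, hs.trans h, h2⟩

theorem pc_map {w p : List ℕ} (f : ℕ → ℕ) (hf : ∀ x ∈ w, ∀ y ∈ w, (f x < f y ↔ x < y)) :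
    PatContains (w.map f) p ↔ PatContains w p := by
  constructor
  · rintro ⟨s, hs, h⟩
    obtain ⟨s', hs', rfl⟩ := List.sublist_map_iff.1 hs
    exact ⟨s', hs', (woi_map_left f (fun x hx y hy => hf x (hs'.subset hx) y (hs'.subset hy))).1 h⟩
  · rintro ⟨s, hs, h⟩
    exact ⟨s.map f, hs.map f, (woi_map_left f (fun x hx y hy => hf x (hs.subset hx) y (hs.subset hy))).2 h⟩

/-- containment for reversed words -/
def PC (L p : List ℕ) : Prop := PatContains L.reverse p

theorem PC.mono {L L' p : List ℕ} (h : L.Sublist L') (hc : PC L p) : PC L' p :=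
  pc_mono h.reverse hc

theorem PC_fil {k : ℕ} {L p : List ℕ} : PC (fil k L) p ↔ PC (L.filter (fun x => k < x)) p := by
  unfold PC fil
  rw [← List.map_reverse, pc_map]
  intro x hx y hy
  simp at hx hy
  omega

theorem pc_nil (w : List ℕ) : PatContains w [] := ⟨[], by simp, woi_nil⟩

theorem PC_one {L : List ℕ} : PC L [1] ↔ L ≠ [] := by
  constructor
  · rintro ⟨s, hs, h⟩ rfl
    simp at hs; subst hs; simpa using h.1
  · intro h
    cases L with
    | nil => simp at h
    | cons a L =>
      refine ⟨[a], by simp, woi_iff.2 ⟨rfl, fun i j hi hj => ?_⟩⟩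
      simp at hi hj; subst hi hj; simp

theorem NCR.mem_stk {L : List ℕ} (h : NCR L) {a : ℕ} :
    a ∈ stk L ↔ a ∈ L ∧ ∀ x < a, ¬ [x, a].Sublist L := by
  induction L with
  | nil => simp [stk]
  | cons c L ih =>
    have ih := ih h.1
    simp only [stk, List.mem_cons, List.mem_filter, decide_eq_true_eq]
    by_cases hac : a = c
    · subst hac
      simp only [true_or, true_and, true_iff]
      intro x hx hs
      have hs' : [x, a].Sublist L := by
        rcases List.sublist_cons_iff.1 hs with hs | ⟨r, hr, _⟩
        · exact hs
        · simp at hr; omega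
      rcases h.2 with h2 | h2
      · have := le_mx (hs'.subset (show a ∈ [x, a] by simp)); omega
      · exact (ih.1 h2).2 x hx hs'
    · simp only [hac, false_or]
      rw [ih]
      constructor
      · rintro ⟨⟨h1, h2⟩, h3⟩
        refine ⟨h1, fun x hx hs => ?_⟩
        rcases List.sublist_cons_iff.1 hs with hs | ⟨r, hr, _⟩
        · exact h2 x hx hs
        · simp at hr; omega
      · rintro ⟨h1, h2⟩
        refine ⟨⟨h1, fun x hx hs => h2 x hx (hs.cons _)⟩, ?_⟩
        by_contra h3
        refine h2 c (by omega) ?_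
        exact List.Sublist.cons_cons _ (List.singleton_sublist.2 h1)

theorem nLetters_eq (w : List ℕ) : nLetters w = mx w := rfl

theorem mx_append (a b : List ℕ) : mx (a ++ b) = max (mx a) (mx b) := by
  induction a with
  | nil => simp
  | cons x a ih => simp [ih, max_assoc]

theorem mx_reverse (a : List ℕ) : mx a.reverse = mx a := by
  induction a with
  | nil => simp
  | cons x a ih => simp [mx_append, ih, max_comm]

theorem isRGF_snoc (w : List ℕ) (a : ℕ) : IsRGF (w ++ [a]) ↔ IsRGF w ∧ 1 ≤ a ∧ a ≤ mx w + 1 := by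
  unfold IsRGF
  have key : (w ++ [a]).getD 0 0 = if w = [] then a else w.getD 0 0 := by
    cases w <;> simp
  rw [key]
  constructor
  · rintro ⟨h1, h2, h3⟩
    refine ⟨⟨fun x hx => h1 x (by simp [hx]), fun hw => ?_, fun i hi => ?_⟩, h1 a (by simp), ?_⟩
    · simpa [hw] using h2
    · have := h3 i (by simp; omega)
      rw [List.getD_append _ _ _ _ hi, List.take_append_of_le_length (by omega)] at this
      exact this
    · cases w with
      | nil => simp at h2; simp [h2]
      | cons x w =>
        have := h3 w.length (by simp)
        simpa [mx] using this
  · rintro ⟨⟨h1, h2, h3⟩, h4, h5⟩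
    refine ⟨?_, ?_, ?_⟩
    · intro x hx
      simp at hx
      rcases hx with hx | rfl
      · exact h1 x hx
      · exact h4
    · intro _
      split_ifs with hw
      · subst hw; simp at h5; omega
      · exact h2 hw
    · intro i hi
      by_cases hiw : i + 1 < w.length
      · rw [List.getD_append _ _ _ _ hiw, List.take_append_of_le_length (by omega)]
        exact h3 i hiw
      · have : i + 1 = w.length := by simp at hi; omega
        rw [this]
        simpa [mx] using h5

theorem isRGF_nil : IsRGF [] := by simp [IsRGF]

theorem cross_iff {w : List ℕ} : PatContains w [1,2,1,2] ↔ ∃ x y, x < y ∧ [x,y,x,y].Sublist w := by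
  constructor
  · rintro ⟨s, hs, h⟩
    obtain ⟨hl, h⟩ := h
    match s, hl with
    | [p, q, r, t], _ =>
      have a := h 0 1 (by simp) (by simp)
      have b := h 0 2 (by simp) (by simp)
      have c := h 2 0 (by simp) (by simp)
      have d := h 1 3 (by simp) (by simp)
      have e := h 3 1 (by simp) (by simp)
      simp at a b c d e
      obtain rfl : p = r := by omega
      obtain rfl : q = t := by omega
      exact ⟨p, q, a, hs⟩
  · rintro ⟨x, y, hxy, hs⟩
    refine ⟨_, hs, rfl, ?_⟩
    intro i j hi hj
    simp at hi hj
    interval_cases i <;> interval_cases j <;> simp <;> omega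

theorem NCR_iff (L : List ℕ) : NCR L ↔ IsRGF L.reverse ∧ NonCrossing L.reverse := by
  have rev4 : ∀ (M : List ℕ) (x y : ℕ), [x,y,x,y].Sublist M.reverse ↔ [y,x,y,x].Sublist M := by
    intro M x y
    rw [← List.reverse_sublist]; simp
  unfold NonCrossing PatAvoids
  induction L with
  | nil =>
    simp only [NCR, true_iff]
    refine ⟨isRGF_nil, ?_⟩
    rw [cross_iff]; simp
  | cons a L ih =>
    rw [List.reverse_cons, isRGF_snoc, mx_reverse, ← List.reverse_cons]
    rw [cross_iff] at ih ⊢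
    simp only [rev4] at ih ⊢
    constructor
    · intro h
      have hL := h.1
      obtain ⟨h1, h2⟩ := ih.1 hL
      refine ⟨⟨h1, h.pos (by simp), h.le_succ⟩, ?_⟩
      rintro ⟨x, y, hxy, hs⟩
      rcases List.sublist_cons_iff.1 hs with hs | ⟨r, hr, hs⟩
      · exact h2 ⟨x, y, hxy, hs⟩
      · obtain ⟨rfl, rfl⟩ := List.cons.inj hr
        rcases h.2 with h3 | h3
        · have := le_mx (hs.subset (show y ∈ [x, y, x] by simp)); omega
        · refine (hL.mem_stk.1 h3).2 x hxy (List.Sublist.trans ?_ hs)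
          simp
    · rintro ⟨⟨h1, h2, h3⟩, h4⟩
      have hL : NCR L := ih.2 ⟨h1, fun ⟨x, y, hxy, hs⟩ => h4 ⟨x, y, hxy, hs.cons _⟩⟩
      refine ⟨hL, ?_⟩
      by_cases ha : a = mx L + 1
      · exact Or.inl ha
      refine Or.inr (hL.mem_stk.2 ⟨hL.mem_of_le h2 (by omega), fun x hx hs => h4 ⟨x, a, hx, ?_⟩⟩)
      apply List.Sublist.cons_cons
      -- need [x, a, x] in L
      clear ih h4 h1
      have hx1 : 1 ≤ x := hL.pos (hs.subset (by simp))
      clear ha h3 h2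
      -- a occurs, and x occurs below it
      induction L with
      | nil => simp at hs
      | cons c L ih2 =>
        rcases List.sublist_cons_iff.1 hs with hs' | ⟨r, hr, hs'⟩
        · exact (ih2 hL.1 hs').cons _
        · obtain ⟨rfl, rfl⟩ := List.cons.inj hr
          apply List.Sublist.cons_cons
          have haL : a ∈ L := List.singleton_sublist.1 hs'
          clear ih2 hs hs' hr
          replace hL := hL.1
          induction L with
          | nil => simp at haL
          | cons d L ih3 =>
            by_cases had : a ∈ L
            · exact (ih3 had hL.1).cons _
            · rcases List.mem_cons.1 haL with rfl | h
              · apply List.Sublist.cons_cons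
                have := hL.le_succ
                exact List.singleton_sublist.2 (hL.1.mem_of_le hx1 (by omega))
              · exact absurd h had

end NCProof
namespace NCProof

theorem sub_pre_aux {L : List ℕ} (h : NCR L) {k : ℕ} {u : List ℕ} (ht : k + 1 ∈ L)
    (hn : ∀ x < k + 1, ¬ [x, k + 1].Sublist L) (hu : ∀ x ∈ u, x < k + 1) (hs : u.Sublist L) :
    u.Sublist (pre k L) := by
  induction L with
  | nil => simp at ht
  | cons d M ih =>
    rw [pre_of_lt (by have := le_mx ht; omega)]
    have hd : k + 1 ≤ d := by
      rcases List.mem_cons.1 ht with hd | hM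
      · omega
      · by_contra hlt
        exact hn d (by omega) (List.Sublist.cons_cons _ (List.singleton_sublist.2 hM))
    have huM : u.Sublist M := by
      rcases List.sublist_cons_iff.1 hs with hs | ⟨r, rfl, _⟩
      · exact hs
      · have := hu d (by simp); omega
    by_cases hM : k + 1 ∈ M
    · exact ih h.1 hM (fun x hx hs => hn x hx (hs.cons _)) huM
    · rw [pre_of_le]
      · exact huM
      · by_contra hlt
        exact hM (h.1.mem_of_le (by omega) (by omega))

theorem sub_pre {L : List ℕ} (h : NCR L) {k : ℕ} {u : List ℕ}
    (hu : ∀ x ∈ u, x < k + 1) (hs : ((k + 1) :: u).Sublist L) :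
    u.Sublist (pre k L) := by
  induction L with
  | nil => simp at hs
  | cons c L ih =>
    rw [pre_of_lt (by have := le_mx (hs.subset (show k + 1 ∈ (k + 1) :: u by simp)); omega)]
    rcases List.sublist_cons_iff.1 hs with hs' | ⟨r, hr, hs'⟩
    · exact ih h.1 hs'
    · obtain ⟨rfl, rfl⟩ := List.cons.inj hr
      rcases h.2 with h2 | h2
      · rw [pre_of_le (by omega)]; exact hs'
      · have := h.1.mem_stk.1 h2
        exact sub_pre_aux h.1 this.1 this.2 hu hs'

theorem filter_pre_sublist (k : ℕ) (L : List ℕ) :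
    (L.filter (fun x => k < x) ++ pre k L).Sublist L := by
  induction L with
  | nil => simp [pre]
  | cons a L ih =>
    by_cases h : mx (a :: L) ≤ k
    · rw [pre_of_le h, List.filter_eq_nil_iff.2]
      · simp
      · intro x hx; have := mx_le.1 h x hx; simp; omega
    · rw [pre_of_lt (by omega), List.filter_cons]
      split_ifs
      · exact ih.cons_cons _
      · exact ih.cons _

theorem PC_comp {L : List ℕ} (h : NCR L) {α β : List ℕ} (hβ : IsRGF β) :
    PC L (rgfComp α β) ↔ ∃ k ≤ mx L, PC (pre k L) α ∧ PC (fil k L) β := by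
  have hsep : ∀ x ∈ α, ∀ y ∈ β.map (· + nLetters α), x < y := by
    intro x hx y hy
    simp only [List.mem_map] at hy
    obtain ⟨z, hz, rfl⟩ := hy
    have := hβ.1 z hz
    have := le_mx hx
    rw [nLetters_eq]; omega
  constructor
  · rintro ⟨s, hs, hw⟩
    obtain ⟨s₁, s₂, rfl, h1, h2, hlt⟩ := woi_split hw hsep
    rw [woi_map_right _ (by intros; omega)] at h2
    cases s₂ with
    | nil =>
      have : β = [] := by have := h2.1; simp at this; exact List.eq_nil_of_length_eq_zero this.symm
      subst this
      refine ⟨mx L, le_rfl, ?_, pc_nil _⟩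
      rw [pre_of_le le_rfl]
      exact ⟨s₁, by simpa using hs, h1⟩
    | cons t s₂ =>
      have hmin : ∀ x ∈ t :: s₂, t ≤ x := by
        intro x hx
        obtain ⟨j, hj, rfl⟩ := List.getElem_of_mem hx
        obtain ⟨hl, H⟩ := woi_iff.1 h2
        have := H j 0 hj (by simp)
        by_contra hlt
        have h3 := this.1 (by simpa using hlt)
        have hβne : β ≠ [] := by rintro rfl; simp at hl
        have h4 := hβ.2.1 hβne
        rw [List.getD_eq_getElem _ _ (by rw [← hl]; simp)] at h4
        have := hβ.1 _ (List.getElem_mem (hl ▸ hj))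
        omega
      have htL : t ∈ L := List.mem_reverse.1 (hs.subset (by simp))
      have ht1 := h.pos htL
      obtain ⟨k, rfl⟩ : ∃ k, t = k + 1 := ⟨t - 1, by omega⟩
      refine ⟨k, by have := le_mx htL; omega, ?_, ?_⟩
      · refine ⟨s₁, ?_, h1⟩
        rw [← List.reverse_sublist, List.reverse_reverse]
        apply sub_pre h
        · intro x hx; exact hlt x (by simpa using hx) _ (by simp)
        · rw [← List.reverse_sublist]
          refine List.Sublist.trans ?_ hs
          simp
      · rw [PC_fil]
        refine ⟨_, ?_, h2⟩
        rw [← List.filter_reverse]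
        have h5 := (List.sublist_append_right s₁ ((k + 1) :: s₂)).trans hs
        have h6 := h5.filter (fun x => k < x)
        rwa [List.filter_eq_self.2 (by intro x hx; have := hmin x hx; simp; omega)] at h6
  · rintro ⟨k, _, ⟨s₁, hs₁, h1⟩, h2⟩
    rw [PC_fil] at h2
    obtain ⟨s₂, hs₂, h2⟩ := h2
    refine ⟨s₁ ++ s₂, ?_, ?_⟩
    · refine (List.Sublist.append hs₁ hs₂).trans ?_
      rw [← List.reverse_append, List.reverse_sublist]
      exact filter_pre_sublist k L
    · refine woi_append h1 ((woi_map_right _ (by intros; omega)).2 h2) ?_ hsep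
      intro x hx y hy
      have hx' := List.mem_reverse.1 (hs₁.subset hx)
      have hy' := hs₂.subset hy
      simp at hy'
      have := mx_pre_le k L
      have := le_mx hx'
      omega

theorem glue_nil_eq (X Y : List ℕ) : glue X Y [] = Y.map (· + mx X) ++ X := by
  induction Y with
  | nil => simp [glue_nil]
  | cons y Y ih => rw [glue_cons_nil, ih]; simp

theorem rgfComp_reverse (a b : List ℕ) : (rgfComp a b).reverse = glue a.reverse b.reverse [] := by
  rw [glue_nil_eq, mx_reverse]; simp [rgfComp, nLetters_eq, List.map_reverse]

theorem mx_map_add (b : List ℕ) (m : ℕ) : max m (mx (b.map (· + m))) = m + mx b := by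
  induction b with
  | nil => simp
  | cons x b ih => simp only [List.map_cons, mx_cons]; omega

theorem nLetters_comp (a b : List ℕ) : nLetters (rgfComp a b) = nLetters a + nLetters b := by
  simp only [rgfComp, nLetters_eq, mx_append, mx_map_add]

theorem rgfComp_assoc (a b c : List ℕ) :
    rgfComp (rgfComp a b) c = rgfComp a (rgfComp b c) := by
  have := nLetters_comp a b
  unfold rgfComp at *
  rw [this]
  simp only [List.append_assoc, List.map_append, List.map_map]
  congr 2
  apply List.map_congr_left
  intro x _
  simp; omega

theorem rgfComp_nil (b : List ℕ) : rgfComp [] b = b := by simp [rgfComp, nLetters]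

theorem hasComp_append {a b : List ℕ} {p q : ℕ} (ha : HasComponents a p) (hb : HasComponents b q) :
    HasComponents (rgfComp a b) (p + q) := by
  obtain ⟨l, rfl, h1, rfl⟩ := ha
  obtain ⟨m, rfl, h2, rfl⟩ := hb
  refine ⟨l ++ m, by simp, ?_, ?_⟩
  · intro c hc
    rcases List.mem_append.1 hc with hc | hc
    · exact h1 c hc
    · exact h2 c hc
  · clear h1
    induction l with
    | nil => simp [rgfComp_nil]
    | cons x l ih => simp only [List.foldr_cons, List.cons_append, ← ih, rgfComp_assoc]

theorem NCR_of_comp {a b : List ℕ} (ha : IsRGF a) (hb : IsRGF b) (h : NCR (rgfComp a b).reverse) :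
    NCR a.reverse ∧ NCR b.reverse := by
  have hnc := ((NCR_iff _).1 h).2
  rw [List.reverse_reverse] at hnc
  rw [NCR_iff, NCR_iff, List.reverse_reverse, List.reverse_reverse]
  refine ⟨⟨ha, fun hc => hnc ?_⟩, ⟨hb, fun hc => hnc ?_⟩⟩
  · exact pc_mono (List.sublist_append_left _ _) hc
  · refine pc_mono (List.sublist_append_right _ _) ((pc_map _ ?_).2 hc)
    intros; omega

theorem stk_comp {a b : List ℕ} (hb : IsRGF b) (h : NCR a.reverse) :
    (stk (rgfComp a b).reverse).length = (stk a.reverse).length + (stk b.reverse).length := by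
  rw [rgfComp_reverse, glue_stk h (VC.nil _ _) (fun y hy => hb.1 y (by simpa using hy))]
  simp [gst, Nat.add_comm]

theorem stk_pos {L : List ℕ} (h : L ≠ []) : 1 ≤ (stk L).length := by
  cases L with
  | nil => simp at h
  | cons a L => simp [stk]

theorem conn_stk {L : List ℕ} (h : NCR L) (hc : Connected L.reverse) : (stk L).length = 1 := by
  obtain ⟨hne, hc⟩ := hc
  by_contra hlen
  apply hc
  cases L with
  | nil => simp at hne
  | cons t L =>
  have h1 : ∃ x, x ∈ stk (t :: L) ∧ x < t := by
    simp only [stk, List.length_cons] at hlen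
    have : (stk L).filter (fun x => x < t) ≠ [] := by
      intro h0; rw [h0] at hlen; simp at hlen
    obtain ⟨x, hx⟩ := List.exists_mem_of_ne_nil _ this
    refine ⟨x, by simp only [stk, List.mem_cons]; exact Or.inr hx, ?_⟩
    simpa using (List.mem_filter.1 hx).2
  obtain ⟨x, hx, hxt⟩ := h1
  have hx1 := h.pos (stk_subset hx)
  obtain ⟨k, rfl⟩ : ∃ k, t = k + 1 := ⟨t - 1, by omega⟩
  have hk : k ≤ mx ((k + 1) :: L) := by rw [mx_cons]; omega
  obtain ⟨ch, hv, hg⟩ := exists_glue h hk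
  have hX := h.pre k
  have hY := h.fil k
  have hm := h.mx_pre hk
  have hst := glue_stk hX hv (fun z hz => hY.pos hz)
  rw [hg] at hst
  have hhead : k + 1 ∈ gst (pre k ((k + 1) :: L)) (fil k ((k + 1) :: L)) ch := by
    rw [← hst]; simp [stk]
  cases ch with
  | cons c ch =>
    exfalso
    simp only [gst, List.mem_append, List.mem_map, List.mem_filter, decide_eq_true_eq] at hhead
    rcases hhead with ⟨y, hy, hyk⟩ | hb
    · have := hY.pos (stk_subset (hv.1 c (by simp)).2)
      omega
    · have := le_mx (stk_subset hb.1); omega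
  | nil =>
    refine ⟨(pre k ((k + 1) :: L)).reverse, (fil k ((k + 1) :: L)).reverse,
      ((NCR_iff _).1 hX).1, ((NCR_iff _).1 hY).1, ?_, ?_, ?_⟩
    · intro h0
      rw [List.reverse_eq_nil_iff] at h0
      rw [h0] at hm; simp at hm; omega
    · intro h0
      rw [List.reverse_eq_nil_iff, fil_eq_nil] at h0
      simp at h0
    · rw [← List.reverse_inj, rgfComp_reverse, List.reverse_reverse, List.reverse_reverse,
        List.reverse_reverse, hg]

theorem hasComp_stk {w : List ℕ} (h : NCR w.reverse) : HasComponents w (stk w.reverse).length := by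
  induction hn : w.length using Nat.strong_induction_on generalizing w with
  | _ n ih =>
  subst hn
  by_cases hw : w = []
  · subst hw; exact ⟨[], rfl, by simp, rfl⟩
  by_cases hc : Connected w
  · rw [conn_stk h (by simpa using hc)]
    refine ⟨[w], rfl, ?_, by simp [rgfComp]⟩
    intro c hc'
    simp at hc'; subst hc'
    exact ⟨by simpa using ((NCR_iff _).1 h).1, hc⟩
  · have : ∃ a b : List ℕ, IsRGF a ∧ IsRGF b ∧ a ≠ [] ∧ b ≠ [] ∧ w = rgfComp a b := by
      by_contra h0; exact hc ⟨hw, h0⟩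
    obtain ⟨a, b, ha, hb, ha0, hb0, rfl⟩ := this
    obtain ⟨h1, h2⟩ := NCR_of_comp ha hb h
    have la := List.length_pos_of_ne_nil ha0
    have lb := List.length_pos_of_ne_nil hb0
    rw [stk_comp hb h1]
    exact hasComp_append (ih _ (by simp [rgfComp]; omega) h1 rfl) (ih _ (by simp [rgfComp]; omega) h2 rfl)

theorem isRGF_comp {a b : List ℕ} (ha : IsRGF a) (hb : IsRGF b) : IsRGF (rgfComp a b) := by
  induction b using List.reverseRecOn with
  | nil => simpa [rgfComp] using ha
  | append_singleton b x ih =>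
    rw [isRGF_snoc] at hb
    have := ih hb.1
    have e : rgfComp a (b ++ [x]) = rgfComp a b ++ [x + nLetters a] := by simp [rgfComp]
    rw [e, isRGF_snoc]
    refine ⟨this, by omega, ?_⟩
    have := nLetters_comp a b
    simp only [nLetters_eq] at *
    omega

theorem hasComp_eq {w : List ℕ} (h : NCR w.reverse) {p : ℕ} (hc : HasComponents w p) :
    (stk w.reverse).length = p := by
  obtain ⟨l, rfl, h1, rfl⟩ := hc
  have hr : ∀ l : List (List ℕ), (∀ c ∈ l, IsRGF c ∧ Connected c) → IsRGF (l.foldr rgfComp []) := by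
    intro l
    induction l with
    | nil => intro _; exact isRGF_nil
    | cons c l ih =>
      intro h
      exact isRGF_comp (h c (by simp)).1 (ih (fun d hd => h d (by simp [hd])))
  induction l with
  | nil => simp [stk]
  | cons c l ih =>
    simp only [List.foldr_cons] at h ⊢
    have hl : ∀ c ∈ l, IsRGF c ∧ Connected c := fun d hd => h1 d (by simp [hd])
    obtain ⟨h2, h3⟩ := NCR_of_comp (h1 c (by simp)).1 (hr l hl) h
    rw [stk_comp (hr l hl) h2, ih hl h3, conn_stk h2 (by simpa using (h1 c (by simp)).2)]
    simp; omega

theorem hasComp_iff {w : List ℕ} (h : NCR w.reverse) {p : ℕ} :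
    HasComponents w p ↔ (stk w.reverse).length = p :=
  ⟨hasComp_eq h, fun e => e ▸ hasComp_stk h⟩

end NCProof
namespace NCProof

/-- order reversing matching of two stacks -/
def Anti (S T : List ℕ) (g : ℕ → ℕ) : Prop :=
  (∀ a ∈ S, g a ∈ T) ∧ (∀ a ∈ S, ∀ b ∈ S, a < b → g b < g a) ∧
  (∀ a ∈ S, (T.filter (fun x => x ≤ g a)).length = (S.filter (fun x => a < x)).length + 1) ∧
  (∀ a ∈ S, (T.filter (fun x => g a < x)).length + 1 = (S.filter (fun x => x ≤ a)).length)

theorem exists_anti (S T : List ℕ) (hS : S.Pairwise (· > ·)) (hT : T.Pairwise (· > ·))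
    (hl : S.length = T.length) : ∃ g, Anti S T g := by
  induction S generalizing T with
  | nil => exact ⟨id, by simp [Anti]⟩
  | cons a S ih =>
    rcases List.eq_nil_or_concat T with rfl | ⟨T', b, rfl⟩
    · simp at hl
    rw [List.concat_eq_append] at *
    rw [List.pairwise_cons] at hS
    rw [List.pairwise_append] at hT
    obtain ⟨g, h1, h2, h3, h4⟩ := ih T' hS.2 hT.1 (by simpa using hl)
    have hb : ∀ x ∈ T', b < x := fun x hx => hT.2.2 x hx b (by simp)
    have hne : ∀ x ∈ S, x ≠ a := fun x hx => by have := hS.1 x hx; omega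
    have hll : S.length = T'.length := by simpa using hl
    refine ⟨fun x => if x = a then b else g x, ?_, ?_, ?_, ?_⟩
    · intro x hx
      rcases List.mem_cons.1 hx with rfl | hx
      · simp
      · simp [hne x hx, h1 x hx]
    · intro x hx y hy hxy
      rcases List.mem_cons.1 hx with hx' | hx' <;> rcases List.mem_cons.1 hy with hy' | hy'
      · omega
      · have := hS.1 y hy'; omega
      · simp only [hne x hx', hy', if_true, if_false]
        exact hb _ (h1 x hx')
      · simp only [hne x hx', hne y hy', if_false]
        exact h2 x hx' y hy' hxy
    · intro x hx
      rcases List.mem_cons.1 hx with hx' | hx'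
      · have e1 : T'.filter (fun y => decide (y ≤ b)) = [] :=
          List.filter_eq_nil_iff.2 (fun y hy => by have := hb y hy; simp; omega)
        have e2 : (a :: S).filter (fun y => decide (a < y)) = [] := by
          refine List.filter_eq_nil_iff.2 (fun y hy => ?_)
          rcases List.mem_cons.1 hy with hy | hy
          · simp [hy]
          · have := hS.1 y hy; simp; omega
        subst hx'
        simp only [if_true]
        rw [List.filter_append, e1, e2]
        simp
      · have e1 := hb _ (h1 x hx')
        have e2 := hS.1 x hx'
        simp only [hne x hx', if_false, List.filter_append, List.filter_cons, List.length_append]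
        rw [h3 x hx', if_pos (by simp; omega), if_pos (by simpa using e2)]
        simp
    · intro x hx
      rcases List.mem_cons.1 hx with hx' | hx'
      · have e1 : T'.filter (fun y => decide (b < y)) = T' :=
          List.filter_eq_self.2 (fun y hy => by have := hb y hy; simp; omega)
        have e2 : (a :: S).filter (fun y => decide (y ≤ a)) = a :: S := by
          refine List.filter_eq_self.2 (fun y hy => ?_)
          rcases List.mem_cons.1 hy with hy | hy
          · simp [hy]
          · have := hS.1 y hy; simp; omega
        subst hx'
        simp only [if_true]
        rw [List.filter_append, e1, e2]
        simp [hll]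
      · have e1 := hb _ (h1 x hx')
        have e2 := hS.1 x hx'
        simp only [hne x hx', if_false, List.filter_append, List.filter_cons, List.length_append]
        rw [if_neg (by simp; omega), if_neg (by simpa using e2), ← h4 x hx']
        simp

theorem Anti.inj {S T : List ℕ} {g : ℕ → ℕ} (h : Anti S T g) {a b : ℕ} (ha : a ∈ S) (hb : b ∈ S)
    (he : g a = g b) : a = b := by
  rcases lt_trichotomy a b with hlt | hlt | hlt
  · have := h.2.1 a ha b hb hlt; omega
  · exact hlt
  · have := h.2.1 b hb a ha hlt; omega

/-- reflection of chains -/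
def chm (g₁ g₂ : ℕ → ℕ) (ch : List (ℕ × ℕ)) : List (ℕ × ℕ) := ch.map (fun c => (g₂ c.2, g₁ c.1))

theorem chm_VC {X Y X' Y' : List ℕ} {g₁ g₂ : ℕ → ℕ} (h₁ : Anti (stk X) (stk X') g₁)
    (h₂ : Anti (stk Y) (stk Y') g₂) {ch} (h : VC X Y ch) : VC Y' X' (chm g₁ g₂ ch) := by
  refine ⟨?_, ?_⟩
  · intro c hc
    simp only [chm, List.mem_map] at hc
    obtain ⟨d, hd, rfl⟩ := hc
    exact ⟨h₂.1 _ (h.1 d hd).2, h₁.1 _ (h.1 d hd).1⟩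
  · rw [chm, List.pairwise_map]
    refine h.2.imp_of_mem ?_
    intro c d hc hd hcd
    obtain ⟨hc1, hc2⟩ := h.1 c hc
    obtain ⟨hd1, hd2⟩ := h.1 d hd
    constructor
    · rcases hcd.2.lt_or_eq with hlt | heq
      · exact (h₂.2.1 _ hd2 _ hc2 hlt).le
      · simp [heq]
    · rcases hcd.1.lt_or_eq with hlt | heq
      · exact (h₁.2.1 _ hc1 _ hd1 hlt).le
      · simp [heq]

theorem chm_inj {X Y X' Y' : List ℕ} {g₁ g₂ : ℕ → ℕ} (h₁ : Anti (stk X) (stk X') g₁)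
    (h₂ : Anti (stk Y) (stk Y') g₂) {ch ch'} (h : VC X Y ch) (h' : VC X Y ch')
    (he : chm g₁ g₂ ch = chm g₁ g₂ ch') : ch = ch' := by
  induction ch generalizing ch' with
  | nil =>
    cases ch' with
    | nil => rfl
    | cons c ch' => simp [chm] at he
  | cons c ch ih =>
    cases ch' with
    | nil => simp [chm] at he
    | cons c' ch' =>
      simp only [chm, List.map_cons, List.cons.injEq, Prod.mk.injEq] at he
      obtain ⟨⟨e1, e2⟩, e3⟩ := he
      have hc := h.1 c (by simp)
      have hc' := h'.1 c' (by simp)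
      rw [ih h.tail h'.tail e3]
      congr 1
      exact Prod.ext (h₁.inj hc.1 hc'.1 e2) (h₂.inj hc.2 hc'.2 e1)

theorem chm_gst {X Y X' Y' : List ℕ} {g₁ g₂ : ℕ → ℕ} (h₁ : Anti (stk X) (stk X') g₁)
    (h₂ : Anti (stk Y) (stk Y') g₂) (l₁ : (stk X).length = (stk X').length)
    (l₂ : (stk Y).length = (stk Y').length) {ch} (h : VC X Y ch) :
    (gst Y' X' (chm g₁ g₂ ch)).length = (gst X Y ch).length := by
  cases ch with
  | nil => simp [gst, chm]; omega
  | cons c ch =>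
    have hc := h.1 c (by simp)
    have e1 := h₁.2.2.2 _ hc.1
    have e2 := h₂.2.2.1 _ hc.2
    simp only [gst, chm, List.map_cons, List.length_append, List.length_map]
    omega

/-- the set of reversed words of given length and number of components with a property -/
def WS (P : List ℕ → Prop) (n p : ℕ) : Set (List ℕ) :=
  {w | NCR w ∧ w.length = n ∧ (stk w).length = p ∧ P w}

/-- words with a marked split -/
def SS (P Q : List ℕ → Prop) (n p : ℕ) : Set (List ℕ × ℕ) :=
  {x | NCR x.1 ∧ x.1.length = n ∧ (stk x.1).length = p ∧ x.2 ≤ mx x.1 ∧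
    P (pre x.2 x.1) ∧ Q (fil x.2 x.1)}

theorem NCR.mx_le_length {L : List ℕ} (h : NCR L) : mx L ≤ L.length := by
  induction L with
  | nil => simp
  | cons a L ih => have := ih h.1; have := h.le_succ; simp; omega

theorem words_finite (n : ℕ) : {w : List ℕ | NCR w ∧ w.length = n}.Finite := by
  refine ((List.finite_length_eq (Fin (n + 1)) n).image (List.map Fin.val)).subset ?_
  rintro w ⟨h, hl⟩
  refine ⟨w.map (fun x => Fin.ofNat (n + 1) x), by simpa using hl, ?_⟩
  rw [List.map_map]
  conv_rhs => rw [← List.map_id w]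
  apply List.map_congr_left
  intro x hx
  have := le_mx hx
  have := h.mx_le_length
  simp
  omega

theorem WS_finite (P : List ℕ → Prop) (n p : ℕ) : (WS P n p).Finite :=
  (words_finite n).subset fun _ h => ⟨h.1, h.2.1⟩

theorem SS_finite (P Q : List ℕ → Prop) (n p : ℕ) : (SS P Q n p).Finite := by
  refine ((words_finite n).prod (Set.finite_Iic n)).subset ?_
  rintro ⟨w, k⟩ ⟨h1, h2, _, h4, _⟩
  refine ⟨⟨h1, h2⟩, ?_⟩
  have := h1.mx_le_length
  simp at *
  omega

theorem exists_transfer {P P' : List ℕ → Prop} (h : ∀ n p, (WS P n p).ncard = (WS P' n p).ncard) :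
    ∃ φ : List ℕ → List ℕ, (∀ X, NCR X → P X → NCR (φ X) ∧ P' (φ X) ∧ (φ X).length = X.length ∧
      (stk X).length = (stk (φ X)).length) ∧
      ∀ X X', NCR X → P X → NCR X' → P X' → φ X = φ X' → X = X' := by
  have : ∀ n p, ∃ f : List ℕ → List ℕ, Set.BijOn f (WS P n p) (WS P' n p) := by
    intro n p
    apply (WS_finite P n p).exists_bijOn_of_encard_eq
    rw [← (WS_finite P n p).cast_ncard_eq, ← (WS_finite P' n p).cast_ncard_eq, h]
  choose f hf using this
  have key : ∀ X, NCR X → P X → f X.length (stk X).length X ∈ WS P' X.length (stk X).length :=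
    fun X h1 h2 => (hf _ _).mapsTo ⟨h1, rfl, rfl, h2⟩
  refine ⟨fun X => f X.length (stk X).length X, ?_, ?_⟩
  · intro X h1 h2
    obtain ⟨k1, k2, k3, k4⟩ := key X h1 h2
    exact ⟨k1, k4, k2, k3.symm⟩
  · intro X X' h1 h2 h1' h2' he
    have k := key X h1 h2
    have k' := key X' h1' h2'
    simp only at he
    have el : X.length = X'.length := by rw [← k.2.1, ← k'.2.1, he]
    have es : (stk X).length = (stk X').length := by rw [← k.2.2.1, ← k'.2.2.1, he]
    rw [← el, ← es] at he
    exact (hf _ _).injOn ⟨h1, rfl, rfl, h2⟩ ⟨h1', el.symm, es.symm, h2'⟩ he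

theorem SS_le {P Q P' Q' : List ℕ → Prop} (hP : ∀ n p, (WS P n p).ncard = (WS P' n p).ncard)
    (hQ : ∀ n p, (WS Q n p).ncard = (WS Q' n p).ncard) (n p : ℕ) :
    (SS P Q n p).ncard ≤ (SS Q' P' n p).ncard := by
  obtain ⟨φ, hφ, φinj⟩ := exists_transfer hP
  obtain ⟨ψ, hψ, ψinj⟩ := exists_transfer hQ
  have hanti : ∀ S T : List ℕ, ∃ g, S.Pairwise (· > ·) → T.Pairwise (· > ·) → S.length = T.length →
      Anti S T g := by
    intro S T
    by_cases h : S.Pairwise (· > ·) ∧ T.Pairwise (· > ·) ∧ S.length = T.length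
    · obtain ⟨g, hg⟩ := exists_anti S T h.1 h.2.1 h.2.2
      exact ⟨g, fun _ _ _ => hg⟩
    · exact ⟨id, fun a b c => absurd ⟨a, b, c⟩ h⟩
  choose g hg using hanti
  have hch : ∀ x : List ℕ × ℕ, ∃ ch, NCR x.1 → x.2 ≤ mx x.1 →
      VC (pre x.2 x.1) (fil x.2 x.1) ch ∧ glue (pre x.2 x.1) (fil x.2 x.1) ch = x.1 := by
    intro x
    by_cases h : NCR x.1 ∧ x.2 ≤ mx x.1
    · obtain ⟨ch, hc⟩ := exists_glue h.1 h.2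
      exact ⟨ch, fun _ _ => hc⟩
    · exact ⟨[], fun a b => absurd ⟨a, b⟩ h⟩
  choose ch hch using hch
  -- the data of the image
  have main : ∀ x ∈ SS P Q n p,
      Anti (stk (pre x.2 x.1)) (stk (φ (pre x.2 x.1))) (g (stk (pre x.2 x.1)) (stk (φ (pre x.2 x.1)))) ∧
      Anti (stk (fil x.2 x.1)) (stk (ψ (fil x.2 x.1))) (g (stk (fil x.2 x.1)) (stk (ψ (fil x.2 x.1)))) := by
    rintro x ⟨h1, h2, h3, h4, h5, h6⟩
    exact ⟨hg _ _ (stk_sorted _) (stk_sorted _) (hφ _ (h1.pre _) h5).2.2.2,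
      hg _ _ (stk_sorted _) (stk_sorted _) (hψ _ (h1.fil _) h6).2.2.2⟩
  let C : List ℕ × ℕ → List (ℕ × ℕ) := fun x =>
    chm (g (stk (pre x.2 x.1)) (stk (φ (pre x.2 x.1)))) (g (stk (fil x.2 x.1)) (stk (ψ (fil x.2 x.1)))) (ch x)
  let F : List ℕ × ℕ → List ℕ × ℕ := fun x =>
    (glue (ψ (fil x.2 x.1)) (φ (pre x.2 x.1)) (C x), mx (ψ (fil x.2 x.1)))
  have hC : ∀ x ∈ SS P Q n p, VC (ψ (fil x.2 x.1)) (φ (pre x.2 x.1)) (C x) := by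
    intro x hx
    exact chm_VC (main x hx).1 (main x hx).2 (hch x hx.1 hx.2.2.2.1).1
  have hpre : ∀ x ∈ SS P Q n p, pre (F x).2 (F x).1 = ψ (fil x.2 x.1) := by
    intro x hx
    exact glue_pre (hC x hx) (fun y hy => (hφ _ (hx.1.pre _) hx.2.2.2.2.1).1.pos hy)
  have hfil : ∀ x ∈ SS P Q n p, fil (F x).2 (F x).1 = φ (pre x.2 x.1) := by
    intro x hx
    exact glue_fil (hC x hx) (fun y hy => (hφ _ (hx.1.pre _) hx.2.2.2.2.1).1.pos hy)
  refine Set.ncard_le_ncard_of_injOn F ?_ ?_ (SS_finite _ _ _ _)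
  · intro x hx
    have hv := hC x hx
    have hp := hpre x hx
    have hf := hfil x hx
    have hm := main x hx
    obtain ⟨h1, h2, h3, h4, h5, h6⟩ := hx
    obtain ⟨a1, a2, a3, a4⟩ := hφ _ (h1.pre x.2) h5
    obtain ⟨b1, b2, b3, b4⟩ := hψ _ (h1.fil x.2) h6
    obtain ⟨c1, c2⟩ := hch x h1 h4
    refine ⟨glue_NCR b1 a1 hv, ?_, ?_, ?_, ?_, ?_⟩
    · have e := glue_length hv
      have e' := glue_length c1
      rw [c2] at e'
      have : (C x).length = (ch x).length := by simp [C, chm]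
      show (glue _ _ _).length = n
      omega
    · show (stk (glue _ _ _)).length = p
      rw [glue_stk b1 hv (fun y hy => a1.pos hy)]
      rw [chm_gst hm.1 hm.2 a4 b4 c1]
      rw [← glue_stk (h1.pre _) c1 (fun y hy => (h1.fil _).pos hy), c2, h3]
    · show mx _ ≤ mx (glue _ _ _)
      rw [glue_mx hv]; omega
    · rw [hp]; exact b2
    · rw [hf]; exact a2
  · intro x hx x' hx' he
    have eψ : ψ (fil x.2 x.1) = ψ (fil x'.2 x'.1) := by rw [← hpre x hx, ← hpre x' hx', he]
    have eφ : φ (pre x.2 x.1) = φ (pre x'.2 x'.1) := by rw [← hfil x hx, ← hfil x' hx', he]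
    have eY := ψinj _ _ (hx.1.fil _) hx.2.2.2.2.2 (hx'.1.fil _) hx'.2.2.2.2.2 eψ
    have eX := φinj _ _ (hx.1.pre _) hx.2.2.2.2.1 (hx'.1.pre _) hx'.2.2.2.2.1 eφ
    have hv := hC x hx
    have hv' := hC x' hx'
    have e1 : glue (ψ (fil x.2 x.1)) (φ (pre x.2 x.1)) (C x) =
      glue (ψ (fil x'.2 x'.1)) (φ (pre x'.2 x'.1)) (C x') := congrArg Prod.fst he
    rw [← eψ, ← eφ] at e1 hv'
    have e2 := glue_inj hv hv' (fun y hy => (hφ _ (hx.1.pre _) hx.2.2.2.2.1).1.pos hy) e1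
    obtain ⟨c1, c2⟩ := hch x hx.1 hx.2.2.2.1
    obtain ⟨c1', c2'⟩ := hch x' hx'.1 hx'.2.2.2.1
    have m1 := hx.1.mx_pre hx.2.2.2.1
    have m2 := hx'.1.mx_pre hx'.2.2.2.1
    simp only [C] at e2
    rw [← eX] at c1' c2' e2 m2
    rw [← eY] at c1' c2' e2
    have e3 := chm_inj (main x hx).1 (main x hx).2 c1 c1' e2
    refine Prod.ext ?_ ?_
    · rw [← c2, ← c2', e3]
    · rw [← m1, ← m2]

theorem SS_eq {P Q P' Q' : List ℕ → Prop} (hP : ∀ n p, (WS P n p).ncard = (WS P' n p).ncard)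
    (hQ : ∀ n p, (WS Q n p).ncard = (WS Q' n p).ncard) (n p : ℕ) :
    (SS P Q n p).ncard = (SS Q' P' n p).ncard :=
  le_antisymm (SS_le hP hQ n p)
    (SS_le (fun n p => (hQ n p).symm) (fun n p => (hP n p).symm) n p)

theorem ncCount_eq (n p : ℕ) (τ : List ℕ) : ncCount n p τ = (WS (fun w => ¬ PC w τ) n p).ncard := by
  unfold ncCount
  rw [← Set.ncard_image_of_injective _ List.reverse_injective]
  congr 1
  ext w
  simp only [Set.mem_image, Set.mem_setOf_eq, WS]
  constructor
  · rintro ⟨v, ⟨h1, h2, h3, h4, h5⟩, rfl⟩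
    have hn : NCR v.reverse := (NCR_iff _).2 (by simpa using ⟨h1, h2⟩)
    exact ⟨hn, by simpa using h3, (hasComp_iff hn).1 h5, by unfold PC; rw [List.reverse_reverse]; exact h4⟩
  · rintro ⟨h1, h2, h3, h4⟩
    have := (NCR_iff _).1 h1
    exact ⟨w.reverse, ⟨this.1, this.2, by simpa using h2, h4,
      (hasComp_iff (by simpa using h1)).2 (by simpa using h3)⟩, by simp⟩

theorem SS_card {P Q R : List ℕ → Prop}
    (hR : ∀ w, NCR w → (R w ↔ ∃ k ≤ mx w, P (pre k w) ∧ Q (fil k w)))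
    (hu : ∀ w, NCR w → ∀ k ≤ mx w, ∀ k' ≤ mx w, P (pre k w) → Q (fil k w) → P (pre k' w) →
      Q (fil k' w) → k = k') (n p : ℕ) :
    (SS P Q n p).ncard = (WS R n p).ncard := by
  have : WS R n p = Prod.fst '' SS P Q n p := by
    ext w
    simp only [WS, SS, Set.mem_image, Set.mem_setOf_eq, Prod.exists, exists_and_right, exists_eq_right]
    constructor
    · rintro ⟨h1, h2, h3, h4⟩
      obtain ⟨k, hk⟩ := (hR w h1).1 h4
      exact ⟨k, h1, h2, h3, hk⟩
    · rintro ⟨k, h1, h2, h3, hk⟩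
      exact ⟨h1, h2, h3, (hR w h1).2 ⟨k, hk⟩⟩
  rw [this, Set.ncard_image_of_injOn]
  rintro ⟨w, k⟩ ⟨h1, _, _, h4, h5, h6⟩ ⟨w', k'⟩ ⟨h1', _, _, h4', h5', h6'⟩ he
  simp only at he
  subst he
  rw [hu w h1 k h4 k' h4' h5 h6 h5' h6']

theorem WS_split {σ τ : List ℕ} (h : ∀ w, NCR w → PC w τ → PC w σ) (n p : ℕ) :
    (WS (fun w => ¬ PC w τ) n p).ncard =
      (WS (fun w => ¬ PC w σ) n p).ncard + (WS (fun w => PC w σ ∧ ¬ PC w τ) n p).ncard := by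
  rw [← Set.ncard_union_eq _ (WS_finite _ _ _) (WS_finite _ _ _)]
  · congr 1
    ext w
    simp only [WS, Set.mem_union, Set.mem_setOf_eq]
    have := h w
    tauto
  · rw [Set.disjoint_left]
    rintro w ⟨_, _, _, h1⟩ ⟨_, _, _, h2, _⟩
    exact h1 h2

/-- first class -/
def CA (σ : List ℕ) (w : List ℕ) : Prop := PC w σ ∧ ¬ PC w (rgfComp σ [1])
/-- second class -/
def CB (σ : List ℕ) (w : List ℕ) : Prop := PC w σ ∧ ¬ PC w (rgfComp [1] σ)

theorem rgf_one : IsRGF [1] := by simp [IsRGF]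

theorem PC_one_right {L : List ℕ} (h : NCR L) (σ : List ℕ) :
    PC L (rgfComp σ [1]) ↔ ∃ k < mx L, PC (pre k L) σ := by
  rw [PC_comp h rgf_one]
  simp only [PC_one, Ne, fil_eq_nil]
  constructor
  · rintro ⟨k, _, h1, h2⟩; exact ⟨k, by omega, h1⟩
  · rintro ⟨k, h1, h2⟩; exact ⟨k, by omega, h2, by omega⟩

theorem PC_one_left {L : List ℕ} (h : NCR L) {σ : List ℕ} (hσ : IsRGF σ) :
    PC L (rgfComp [1] σ) ↔ ∃ k, 1 ≤ k ∧ k ≤ mx L ∧ PC (fil k L) σ := by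
  rw [PC_comp h hσ]
  simp only [PC_one]
  constructor
  · rintro ⟨k, hk, h1, h2⟩
    refine ⟨k, ?_, hk, h2⟩
    obtain ⟨x, hx⟩ := List.exists_mem_of_ne_nil _ h1
    have := (h.pre k).pos hx
    have := le_mx hx
    have := mx_pre_le k L
    omega
  · rintro ⟨k, h1, hk, h2⟩
    refine ⟨k, hk, fun h0 => ?_, h2⟩
    have := h.mx_pre hk
    rw [h0] at this; simp at this; omega

theorem pre_sublist_pre {j k : ℕ} (hjk : j ≤ k) (L : List ℕ) : (pre j L).Sublist (pre k L) := by
  rw [← pre_pre hjk]; exact (pre_suffix _ _).sublist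

theorem PC_fil_mono {j k : ℕ} (hjk : j ≤ k) {L p : List ℕ} (h : PC (fil k L) p) : PC (fil j L) p := by
  rw [PC_fil] at *
  refine h.mono ?_
  apply List.monotone_filter_right
  intro x hx; simp at *; omega

theorem CA_pre {σ w : List ℕ} (h : NCR w) {k : ℕ} (hk : k ≤ mx w) :
    CA σ (pre k w) ↔ PC (pre k w) σ ∧ ∀ j < k, ¬ PC (pre j w) σ := by
  unfold CA
  rw [PC_one_right (h.pre k), h.mx_pre hk]
  refine and_congr_right fun _ => ?_
  push Not
  refine forall_congr' fun j => imp_congr_right fun hj => ?_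
  rw [pre_pre hj.le]

theorem CB_fil {σ w : List ℕ} (hσ : IsRGF σ) (h : NCR w) {k : ℕ} :
    CB σ (fil k w) ↔ PC (fil k w) σ ∧ ∀ j, k < j → j ≤ mx w → ¬ PC (fil j w) σ := by
  unfold CB
  rw [PC_one_left (h.fil k) hσ, mx_fil]
  refine and_congr_right fun _ => ?_
  push Not
  constructor
  · intro H j h1 h2
    have := H (j - k) (by omega) (by omega)
    rwa [fil_fil, show k + (j - k) = j by omega] at this
  · intro H j h1 h2
    rw [fil_fil]
    exact H _ (by omega) (by omega)

theorem countA {σ ρ : List ℕ} (hρ : IsRGF ρ) (n p : ℕ) :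
    (SS (CA σ) (fun w => ¬ PC w ρ) n p).ncard =
      (WS (fun w => PC w σ ∧ ¬ PC w (rgfComp σ ρ)) n p).ncard := by
  classical
  apply SS_card
  · intro w h
    rw [PC_comp h hρ]
    constructor
    · rintro ⟨h1, h2⟩
      have hex : ∃ k, PC (pre k w) σ := ⟨mx w, by rwa [pre_of_le le_rfl]⟩
      have hle : Nat.find hex ≤ mx w := Nat.find_min' hex (by rwa [pre_of_le le_rfl])
      refine ⟨Nat.find hex, hle, (CA_pre h hle).2 ⟨Nat.find_spec hex, fun j hj => Nat.find_min hex hj⟩, ?_⟩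
      intro h3
      exact h2 ⟨_, hle, Nat.find_spec hex, h3⟩
    · rintro ⟨k, hk, h1, h2⟩
      rw [CA_pre h hk] at h1
      refine ⟨h1.1.mono (pre_suffix k w).sublist, ?_⟩
      rintro ⟨j, hj, h3, h4⟩
      have : k ≤ j := by
        by_contra hlt
        exact h1.2 j (by omega) h3
      exact h2 (PC_fil_mono this h4)
  · intro w h k hk k' hk' h1 _ h2 _
    rw [CA_pre h hk] at h1
    rw [CA_pre h hk'] at h2
    rcases lt_trichotomy k k' with hlt | hlt | hlt
    · exact absurd h1.1 (h2.2 _ hlt)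
    · exact hlt
    · exact absurd h2.1 (h1.2 _ hlt)

theorem countB {σ ρ : List ℕ} (hσ : IsRGF σ) (n p : ℕ) :
    (SS (fun w => ¬ PC w ρ) (CB σ) n p).ncard =
      (WS (fun w => PC w σ ∧ ¬ PC w (rgfComp ρ σ)) n p).ncard := by
  classical
  apply SS_card
  · intro w h
    rw [PC_comp h hσ]
    constructor
    · rintro ⟨h1, h2⟩
      have h0 : PC (fil 0 w) σ := by rwa [fil_zero w h]
      have hs := Nat.findGreatest_spec (P := fun k => PC (fil k w) σ) (Nat.zero_le (mx w)) h0
      have hle := Nat.findGreatest_le (P := fun k => PC (fil k w) σ) (mx w)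
      refine ⟨_, hle, fun h3 => h2 ⟨_, hle, h3, hs⟩, (CB_fil hσ h).2 ⟨hs, fun j hj hjm => ?_⟩⟩
      exact Nat.findGreatest_is_greatest hj hjm
    · rintro ⟨k, hk, h1, h2⟩
      rw [CB_fil hσ h] at h2
      refine ⟨?_, ?_⟩
      · have := PC_fil_mono (Nat.zero_le k) h2.1
        rwa [fil_zero w h] at this
      rintro ⟨j, hj, h3, h4⟩
      have : j ≤ k := by
        by_contra hlt
        exact h2.2 j (by omega) hj h4
      exact h1 (h3.mono (pre_sublist_pre this w))
  · intro w h k hk k' hk' _ h1 _ h2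
    rw [CB_fil hσ h] at h1 h2
    rcases lt_trichotomy k k' with hlt | hlt | hlt
    · exact absurd h2.1 (h1.2 _ hlt hk')
    · exact hlt
    · exact absurd h1.1 (h2.2 _ hlt hk)

theorem PC_left {σ ρ w : List ℕ} (hρ : IsRGF ρ) (h : NCR w) (hc : PC w (rgfComp σ ρ)) : PC w σ := by
  obtain ⟨k, _, h1, _⟩ := (PC_comp h hρ).1 hc
  exact h1.mono (pre_suffix k w).sublist

theorem PC_right {σ ρ w : List ℕ} (hσ : IsRGF σ) (h : NCR w) (hc : PC w (rgfComp ρ σ)) : PC w σ := by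
  obtain ⟨k, _, _, h1⟩ := (PC_comp h hσ).1 hc
  have := PC_fil_mono (Nat.zero_le k) h1
  rwa [fil_zero w h] at this

theorem general {σ ρ : List ℕ} (hσ : IsRGF σ) (hρ : IsRGF ρ)
    (hAB : ∀ n p, (WS (CA σ) n p).ncard = (WS (CB σ) n p).ncard) (n p : ℕ) :
    (WS (fun w => ¬ PC w (rgfComp σ ρ)) n p).ncard =
      (WS (fun w => ¬ PC w (rgfComp ρ σ)) n p).ncard := by
  rw [WS_split (σ := σ) (τ := rgfComp σ ρ) (fun w h => PC_left hρ h),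
    WS_split (σ := σ) (τ := rgfComp ρ σ) (fun w h => PC_right hσ h),
    ← countA hρ, ← countB hσ, SS_eq hAB (fun _ _ => rfl)]

theorem classes_eq {σ : List ℕ} (hσ : IsRGF σ) (n p : ℕ) :
    (WS (CA σ) n p).ncard = (WS (CB σ) n p).ncard := by
  have h1 := general (σ := [1]) (ρ := σ) rgf_one hσ (fun _ _ => rfl) n p
  rw [WS_split (σ := σ) (τ := rgfComp [1] σ) (fun w h => PC_right hσ h),
    WS_split (σ := σ) (τ := rgfComp σ [1]) (fun w h => PC_left rgf_one h)] at h1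
  exact (Nat.add_left_cancel h1).symm

end NCProof

/-- Theorem 3.3: if `σ` is connected, then `σ[ρ] ≃cc ρ[σ]`. -/
theorem stmt7 (σ ρ : List ℕ)
    (hσ : IsRGF σ) (hσnc : NonCrossing σ) (hσc : Connected σ)
    (hρ : IsRGF ρ) (hρnc : NonCrossing ρ) :
    ccEquiv (rgfComp σ ρ) (rgfComp ρ σ) := by
  intro n p
  rw [NCProof.ncCount_eq, NCProof.ncCount_eq]
  exact NCProof.general hσ hρ (NCProof.classes_eq hσ) n p
end
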